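/- Let 𝔞 be an ideal of the ring O(ℂⁿ) of entire functions on ℂⁿ. Let Z(𝔞) := {z ∈ ℂⁿ : F(z) = 0 for all F ∈ 𝔞} and I(Z(𝔞)) := {F ∈ O(ℂⁿ) : F vanishes identically on Z(𝔞)}. Then I(Z(𝔞)) equals the closure of the radical √𝔞 in O(ℂⁿ) with respect to the topology of uniform convergence on compact subsets of ℂⁿ. In particular, I(Z(𝔞)) = 𝔞 if and only if 𝔞 is radical (𝔞 = √𝔞) and 𝔞 is closed in this topology. -/

import Mathlib

/-- The ring of entire functions on `ℂⁿ`, as a subring of the pointwise function ring. -/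
noncomputable def OCn (n : ℕ) : Subring ((Fin n → ℂ) → ℂ) where
  carrier := {F | ∀ z, AnalyticAt ℂ F z}
  mul_mem' hf hg z := (hf z).mul (hg z)
  one_mem' _ := analyticAt_const
  add_mem' hf hg z := (hf z).add (hg z)
  zero_mem' _ := analyticAt_const
  neg_mem' hf z := (hf z).neg

/-- The topology of uniform convergence on compact subsets of `ℂⁿ`, induced on the ring of
entire functions. -/
noncomputable instance OCnTop (n : ℕ) : TopologicalSpace (OCn n) :=
  TopologicalSpace.induced
    (fun F => UniformOnFun.ofFun {K : Set (Fin n → ℂ) | IsCompact K} (F : (Fin n → ℂ) → ℂ))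
    inferInstance

/-- The common zero set of an ideal of entire functions on `ℂⁿ`. -/
def ZC (n : ℕ) (a : Ideal (OCn n)) : Set (Fin n → ℂ) :=
  {z | ∀ F ∈ a, (F : (Fin n → ℂ) → ℂ) z = 0}

/-- The ideal of all entire functions vanishing identically on a subset of `ℂⁿ`. -/
def IC (n : ℕ) (S : Set (Fin n → ℂ)) : Set (OCn n) :=
  {F | ∀ z ∈ S, (F : (Fin n → ℂ) → ℂ) z = 0}

/-!
The inclusion `closure √𝔞 ⊆ I(Z(𝔞))` is formal: elements of `√𝔞` vanish on `Z(𝔞)`, and vanishing at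
given points is a closed condition because point evaluations are continuous. The substance is the
density of `√𝔞` in `I(Z(𝔞))`.

Let `f` vanish on `Z(𝔞)` and fix a compact set, contained in a cube. By Rückert's Nullstellensatz
(`ruckert`) and compactness there are an exponent `k` and finitely many `F₁, …, Fₘ ∈ 𝔞` such that
`f ^ k` is, near each point of the cube, a combination of the `Fᵢ` with holomorphic coefficients.
In other words the sheaf of relations `{(h, g₁, …, gₘ) : h f ^ k = ∑ gᵢ Fᵢ}` has, near each point of
the cube, a section with `h = 1`. Cartan's theorems A and B on boxes (`cartan_box`) patch these to one
section with `h = 1` on the whole cube, and relations on a cube are limits of entire relations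
(`RelOn.entire`). An entire relation `(h, g₁, …, gₘ)` with `h` close to `1` on the compact set gives
`h f ^ k ∈ 𝔞`, so `h f ∈ √𝔞`, and `h f` is close to `f` there (`IC_subset_closure`).

The ingredients from several complex variables are proved from scratch.
* Local theory: Osgood's lemma, Weierstrass preparation (by a contraction argument) and division (by
  Cauchy integrals). They give Oka's theorem `oka`, that relation sheaves of holomorphic matrices are
  locally finitely generated, by induction on the dimension, and the Nullstellensatz, by eliminating
  one variable at a time with norms modulo a Weierstrass polynomial.
* Theorems A and B for relation sheaves on closed boxes, by induction on the number of nondegenerate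
  real directions. A box is cut into thin slabs, and data on adjacent slabs are glued along the
  common face. The gluing uses the additive splitting of holomorphic functions on a strip by a Cauchy
  transform (`S_analytic`), which loses no domain and so also yields, by iteration, Cartan's
  factorisation of matrices close to the identity (`cartan_factor`); Runge approximation (`runge`)
  brings transition matrices close to the identity.
* The passage from a cube to `ℂⁿ` takes a limit along growing cubes, approximating the coefficients
  of a relation with respect to generators by Taylor polynomials (`taylor_approx`).
-/

/-! ### Osgood's lemma -/

open Set Filter Topology Metric MeasureTheory

lemma torusIntegrable_of_continuousOn {n : ℕ} {f : (Fin n → ℂ) → ℂ} {c : Fin n → ℂ} {R : ℝ}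
    (hf : ContinuousOn f {η | ∀ i, η i ∈ sphere (c i) R}) (hR : 0 ≤ R) :
    TorusIntegrable f c (fun _ => R) := by
  unfold TorusIntegrable
  apply ContinuousOn.integrableOn_compact isCompact_Icc
  apply Continuous.continuousOn
  apply hf.comp_continuous
  · unfold torusMap; fun_prop
  · intro θ i
    simp [torusMap, abs_of_nonneg hR]

lemma torus_subset_closedBall {n : ℕ} {c : Fin n → ℂ} {R : ℝ} (hR : 0 ≤ R) :
    {η : Fin n → ℂ | ∀ i, η i ∈ sphere (c i) R} ⊆ closedBall c R := by
  intro η h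
  rw [mem_closedBall, dist_pi_le_iff hR]
  intro i
  exact (mem_sphere.1 (h i)).le

/-- The Cauchy integral formula on a polydisc. -/
lemma cauchy_torus (n : ℕ) : ∀ (f : (Fin n → ℂ) → ℂ) (c : Fin n → ℂ) (R : ℝ), 0 < R →
    ContinuousOn f (closedBall c R) →
    (∀ z ∈ closedBall c R, ∀ i, DifferentiableAt ℂ (fun t => f (Function.update z i t)) (z i)) →
    ∀ w ∈ ball c R, (∯ η in T(c, fun _ => R), (∏ i, (η i - w i)⁻¹) * f η) =
      (2 * Real.pi * Complex.I) ^ n * f w := by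
  induction n with
  | zero =>
    intro f c R hR hf hd w hw
    rw [torusIntegral_dim0]
    simp [Subsingleton.elim c w]
  | succ n ih =>
    intro f c R hR hf hd w hw
    have hw' : ∀ i, dist (w i) (c i) < R := (dist_pi_lt_iff hR).1 hw
    have hcons : ∀ (x : ℂ) (y : Fin n → ℂ), x ∈ closedBall (c 0) R →
        y ∈ closedBall (c ∘ Fin.succ) R → (Fin.cons x y : Fin (n+1) → ℂ) ∈ closedBall c R := by
      intro x y hx hy
      rw [mem_closedBall, dist_pi_le_iff hR.le] at hy ⊢
      intro i
      refine Fin.cases ?_ ?_ i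
      · simpa using hx
      · intro j; simpa using hy j
    have hcontc : Continuous (fun p : ℂ × (Fin n → ℂ) => (Fin.cons p.1 p.2 : Fin (n+1) → ℂ)) := by
      fun_prop
    rw [torusIntegral_succ]
    · have h1 : ∀ x ∈ sphere (c 0) R, (∯ y in T(c ∘ Fin.succ, (fun _ => R) ∘ Fin.succ),
          (∏ i, ((Fin.cons x y : Fin (n+1) → ℂ) i - w i)⁻¹) * f (Fin.cons x y))
          = (x - w 0)⁻¹ • ((2 * Real.pi * Complex.I) ^ n * f (Fin.cons x (Fin.tail w))) := by
        intro x hx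
        have hx' : x ∈ closedBall (c 0) R := sphere_subset_closedBall hx
        have := ih (fun y => f (Fin.cons x y)) (c ∘ Fin.succ) R hR ?_ ?_ (Fin.tail w) ?_
        · simp only [smul_eq_mul]
          rw [← this, ← torusIntegral_const_mul]
          congr 1
          ext y
          rw [Fin.prod_univ_succ]
          simp [Fin.tail, mul_assoc]
        · refine hf.comp (Continuous.continuousOn (by fun_prop)) ?_
          intro y hy
          exact hcons x y hx' hy
        · intro y hy i
          have := hd _ (hcons x y hx' hy) i.succ
          simp only [Fin.cons_update]
          simpa using this
        · rw [mem_ball, dist_pi_lt_iff hR]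
          intro i
          exact hw' i.succ
      rw [circleIntegral.integral_congr hR.le h1]
      have h2 := Complex.circleIntegral_sub_inv_smul_of_differentiable_on_off_countable
        (c := c 0) (R := R) (w := w 0)
        (f := fun x => (2 * Real.pi * Complex.I) ^ n * f (Fin.cons x (Fin.tail w)))
        (s := ∅) countable_empty (by simpa using hw' 0) ?_ ?_
      · rw [h2]
        simp only [smul_eq_mul]
        rw [Fin.cons_self_tail]; ring
      · refine continuousOn_const.mul (hf.comp (Continuous.continuousOn (by fun_prop)) ?_)
        intro x hx
        refine hcons x _ hx ?_
        rw [mem_closedBall, dist_pi_le_iff hR.le]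
        intro i; exact (hw' i.succ).le
      · intro x hx
        have := hd _ (hcons x (Fin.tail w) (ball_subset_closedBall hx.1) (by
          rw [mem_closedBall, dist_pi_le_iff hR.le]
          intro i; exact (hw' i.succ).le)) 0
        simp only [Fin.update_cons_zero, Fin.cons_zero] at this
        exact this.const_mul _
    · apply torusIntegrable_of_continuousOn _ hR.le
      refine ContinuousOn.mul ?_ (hf.mono (torus_subset_closedBall hR.le))
      refine continuousOn_finsetProd _ fun i _ => ContinuousOn.inv₀ (by fun_prop) ?_
      intro η hη h0
      have := hη i
      have h3 := hw' i
      rw [sub_eq_zero.1 h0] at this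
      rw [mem_sphere] at this
      linarith

/-- A continuous function on an open set of `ℂⁿ` which is holomorphic in each coordinate direction is
analytic. -/
lemma osgood_fin {n : ℕ} {f : (Fin n → ℂ) → ℂ} {U : Set (Fin n → ℂ)} (hU : IsOpen U)
    (hf : ContinuousOn f U)
    (hd : ∀ z ∈ U, ∀ i, DifferentiableAt ℂ (fun t => f (Function.update z i t)) (z i)) :
    AnalyticOnNhd ℂ f U := by
  intro c hc
  obtain ⟨R, hR, hRU⟩ := nhds_basis_closedBall.mem_iff.1 (hU.mem_nhds hc)
  have hcau := cauchy_torus n f c R hR (hf.mono hRU) (fun z hz i => hd z (hRU hz) i)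
  let B : Set (Fin n → ℝ) := Icc 0 (fun _ => 2 * Real.pi)
  have hBc : IsCompact B := isCompact_Icc
  have : CompactSpace B := isCompact_iff_compactSpace.1 hBc
  let η : Fin n → C(B, ℂ) := fun i =>
    ⟨fun θ => c i + R * Complex.exp (θ.1 i * Complex.I),
      (by fun_prop : Continuous fun θ : Fin n → ℝ => c i + R * Complex.exp (θ i * Complex.I)).comp
        continuous_subtype_val⟩
  have htm : ∀ (θ : B) i, η i θ = torusMap c (fun _ => R) θ i := by
    intro θ i; rfl
  have hmem : ∀ θ, torusMap c (fun _ => R) θ ∈ {η : Fin n → ℂ | ∀ i, η i ∈ sphere (c i) R} := by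
    intro θ i
    simp [torusMap, abs_of_nonneg hR.le]
  let g : C(B, ℂ) := ⟨fun θ => (∏ i, (R : ℂ) * Complex.exp (θ.1 i * Complex.I) * Complex.I) *
      f (torusMap c (fun _ => R) θ), by
    refine Continuous.mul ((by fun_prop : Continuous fun θ : Fin n → ℝ =>
      ∏ i, (R : ℂ) * Complex.exp (θ i * Complex.I) * Complex.I).comp continuous_subtype_val) ?_
    refine hf.comp_continuous ((by unfold torusMap; fun_prop :
      Continuous fun θ : Fin n → ℝ => torusMap c (fun _ => R) θ).comp continuous_subtype_val) ?_
    intro θ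
    exact hRU (torus_subset_closedBall hR.le (hmem θ))⟩
  let μ : Measure B := volume.comap Subtype.val
  have : IsFiniteMeasure μ := by
    constructor
    rw [comap_subtype_coe_apply hBc.measurableSet]
    exact (measure_mono (by simp)).trans_lt hBc.measure_lt_top
  let L : C(B, ℂ) →L[ℂ] ℂ := LinearMap.mkContinuous
    { toFun := fun φ => ∫ θ, φ θ * g θ ∂μ
      map_add' := by
        intro φ ψ
        simp only [ContinuousMap.add_apply, add_mul]
        exact integral_add ((φ * g).continuous.integrable_of_hasCompactSupport
          (HasCompactSupport.of_compactSpace _)) ((ψ * g).continuous.integrable_of_hasCompactSupport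
          (HasCompactSupport.of_compactSpace _))
      map_smul' := by
        intro a φ
        simp only [ContinuousMap.smul_apply, smul_eq_mul, mul_assoc, RingHom.id_apply]
        exact integral_const_mul _ _ } (‖g‖ * μ.real univ) (by
    intro φ
    refine (norm_integral_le_of_norm_le_const (C := ‖φ‖ * ‖g‖) (Eventually.of_forall ?_)).trans
      (le_of_eq ?_)
    · intro θ
      rw [norm_mul]
      exact mul_le_mul (φ.norm_coe_le_norm θ) (g.norm_coe_le_norm θ) (norm_nonneg _) (norm_nonneg _)
    · ring)
  let K : (Fin n → ℂ) → C(B, ℂ) := fun z => ∏ i, Ring.inverse (η i - algebraMap ℂ C(B, ℂ) (z i))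
  have hunit : ∀ z ∈ ball c R, ∀ i, IsUnit (η i - algebraMap ℂ C(B, ℂ) (z i)) := by
    intro z hz i
    rw [ContinuousMap.isUnit_iff_forall_ne_zero]
    intro θ h0
    have h1 : (η i θ) = z i := by simpa [sub_eq_zero] using h0
    have h2 := hmem θ i
    rw [← htm, h1, mem_sphere] at h2
    have := (dist_pi_lt_iff hR).1 hz i
    linarith
  have hKan : AnalyticAt ℂ K c := by
    refine Finset.analyticAt_fun_prod _ fun i _ => ?_
    obtain ⟨u, hu⟩ := hunit c (mem_ball_self hR) i
    refine AnalyticAt.fun_comp (f := fun z : Fin n → ℂ => η i - algebraMap ℂ C(B, ℂ) (z i))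
      (g := Ring.inverse) ?_ ?_
    · rw [← hu]; exact analyticAt_inverse u
    · refine analyticAt_const.sub ?_
      exact ((Algebra.linearMap ℂ C(B,ℂ)).toContinuousLinearMap.comp
        (ContinuousLinearMap.proj i : (Fin n → ℂ) →L[ℂ] ℂ)).analyticAt c
  have hKval : ∀ z ∈ ball c R, ∀ θ, K z θ = ∏ i, (η i θ - z i)⁻¹ := by
    intro z hz θ
    simp only [K, ContinuousMap.prod_apply]
    refine Finset.prod_congr rfl fun i _ => ?_
    have := congrArg (fun φ : C(B,ℂ) => φ θ) (Ring.inverse_mul_cancel _ (hunit z hz i))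
    simp only [ContinuousMap.mul_apply, ContinuousMap.one_apply] at this
    rw [eq_inv_of_mul_eq_one_left this]
    simp
  have hfin : ∀ z ∈ ball c R, f z = ((2 * Real.pi * Complex.I) ^ n)⁻¹ * L (K z) := by
    intro z hz
    have h0 : ((2 * Real.pi * Complex.I : ℂ) ^ n) ≠ 0 := pow_ne_zero _ Complex.two_pi_I_ne_zero
    rw [eq_inv_mul_iff_mul_eq₀ h0, ← hcau z hz]
    simp only [torusIntegral, L, LinearMap.mkContinuous_apply, LinearMap.coe_mk, AddHom.coe_mk]
    rw [← integral_subtype_comap hBc.measurableSet]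
    refine integral_congr_ae (Eventually.of_forall fun θ => ?_)
    simp only [hKval z hz, htm, g, ContinuousMap.coe_mk, smul_eq_mul]
    ring
  refine AnalyticAt.congr (f := fun z => ((2 * Real.pi * Complex.I) ^ n)⁻¹ * L (K z)) ?_ ?_
  · exact analyticAt_const.mul ((L.analyticAt _).fun_comp hKan)
  · filter_upwards [ball_mem_nhds c hR] with z hz
    exact (hfin z hz).symm

/-- **Osgood's lemma** on a finite-dimensional space, for Gateaux-holomorphic functions. -/
lemma osgood {E : Type*} [NormedAddCommGroup E] [NormedSpace ℂ E] [FiniteDimensional ℂ E]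
    {f : E → ℂ} {U : Set E} (hU : IsOpen U) (hf : ContinuousOn f U)
    (hd : ∀ z ∈ U, ∀ v, DifferentiableAt ℂ (fun t : ℂ => f (z + t • v)) 0) :
    AnalyticOnNhd ℂ f U := by
  let e : E ≃L[ℂ] (Fin (Module.finrank ℂ E) → ℂ) :=
    ContinuousLinearEquiv.ofFinrankEq (by simp)
  have h := osgood_fin (f := f ∘ e.symm) (U := e.symm ⁻¹' U) (hU.preimage e.symm.continuous)
    (hf.comp e.symm.continuous.continuousOn (fun _ h => h)) ?_
  · intro z hz
    have h1 := (h (e z) (by simpa using hz)).fun_comp (e.analyticAt z)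
    refine h1.congr (Eventually.of_forall fun x => ?_)
    simp
  · intro z hz i
    have h1 := hd (e.symm z) hz (e.symm (Pi.single i 1))
    have h2 : DifferentiableAt ℂ (fun t : ℂ => t - z i) (z i) := by fun_prop
    have h3 := DifferentiableAt.comp (z i) (g := fun t : ℂ => f (e.symm z + t • e.symm (Pi.single i 1)))
      (f := fun t : ℂ => t - z i) (by simpa using h1) h2
    refine h3.congr_of_eventuallyEq (Eventually.of_forall fun t => ?_)
    simp only [Function.comp]
    rw [← map_smul, ← map_add]
    congr 2
    ext j
    by_cases hj : j = i
    · subst hj; simp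
    · simp [hj]

/-! ### Holomorphic integrals, limits, fixed points and divided differences -/

attribute [fun_prop] analyticAt_fst analyticAt_snd

section
variable {E : Type*} [NormedAddCommGroup E] [NormedSpace ℂ E] [FiniteDimensional ℂ E]

/-- Holomorphic dependence of an integral on parameters. -/
lemma analytic_integral {A : Type*} [MeasurableSpace A] {μ : Measure A} {U : Set E}
    (hU : IsOpen U) {k : E → A → ℂ} (hk : ∀ᵐ a ∂μ, AnalyticOnNhd ℂ (fun z => k z a) U)
    (hm : ∀ z ∈ U, AEStronglyMeasurable (k z) μ)
    (hdom : ∀ z ∈ U, ∃ b : A → ℝ, Integrable b μ ∧ ∀ᶠ z' in 𝓝 z, ∀ᵐ a ∂μ, ‖k z' a‖ ≤ b a) :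
    AnalyticOnNhd ℂ (fun z => ∫ a, k z a ∂μ) U := by
  have hcont : ContinuousOn (fun z => ∫ a, k z a ∂μ) U := by
    intro z hz
    obtain ⟨b, hb, hkb⟩ := hdom z hz
    refine (continuousAt_of_dominated (bound := b) ?_ ?_ hb ?_).continuousWithinAt
    · filter_upwards [hU.mem_nhds hz] with z' hz' using hm z' hz'
    · exact hkb
    · filter_upwards [hk] with a ha using (ha z hz).continuousAt
  refine osgood hU hcont ?_
  intro z hz v
  obtain ⟨b, hb, hkb⟩ := hdom z hz
  have hline : Continuous (fun t : ℂ => z + t • v) := by fun_prop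
  have h1 : ∀ᶠ t : ℂ in 𝓝 0, (z + t • v ∈ U) ∧ ∀ᵐ a ∂μ, ‖k (z + t • v) a‖ ≤ b a := by
    have : Tendsto (fun t : ℂ => z + t • v) (𝓝 0) (𝓝 z) := by
      simpa using hline.tendsto 0
    exact this.eventually ((hU.eventually_mem hz).and hkb)
  obtain ⟨r, hr, hball⟩ := Metric.eventually_nhds_iff_ball.1 h1
  -- pass from `∀ t, a.e.` to `a.e., ∀ t` by continuity, using a countable dense set
  have h2 : ∀ᵐ a ∂μ, ∀ t ∈ ball (0:ℂ) r, ‖k (z + t • v) a‖ ≤ b a := by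
    obtain ⟨D, hDc, hDd⟩ := TopologicalSpace.exists_countable_dense ℂ
    have h3 : ∀ᵐ a ∂μ, ∀ t ∈ D, t ∈ ball (0:ℂ) r → ‖k (z + t • v) a‖ ≤ b a := by
      rw [ae_ball_iff hDc]
      intro t _
      by_cases ht : t ∈ ball (0:ℂ) r
      · filter_upwards [(hball t ht).2] with a ha _ using ha
      · exact Eventually.of_forall fun a h => absurd h ht
    filter_upwards [h3, hk] with a ha hka t ht
    have hc : ContinuousOn (fun t : ℂ => ‖k (z + t • v) a‖) (ball 0 r) := by
      intro s hs
      have := (hka _ (hball s hs).1).continuousAt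
      exact (ContinuousAt.comp (f := fun t : ℂ => z + t • v) (g := fun x => k x a)
        this hline.continuousAt).norm.continuousWithinAt
    have ht2 : t ∈ closure (D ∩ ball 0 r) := by
      have := hDd.open_subset_closure_inter (isOpen_ball (x := (0:ℂ)) (ε := r)) ht
      rwa [inter_comm] at this
    have hne : (𝓝[D ∩ ball 0 r] t).NeBot := mem_closure_iff_nhdsWithin_neBot.1 ht2
    refine le_of_tendsto (x := 𝓝[D ∩ ball 0 r] t) ((hc t ht).mono inter_subset_right) ?_
    filter_upwards [self_mem_nhdsWithin] with s hs using ha s hs.1 hs.2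
  have hdiff : ∀ᵐ a ∂μ, DifferentiableOn ℂ (fun t : ℂ => k (z + t • v) a) (ball 0 r) := by
    filter_upwards [hk] with a ha t ht
    have h4 := (ha _ (hball t ht).1).differentiableAt
    exact (DifferentiableAt.comp t (f := fun t : ℂ => z + t • v) (g := fun x => k x a)
        h4 (by fun_prop)).differentiableWithinAt
  have hr2 : 0 < r / 2 := by linarith
  have key := hasDerivAt_integral_of_dominated_loc_of_deriv_le (𝕜 := ℂ) (μ := μ)
    (F := fun t a => k (z + t • v) a) (x₀ := (0:ℂ)) (s := ball 0 (r/2))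
    (F' := fun t a => deriv (fun t => k (z + t • v) a) t) (bound := fun a => b a / (r/2))
    (ball_mem_nhds _ hr2) ?_ ?_ ?_ ?_ ?_ ?_
  · exact key.2.differentiableAt
  · filter_upwards [ball_mem_nhds (0:ℂ) hr] with t ht using hm _ (hball t ht).1
  · refine hb.mono' (hm _ (hball 0 (mem_ball_self hr)).1) ?_
    exact (hball 0 (mem_ball_self hr)).2
  · have hseq : ∀ m : ℕ, ((r/2) / (m + 1) : ℝ) ∈ Ioo 0 r := by
      intro m
      have h5 : (1:ℝ) ≤ m + 1 := by linarith [Nat.cast_nonneg (α := ℝ) m]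
      refine ⟨by positivity, lt_of_le_of_lt (div_le_self hr2.le h5) (by linarith)⟩
    refine aestronglyMeasurable_of_tendsto_ae atTop
      (f := fun (m : ℕ) a => ((((r/2) / (m + 1) : ℝ)) : ℂ)⁻¹ •
        (k (z + ((((r/2) / (m + 1) : ℝ)) : ℂ) • v) a - k (z + (0:ℂ) • v) a)) ?_ ?_
    · intro m
      refine AEStronglyMeasurable.fun_const_smul (AEStronglyMeasurable.fun_sub (hm _ (hball _ ?_).1)
        (hm _ (hball 0 (mem_ball_self hr)).1)) _
      rw [mem_ball_zero_iff, Complex.norm_real, Real.norm_of_nonneg (hseq m).1.le]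
      exact (hseq m).2
    · filter_upwards [hdiff] with a ha
      have h6 := (ha.differentiableAt (ball_mem_nhds _ hr)).hasDerivAt.tendsto_slope
      have h7 : Tendsto (fun m : ℕ => ((((r/2) / (m + 1) : ℝ)) : ℂ)) atTop (𝓝[≠] 0) := by
        rw [tendsto_nhdsWithin_iff]
        constructor
        · have := (tendsto_const_div_atTop_nhds_zero_nat (r/2)).comp (tendsto_add_atTop_nat 1)
          have h8 := (Complex.continuous_ofReal.tendsto 0).comp this
          simpa [Function.comp_def] using h8
        · refine Eventually.of_forall fun m => ?_
          simp only [mem_compl_iff, mem_singleton_iff, Complex.ofReal_eq_zero]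
          exact (hseq m).1.ne'
      refine (h6.comp h7).congr fun m => ?_
      simp [slope, vsub_eq_sub]
  · filter_upwards [h2, hdiff] with a ha hda t ht
    have hsub : closedBall t (r/2) ⊆ ball 0 r := by
      intro s hs
      rw [mem_ball_zero_iff] at ht ⊢
      rw [mem_closedBall, dist_eq_norm] at hs
      have := norm_add_le (s - t) t
      rw [sub_add_cancel] at this
      linarith
    refine Complex.norm_deriv_le_of_forall_mem_sphere_norm_le hr2 ?_ ?_
    · refine (hda.mono ?_).diffContOnCl
      rw [closure_ball t hr2.ne']
      exact hsub
    · intro s hs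
      exact ha s (hsub (sphere_subset_closedBall hs))
  · exact hb.div_const _
  · filter_upwards [hdiff] with a ha t ht
    exact (ha.differentiableAt (isOpen_ball.mem_nhds (ball_subset_ball (by linarith) ht))).hasDerivAt

lemma analytic_of_tendstoLocallyUniformlyOn {U : Set E} (hU : IsOpen U) {F : ℕ → E → ℂ} {f : E → ℂ}
    (hF : ∀ m, AnalyticOnNhd ℂ (F m) U) (h : TendstoLocallyUniformlyOn F f atTop U) :
    AnalyticOnNhd ℂ f U := by
  refine osgood hU (h.continuousOn (Frequently.of_forall fun m => (hF m).continuousOn)) ?_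
  intro z hz v
  have hline : Continuous (fun t : ℂ => z + t • v) := by fun_prop
  have hopen : IsOpen ((fun t : ℂ => z + t • v) ⁻¹' U) := hU.preimage hline
  have h1 := h.comp (fun t : ℂ => z + t • v) (fun t ht => ht) hline.continuousOn
  have h2 := h1.differentiableOn (Eventually.of_forall fun m t ht => ?_) hopen
  · exact h2.differentiableAt (hopen.mem_nhds (by simpa using hz))
  · have h4 := (hF m _ ht).differentiableAt
    exact (DifferentiableAt.comp t (f := fun t : ℂ => z + t • v) (g := F m)
        h4 (by fun_prop)).differentiableWithinAt

/-- Banach's fixed point theorem on the space of bounded holomorphic functions on an open set. -/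
lemma analytic_fixedPoint {κ : Type*} [Fintype κ] {U : Set E} (hU : IsOpen U)
    (Φ : (E → κ → ℂ) → (E → κ → ℂ)) {M : ℝ} (hM : 0 ≤ M)
    (hΦ : ∀ g, AnalyticOnNhd ℂ g U → (∀ x ∈ U, ‖g x‖ ≤ M) →
      AnalyticOnNhd ℂ (Φ g) U ∧ ∀ x ∈ U, ‖Φ g x‖ ≤ M)
    (hc : ∀ g h, AnalyticOnNhd ℂ g U → (∀ x ∈ U, ‖g x‖ ≤ M) → AnalyticOnNhd ℂ h U →
      (∀ x ∈ U, ‖h x‖ ≤ M) → ∀ D, (∀ x ∈ U, ‖g x - h x‖ ≤ D) →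
      ∀ x ∈ U, ‖Φ g x - Φ h x‖ ≤ D / 2) :
    ∃ g, AnalyticOnNhd ℂ g U ∧ (∀ x ∈ U, ‖g x‖ ≤ M) ∧ ∀ x ∈ U, g x = Φ g x := by
  let s : ℕ → E → κ → ℂ := fun m => Φ^[m] 0
  have hs : ∀ m, s (m+1) = Φ (s m) := fun m => Function.iterate_succ_apply' Φ m 0
  have hgood : ∀ m, AnalyticOnNhd ℂ (s m) U ∧ ∀ x ∈ U, ‖s m x‖ ≤ M := by
    intro m
    induction m with
    | zero => exact ⟨analyticOnNhd_const, fun x _ => by simpa [s] using hM⟩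
    | succ m ih => rw [hs]; exact hΦ _ ih.1 ih.2
  have hstep : ∀ m, ∀ x ∈ U, ‖s m x - s (m+1) x‖ ≤ M / 2 ^ m := by
    intro m
    induction m with
    | zero =>
      intro x hx
      have h1 : s 0 x = 0 := rfl
      have := (hgood 1).2 x hx
      simpa [h1] using this
    | succ m ih =>
      intro x hx
      have := hc _ _ (hgood m).1 (hgood m).2 (hgood (m+1)).1 (hgood (m+1)).2 _ ih x hx
      rw [← hs, ← hs] at this
      rw [pow_succ, ← div_div]
      exact this
  have hstep' : ∀ x ∈ U, ∀ m, dist (s m x) (s (m+1) x) ≤ (2 * M) / 2 / 2 ^ m := by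
    intro x hx m
    rw [dist_eq_norm]
    refine (hstep m x hx).trans (le_of_eq (by ring))
  have hlim : ∀ x ∈ U, ∃ l, Tendsto (fun m => s m x) atTop (𝓝 l) := fun x hx =>
    cauchySeq_tendsto_of_complete (cauchySeq_of_le_geometric_two (hstep' x hx))
  classical
  let g : E → κ → ℂ := fun x => if hx : x ∈ U then (hlim x hx).choose else 0
  have hg : ∀ x ∈ U, Tendsto (fun m => s m x) atTop (𝓝 (g x)) := by
    intro x hx
    simp only [g, hx, dif_pos]
    exact (hlim x hx).choose_spec
  have hdist : ∀ x ∈ U, ∀ m, ‖s m x - g x‖ ≤ (2 * M) / 2 ^ m := by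
    intro x hx m
    rw [← dist_eq_norm]
    exact dist_le_of_le_geometric_two_of_tendsto (hstep' x hx) (hg x hx) m
  have hpow : Tendsto (fun m : ℕ => (2 * M) / 2 ^ m) atTop (𝓝 0) := by
    have := (tendsto_pow_atTop_nhds_zero_of_lt_one (r := (1/2:ℝ)) (by norm_num) (by norm_num)).const_mul
      (2 * M)
    simpa [div_eq_mul_inv] using this
  have hunif : TendstoUniformlyOn s g atTop U := by
    rw [Metric.tendstoUniformlyOn_iff]
    intro ε hε
    filter_upwards [hpow.eventually (gt_mem_nhds hε)] with m hm x hx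
    rw [dist_comm, dist_eq_norm]
    exact (hdist x hx m).trans_lt hm
  have hgan : AnalyticOnNhd ℂ g U := by
    intro x hx
    rw [analyticAt_pi_iff]
    intro i
    refine analytic_of_tendstoLocallyUniformlyOn hU (F := fun m x => s m x i)
      (f := fun x => g x i) ?_ ?_ x hx
    · intro m y hy
      exact analyticAt_pi_iff.1 ((hgood m).1 y hy) i
    · refine TendstoUniformlyOn.tendstoLocallyUniformlyOn ?_
      rw [Metric.tendstoUniformlyOn_iff] at hunif ⊢
      intro ε hε
      filter_upwards [hunif ε hε] with m hm y hy
      exact (dist_le_pi_dist (g y) (s m y) i).trans_lt (hm y hy)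
  have hgM : ∀ x ∈ U, ‖g x‖ ≤ M := fun x hx =>
    le_of_tendsto (hg x hx).norm (Eventually.of_forall fun m => (hgood m).2 x hx)
  refine ⟨g, hgan, hgM, fun x hx => ?_⟩
  refine tendsto_nhds_unique ((hg x hx).comp (tendsto_add_atTop_nat 1)) ?_
  rw [tendsto_iff_norm_sub_tendsto_zero]
  refine squeeze_zero (fun _ => norm_nonneg _) (fun m => ?_) (by simpa using hpow.div_const 2)
  simp only [Function.comp, hs]
  exact hc _ _ (hgood m).1 (hgood m).2 hgan hgM _ (fun y hy => hdist y hy m) x hx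

/-- Divided differences of a holomorphic function are holomorphic jointly in all variables. -/
lemma analyticAt_dslope {g : E × ℂ → ℂ} {z : E} {w ζ : ℂ} (h1 : AnalyticAt ℂ g (z, w))
    (h2 : AnalyticAt ℂ g (z, ζ)) :
    AnalyticAt ℂ (fun p : E × ℂ => dslope (fun η => g (p.1, η)) w p.2) (z, ζ) := by
  by_cases hζ : ζ = w
  · subst hζ
    obtain ⟨r, hr, hball⟩ := Metric.eventually_nhds_iff_ball.1 h1.eventually_analyticAt
    have hmem : ∀ p ∈ ball (z, ζ) r, ∀ t ∈ Icc (0:ℝ) 1, (p.1, ζ + t * (p.2 - ζ)) ∈ ball (z, ζ) r := by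
      intro p hp t ht
      rw [mem_ball, Prod.dist_eq, max_lt_iff] at hp ⊢
      refine ⟨hp.1, lt_of_le_of_lt ?_ hp.2⟩
      simp only [dist_eq_norm, add_sub_cancel_left, norm_mul, Complex.norm_real]
      rw [Real.norm_of_nonneg ht.1]
      exact mul_le_of_le_one_left (norm_nonneg _) ht.2
    let k : E × ℂ → ℝ → ℂ := fun p t => fderiv ℂ g (p.1, ζ + t * (p.2 - ζ)) (0, 1)
    have hfd : ∀ q ∈ ball (z, ζ) r, AnalyticAt ℂ (fun q => fderiv ℂ g q (0,1)) q := by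
      intro q hq
      exact ((ContinuousLinearMap.apply ℂ ℂ ((0,1) : E × ℂ)).analyticAt _).fun_comp (hball q hq).fderiv
    have hintg : AnalyticOnNhd ℂ (fun p => ∫ t in Icc (0:ℝ) 1, k p t) (ball (z, ζ) r) := by
      refine analytic_integral isOpen_ball ?_ ?_ ?_
      · rw [ae_restrict_iff' measurableSet_Icc]
        refine Eventually.of_forall fun t ht p hp => ?_
        exact AnalyticAt.fun_comp (g := fun q => fderiv ℂ g q (0,1))
          (f := fun p : E × ℂ => (p.1, ζ + t * (p.2 - ζ))) (hfd _ (hmem p hp t ht))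
          (by fun_prop)
      · intro p hp
        refine ContinuousOn.aestronglyMeasurable ?_ measurableSet_Icc
        intro t ht
        have h3 := (hfd _ (hmem p hp t ht)).continuousAt
        exact (ContinuousAt.comp (f := fun t : ℝ => ((p.1, ζ + t * (p.2 - ζ)) : E × ℂ))
          (g := fun q => fderiv ℂ g q (0,1)) h3 (by fun_prop)).continuousWithinAt
      · intro p hp
        obtain ⟨ρ, hρ, hρr⟩ := exists_between (mem_ball.1 hp)
        have hcpt : IsCompact (closedBall (z, ζ) ρ) := isCompact_closedBall _ _
        obtain ⟨C, hC⟩ := hcpt.exists_bound_of_continuousOn (f := fun q => fderiv ℂ g q (0,1))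
          (fun q hq => (hfd q (closedBall_subset_ball hρr hq)).continuousAt.continuousWithinAt)
        refine ⟨fun _ => C, integrable_const _, ?_⟩
        filter_upwards [isOpen_ball.mem_nhds (mem_ball.2 hρ)] with q hq
        rw [ae_restrict_iff' measurableSet_Icc]
        refine Eventually.of_forall fun t ht => hC _ ?_
        rw [mem_ball, Prod.dist_eq, max_lt_iff] at hq
        rw [mem_closedBall, Prod.dist_eq, max_le_iff]
        refine ⟨hq.1.le, le_trans ?_ hq.2.le⟩
        simp only [dist_eq_norm, add_sub_cancel_left, norm_mul, Complex.norm_real]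
        rw [Real.norm_of_nonneg ht.1]
        exact mul_le_of_le_one_left (norm_nonneg _) ht.2
    refine (hintg (z, ζ) (mem_ball_self hr)).congr ?_
    filter_upwards [ball_mem_nhds _ hr] with p hp
    have hder : ∀ t ∈ Icc (0:ℝ) 1, HasDerivAt (fun η => g (p.1, η)) (k p t) (ζ + t * (p.2 - ζ)) := by
      intro t ht
      have h3 := (hball _ (hmem p hp t ht)).differentiableAt.hasFDerivAt
      have h4 : HasDerivAt (fun η : ℂ => ((p.1, η) : E × ℂ)) (0, 1) (ζ + t * (p.2 - ζ)) :=
        (hasDerivAt_const _ p.1).prodMk (hasDerivAt_id _)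
      exact h3.comp_hasDerivAt _ h4
    have hk0 : ContinuousOn (k p) (Icc 0 1) := by
      intro t ht
      have h3 := (hfd _ (hmem p hp t ht)).continuousAt
      exact (ContinuousAt.comp (f := fun t : ℝ => ((p.1, ζ + t * (p.2 - ζ)) : E × ℂ))
          (g := fun q => fderiv ℂ g q (0,1)) h3 (by fun_prop)).continuousWithinAt
    rw [integral_Icc_eq_integral_Ioc, ← intervalIntegral.integral_of_le zero_le_one]
    by_cases hp2 : p.2 = ζ
    · have h5 := hder 0 (by simp)
      simp only [hp2, dslope_same]
      have : ∀ t : ℝ, k p t = k p 0 := by intro t; simp [k, hp2]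
      simp only [this]
      rw [hp2] at h5
      simp only [sub_self, mul_zero, add_zero] at h5
      rw [h5.deriv]; simp
    · have h6 : (∫ t in (0:ℝ)..1, k p t * (p.2 - ζ)) = g (p.1, p.2) - g (p.1, ζ) := by
        have h7 := intervalIntegral.integral_eq_sub_of_hasDerivAt (a := (0:ℝ)) (b := 1)
          (f := fun t : ℝ => g (p.1, ζ + t * (p.2 - ζ))) (f' := fun t => k p t * (p.2 - ζ)) ?_ ?_
        · rw [h7]; simp
        · intro t ht
          rw [uIcc_of_le zero_le_one] at ht
          have h8 : HasDerivAt (fun t : ℝ => ζ + (t:ℂ) * (p.2 - ζ)) (p.2 - ζ) t := by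
            have := ((Complex.ofRealCLM.hasDerivAt (x := t)).mul_const (p.2 - ζ)).const_add ζ
            simpa using this
          exact (hder t ht).comp t h8
        · apply ContinuousOn.intervalIntegrable
          rw [uIcc_of_le zero_le_one]
          exact hk0.mul continuousOn_const
      rw [intervalIntegral.integral_mul_const] at h6
      rw [dslope_of_ne _ hp2, slope_def_field, eq_div_iff (sub_ne_zero.2 hp2), h6]
  · have h3 : AnalyticAt ℂ (fun p : E × ℂ => (g p - g (p.1, w)) / (p.2 - w)) (z, ζ) := by
      refine AnalyticAt.fun_div (h2.fun_sub ?_) (by fun_prop) (sub_ne_zero.2 hζ)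
      exact AnalyticAt.fun_comp (f := fun p : E × ℂ => (p.1, w)) h1 (by fun_prop)
    refine h3.congr ?_
    have : ∀ᶠ p : E × ℂ in 𝓝 (z, ζ), p.2 ≠ w :=
      (continuous_snd.tendsto (z, ζ)).eventually (isOpen_ne.mem_nhds hζ)
    filter_upwards [this] with p hp
    rw [dslope_of_ne _ hp, slope_def_field]
end

/-! ### Weierstrass preparation -/

set_option linter.unusedSectionVars false

section
variable {E : Type*} [NormedAddCommGroup E] [NormedSpace ℂ E] [FiniteDimensional ℂ E]

/-- The operator `h ↦ (h - h(·, 0)) / ζ` on functions of `(z, ζ) ∈ E × ℂ`. -/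
noncomputable def fibShift (h : E × ℂ → ℂ) : E × ℂ → ℂ :=
  fun p => dslope (fun η => h (p.1, η)) 0 p.2

lemma fibShift_eq (h : E × ℂ → ℂ) (z : E) (ζ : ℂ) :
    h (z, ζ) = h (z, 0) + ζ * fibShift h (z, ζ) := by
  have := sub_smul_dslope (fun η => h (z, η)) 0 ζ
  simp only [sub_zero, smul_eq_mul] at this
  simp only [fibShift]
  rw [this]; ring

lemma fibShift_iterate_eq (h : E × ℂ → ℂ) (z : E) (ζ : ℂ) (d : ℕ) :
    h (z, ζ) = ∑ j ∈ Finset.range d, (fibShift^[j] h) (z, 0) * ζ ^ j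
      + ζ ^ d * (fibShift^[d] h) (z, ζ) := by
  induction d with
  | zero => simp
  | succ d ih =>
    rw [ih, Finset.sum_range_succ, Function.iterate_succ_apply',
      fibShift_eq (fibShift^[d] h) z ζ]
    ring

lemma fib_differentiableAt {h : E × ℂ → ℂ} {z : E} {ζ : ℂ} (hh : AnalyticAt ℂ h (z, ζ)) :
    DifferentiableAt ℂ (fun η => h (z, η)) ζ :=
  (AnalyticAt.fun_comp (g := h) (f := fun η : ℂ => (z, η)) hh (by fun_prop)).differentiableAt

lemma fibShift_analytic {V : Set E} {r : ℝ} (hr : 0 < r) {h : E × ℂ → ℂ}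
    (hh : AnalyticOnNhd ℂ h (V ×ˢ ball 0 r)) : AnalyticOnNhd ℂ (fibShift h) (V ×ˢ ball 0 r) := by
  intro p hp
  exact analyticAt_dslope (hh (p.1, 0) ⟨hp.1, mem_ball_self hr⟩) (hh p hp)

lemma fibShift_bound {V : Set E} {r : ℝ} (hr : 0 < r) {h : E × ℂ → ℂ}
    (hh : AnalyticOnNhd ℂ h (V ×ˢ ball 0 r)) {M : ℝ} (hM : ∀ p ∈ V ×ˢ ball 0 r, ‖h p‖ ≤ M) :
    ∀ p ∈ V ×ˢ ball 0 r, ‖fibShift h p‖ ≤ (2 / r) * M := by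
  intro p hp
  have := Complex.norm_dslope_le_div_of_mapsTo_ball (f := fun η => h (p.1, η)) (c := 0) (R₁ := r)
    (R₂ := 2 * M) (z := p.2) ?_ ?_ hp.2
  · refine this.trans (le_of_eq (by ring))
  · intro ζ hζ
    exact (fib_differentiableAt (hh (p.1, ζ) ⟨hp.1, hζ⟩)).differentiableWithinAt
  · intro ζ hζ
    rw [mem_closedBall, dist_eq_norm]
    have h1 := hM (p.1, ζ) ⟨hp.1, hζ⟩
    have h2 := hM (p.1, 0) ⟨hp.1, mem_ball_self hr⟩
    exact (norm_sub_le _ _).trans (by linarith)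

lemma fibShift_iterate {V : Set E} {r : ℝ} (hr : 0 < r) (d : ℕ) {h : E × ℂ → ℂ}
    (hh : AnalyticOnNhd ℂ h (V ×ˢ ball 0 r)) {M : ℝ} (hM : ∀ p ∈ V ×ˢ ball 0 r, ‖h p‖ ≤ M) :
    AnalyticOnNhd ℂ (fibShift^[d] h) (V ×ˢ ball 0 r) ∧
    ∀ p ∈ V ×ˢ ball 0 r, ‖fibShift^[d] h p‖ ≤ (2 / r) ^ d * M := by
  induction d with
  | zero => exact ⟨hh, by simpa using hM⟩
  | succ d ih =>
    rw [Function.iterate_succ_apply']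
    refine ⟨fibShift_analytic hr ih.1, fun p hp => ?_⟩
    refine (fibShift_bound hr ih.1 ih.2 p hp).trans (le_of_eq (by ring))

lemma fibShift_sub {V : Set E} {r : ℝ} (hr : 0 < r) (d : ℕ) {g h : E × ℂ → ℂ}
    (hg : AnalyticOnNhd ℂ g (V ×ˢ ball 0 r)) (hh : AnalyticOnNhd ℂ h (V ×ˢ ball 0 r))
    {k : E × ℂ → ℂ} (hk : ∀ p ∈ V ×ˢ ball 0 r, k p = g p - h p) :
    ∀ p ∈ V ×ˢ ball 0 r, fibShift^[d] k p = fibShift^[d] g p - fibShift^[d] h p := by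
  induction d generalizing g h k with
  | zero => exact hk
  | succ d ih =>
    rw [Function.iterate_succ_apply, Function.iterate_succ_apply, Function.iterate_succ_apply]
    refine ih (fibShift_analytic hr hg) (fibShift_analytic hr hh) ?_
    intro p hp
    by_cases hp2 : p.2 = 0
    · simp only [fibShift, hp2, dslope_same]
      have h0 : (p.1, (0:ℂ)) ∈ V ×ˢ ball (0:ℂ) r := ⟨hp.1, mem_ball_self hr⟩
      rw [← deriv_fun_sub (fib_differentiableAt (hg _ h0)) (fib_differentiableAt (hh _ h0))]
      refine Filter.EventuallyEq.deriv_eq ?_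
      filter_upwards [ball_mem_nhds (0:ℂ) hr] with η hη using hk (p.1, η) ⟨hp.1, hη⟩
    · simp only [fibShift, dslope_of_ne _ hp2, slope_def_field]
      rw [hk (p.1, p.2) hp, hk (p.1, 0) ⟨hp.1, mem_ball_self hr⟩]
      ring

/-- **Weierstrass preparation theorem**. -/
lemma weierstrass_preparation {f : E × ℂ → ℂ} (hf : AnalyticAt ℂ f 0)
    (hf0 : ¬ ∀ᶠ ζ in 𝓝 (0:ℂ), f (0, ζ) = 0) :
    ∃ (d : ℕ) (W : E → Polynomial ℂ) (e : E × ℂ → ℂ), (∀ z, (W z).Monic ∧ (W z).natDegree = d) ∧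
      (∀ j, AnalyticAt ℂ (fun z => (W z).coeff j) 0) ∧ W 0 = Polynomial.X ^ d ∧
      AnalyticAt ℂ e 0 ∧ e 0 ≠ 0 ∧ ∀ᶠ p in 𝓝 (0 : E × ℂ), e p * f p = (W p.1).eval p.2 := by
  have hf1 : AnalyticAt ℂ (fun ζ : ℂ => f (0, ζ)) 0 :=
    AnalyticAt.fun_comp (g := f) (f := fun η : ℂ => ((0:E), η)) hf (by fun_prop)
  obtain ⟨d, u, hu, hu0, hfu⟩ := hf1.exists_eventuallyEq_pow_smul_nonzero_iff.2 hf0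
  have hu2 : AnalyticAt ℂ (fun p : E × ℂ => u p.2) 0 :=
    AnalyticAt.fun_comp (g := u) (f := fun p : E × ℂ => p.2) hu (by fun_prop)
  let φ : E × ℂ → ℂ := fun p => f p / u p.2 - p.2 ^ d
  have hφ : AnalyticAt ℂ φ 0 := (hf.fun_div hu2 hu0).fun_sub (by fun_prop)
  have hune : ∀ᶠ ζ in 𝓝 (0:ℂ), u ζ ≠ 0 := hu.continuousAt.eventually_ne hu0
  have hφ0 : ∀ᶠ ζ in 𝓝 (0:ℂ), φ (0, ζ) = 0 := by
    filter_upwards [hfu, hune] with ζ h1 h2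
    simp only [φ, h1]
    field_simp
    simp [mul_comm]
  obtain ⟨r₁, hr₁, hb₁⟩ := Metric.eventually_nhds_iff_ball.1 (hφ.eventually_analyticAt)
  obtain ⟨r₂, hr₂, hb₂⟩ := Metric.eventually_nhds_iff_ball.1 (hφ0.and hune)
  let r := min r₁ r₂ / 2
  have hr : 0 < r := by positivity
  have hrr₁ : r < r₁ := by have := min_le_left r₁ r₂; simp only [r]; linarith
  have hrr₂ : r < r₂ := by have := min_le_right r₁ r₂; simp only [r]; linarith
  let ε : ℝ := (r / 2) ^ d / 2
  have hε : 0 < ε := by positivity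
  have hεr : (2 / r) ^ d * ε = 1 / 2 := by
    simp only [ε]
    rw [mul_div_assoc', ← mul_pow]
    rw [show 2 / r * (r / 2) = 1 by field_simp]
    simp
  -- a neighbourhood of `0` in `E` over which `φ` is small on the whole disc
  obtain ⟨δ, hδ, hδr, hsmall⟩ : ∃ δ > 0, δ < r₁ ∧ ∀ p ∈ ball (0:E) δ ×ˢ ball (0:ℂ) r, ‖φ p‖ ≤ ε := by
    have hcpt : IsCompact (closedBall (0:ℂ) r) := isCompact_closedBall _ _
    have h1 : ∀ᶠ z in 𝓝 (0:E), ∀ ζ ∈ closedBall (0:ℂ) r, ‖φ (z, ζ)‖ < ε := by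
      refine hcpt.eventually_forall_of_forall_eventually ?_
      intro ζ hζ
      have hζ2 : ζ ∈ ball (0:ℂ) r₂ := closedBall_subset_ball hrr₂ hζ
      have hm : ((0:E), ζ) ∈ ball (0 : E × ℂ) r₁ := by
        rw [mem_ball_zero_iff, Prod.norm_def]
        simp only [norm_zero]
        exact max_lt hr₁ (mem_ball_zero_iff.1 (closedBall_subset_ball hrr₁ hζ))
      have hc := (hb₁ _ hm).continuousAt
      have h2 : ‖φ (0, ζ)‖ < ε := by rw [(hb₂ ζ hζ2).1]; simpa using hε
      have := hc.norm.eventually (gt_mem_nhds h2)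
      simpa [nhds_prod_eq] using this
    obtain ⟨δ, hδ, h⟩ := Metric.eventually_nhds_iff_ball.1 h1
    refine ⟨min δ (r₁ / 2), by positivity, (min_le_right _ _).trans_lt (by linarith), ?_⟩
    rintro ⟨z, ζ⟩ ⟨hz, hζ⟩
    exact (h z (ball_subset_ball (min_le_left _ _) hz) ζ (ball_subset_closedBall hζ)).le
  let U : Set (E × ℂ) := ball (0:E) δ ×ˢ ball (0:ℂ) r
  have hUo : IsOpen U := isOpen_ball.prod isOpen_ball
  have h0U : (0 : E × ℂ) ∈ U := ⟨mem_ball_self hδ, mem_ball_self hr⟩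
  have hφU : AnalyticOnNhd ℂ φ U := by
    rintro ⟨z, ζ⟩ ⟨hz, hζ⟩
    refine hb₁ _ ?_
    rw [mem_ball_zero_iff, Prod.norm_def]
    exact max_lt ((mem_ball_zero_iff.1 hz).trans hδr) ((mem_ball_zero_iff.1 hζ).trans hrr₁)
  let Φ : (E × ℂ → Unit → ℂ) → (E × ℂ → Unit → ℂ) := fun g p _ =>
    1 - fibShift^[d] (fun q => g q () * φ q) p
  have hnu : ∀ x : Unit → ℂ, ‖x‖ = ‖x ()‖ := fun x => by
    rw [Pi.norm_def]; simp
  have hmulan : ∀ g : E × ℂ → Unit → ℂ, AnalyticOnNhd ℂ g U →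
      AnalyticOnNhd ℂ (fun q => g q () * φ q) U := fun g hg q hq =>
    (analyticAt_pi_iff.1 (hg q hq) ()).fun_mul (hφU q hq)
  have hmulbd : ∀ (g : E × ℂ → ℂ) (M : ℝ), (∀ x ∈ U, ‖g x‖ ≤ M) →
      ∀ x ∈ U, ‖g x * φ x‖ ≤ M * ε := by
    intro g M hg x hx
    rw [norm_mul]
    exact mul_le_mul (hg x hx) (hsmall x hx) (norm_nonneg _) ((norm_nonneg _).trans (hg x hx))
  have key := analytic_fixedPoint hUo Φ (M := 2) (by norm_num) ?_ ?_
  rotate_left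
  · intro g hg hgM
    obtain ⟨h1, h2⟩ := fibShift_iterate hr d (hmulan g hg)
      (hmulbd (fun x => g x ()) 2 (fun x hx => by rw [← hnu]; exact hgM x hx))
    refine ⟨fun x hx => analyticAt_pi_iff.2 fun _ => analyticAt_const.fun_sub (h1 x hx), ?_⟩
    intro x hx
    rw [hnu]
    refine (norm_sub_le _ _).trans ?_
    have h3 := h2 x hx
    have h4 : (2 / r) ^ d * (2 * ε) = 1 := by linear_combination 2 * hεr
    rw [h4] at h3
    simp only [norm_one]
    linarith
  · intro g h hg _ hh _ D hD x hx
    rw [hnu]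
    have h1 := fibShift_sub hr d (hmulan g hg) (hmulan h hh)
      (k := fun q => (g q () - h q ()) * φ q) (fun p _ => by ring)
    have h2 := (fibShift_iterate hr d (h := fun q => (g q () - h q ()) * φ q) (V := ball (0:E) δ)
      (fun q hq => ((analyticAt_pi_iff.1 (hg q hq) ()).fun_sub
        (analyticAt_pi_iff.1 (hh q hq) ())).fun_mul (hφU q hq))
      (hmulbd (fun x => g x () - h x ()) D (fun x hx => by
        have := hD x hx; rwa [hnu] at this))).2 x hx
    rw [h1 x hx] at h2
    have h3 : (Φ g x - Φ h x) () = - (fibShift^[d] (fun q => g q () * φ q) x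
        - fibShift^[d] (fun q => h q () * φ q) x) := by
      simp only [Φ, Pi.sub_apply]; ring
    rw [h3, norm_neg]
    refine h2.trans (le_of_eq ?_)
    linear_combination D * hεr
  · obtain ⟨g, hgan, hgM, hgfix⟩ := key
    let H : E × ℂ → ℂ := fun q => g q () * φ q
    have hHan : ∀ j, AnalyticOnNhd ℂ (fibShift^[j] H) U := fun j =>
      (fibShift_iterate hr j (hmulan g hgan)
        (hmulbd (fun x => g x ()) 2 (fun x hx => by rw [← hnu]; exact hgM x hx))).1
    -- on the central fibre `φ`, hence every iterate, vanishes
    have hH0 : ∀ j, ∀ ζ ∈ ball (0:ℂ) r, fibShift^[j] H (0, ζ) = 0 := by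
      intro j
      induction j with
      | zero =>
        intro ζ hζ
        have := (hb₂ ζ (ball_subset_ball hrr₂.le hζ)).1
        simp [H, this]
      | succ j ih =>
        intro ζ hζ
        rw [Function.iterate_succ_apply']
        by_cases h : ζ = 0
        · subst h
          simp only [fibShift, dslope_same]
          rw [Filter.EventuallyEq.deriv_eq (f := fun _ => (0:ℂ))]
          · simp
          · filter_upwards [ball_mem_nhds (0:ℂ) hr] with η hη using ih η hη
        · simp only [fibShift, dslope_of_ne _ h, slope_def_field]
          rw [ih ζ hζ, ih 0 (mem_ball_self hr)]; simp
    let R : E → Polynomial ℂ := fun z =>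
      ∑ j ∈ Finset.range d, Polynomial.C (fibShift^[j] H (z, 0)) * Polynomial.X ^ j
    have hRdeg : ∀ z, (R z).degree < d := by
      intro z
      rw [← Polynomial.mem_degreeLT]
      refine Submodule.sum_mem _ fun j hj => ?_
      rw [Polynomial.mem_degreeLT]
      refine (Polynomial.degree_C_mul_X_pow_le _ _).trans_lt ?_
      exact_mod_cast Finset.mem_range.1 hj
    refine ⟨d, fun z => Polynomial.X ^ d + R z, fun p => g p () / u p.2, ?_, ?_, ?_, ?_, ?_, ?_⟩
    · intro z
      exact ⟨Polynomial.monic_X_pow_add (hRdeg z),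
        by
          refine Polynomial.natDegree_eq_of_degree_eq_some ?_
          rw [Polynomial.degree_add_eq_left_of_degree_lt] <;> rw [Polynomial.degree_X_pow]
          exact hRdeg z⟩
    · intro j
      simp only [R, Polynomial.coeff_add, Polynomial.finsetSum_coeff, Polynomial.coeff_C_mul]
      refine analyticAt_const.fun_add (Finset.analyticAt_fun_sum _ fun i _ => ?_)
      refine AnalyticAt.fun_mul ?_ analyticAt_const
      exact AnalyticAt.fun_comp (g := fibShift^[i] H) (f := fun z : E => (z, (0:ℂ)))
        (hHan i 0 h0U) (by fun_prop)
    · have : R 0 = 0 := Finset.sum_eq_zero fun j _ => by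
        rw [hH0 j 0 (mem_ball_self hr)]; simp
      simp [this]
    · exact (analyticAt_pi_iff.1 (hgan 0 h0U) ()).fun_div hu2 hu0
    · have h1 := congrFun (hgfix 0 h0U) ()
      have h2 : fibShift^[d] H 0 = 0 := hH0 d 0 (mem_ball_self hr)
      simp only [Φ] at h1
      change g 0 () = 1 - fibShift^[d] H 0 at h1
      rw [h2, sub_zero] at h1
      simp only [h1]
      exact div_ne_zero one_ne_zero hu0
    · filter_upwards [hUo.mem_nhds h0U] with p hp
      have hup : u p.2 ≠ 0 := (hb₂ p.2 (ball_subset_ball hrr₂.le hp.2)).2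
      have h1 := congrFun (hgfix p hp) ()
      change g p () = 1 - fibShift^[d] H p at h1
      have h2 := fibShift_iterate_eq H p.1 p.2 d
      have h3 : f p = u p.2 * (φ p + p.2 ^ d) := by
        simp only [φ]; field_simp; ring
      have h4 : (Polynomial.X ^ d + R p.1).eval p.2 = p.2 ^ d +
          ∑ j ∈ Finset.range d, fibShift^[j] H (p.1, 0) * p.2 ^ j := by
        simp [R, Polynomial.eval_finsetSum]
      rw [h4, h3]
      have h5 : H (p.1, p.2) = g p () * φ p := rfl
      have h6 : fibShift^[d] H (p.1, p.2) = fibShift^[d] H p := rfl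
      rw [h5, h6] at h2
      field_simp
      linear_combination h2 + p.2 ^ d * h1
end

/-! ### Weierstrass division -/

section
variable {E : Type*} [NormedAddCommGroup E] [NormedSpace ℂ E] [FiniteDimensional ℂ E]

/-- Holomorphic dependence on parameters of an integral over a compact set. -/
lemma analytic_integral_compact {A : Type*} [TopologicalSpace A] [MeasurableSpace A]
    [OpensMeasurableSpace A] [SecondCountableTopology A] {μ : Measure A} {K : Set A}
    (hK : IsCompact K) (hKm : MeasurableSet K) (hμ : μ K < ⊤)
    {U : Set E} (hU : IsOpen U) {k : E → A → ℂ}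
    (hk : ∀ a ∈ K, AnalyticOnNhd ℂ (fun z => k z a) U)
    (hc : ∀ z ∈ U, ∀ a ∈ K, ContinuousAt (fun p : E × A => k p.1 p.2) (z, a)) :
    AnalyticOnNhd ℂ (fun z => ∫ a in K, k z a ∂μ) U := by
  refine analytic_integral hU ?_ ?_ ?_
  · rw [ae_restrict_iff' hKm]
    exact Eventually.of_forall hk
  · intro z hz
    refine ContinuousOn.aestronglyMeasurable (fun a ha => ?_) hKm
    exact (ContinuousAt.comp (f := fun a : A => (z, a)) (g := fun p : E × A => k p.1 p.2)
      (hc z hz a ha) (by fun_prop)).continuousWithinAt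
  · intro z hz
    have h : ∃ C : ℝ, ∀ᶠ z' in 𝓝 z, ∀ a ∈ K, ‖k z' a‖ ≤ C := by
      refine hK.induction_on (p := fun s => ∃ C : ℝ, ∀ᶠ z' in 𝓝 z, ∀ a ∈ s, ‖k z' a‖ ≤ C)
        ⟨0, by simp⟩ ?_ ?_ ?_
      · rintro s t hst ⟨C, hC⟩
        exact ⟨C, hC.mono fun z' h a ha => h a (hst ha)⟩
      · rintro s t ⟨C, hC⟩ ⟨C', hC'⟩
        refine ⟨max C C', ?_⟩
        filter_upwards [hC, hC'] with z' h h' a ha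
        rcases ha with ha | ha
        · exact (h a ha).trans (le_max_left _ _)
        · exact (h' a ha).trans (le_max_right _ _)
      · intro a ha
        have h1 := (hc z hz a ha).norm.eventually (gt_mem_nhds (lt_add_one ‖k z a‖))
        rw [nhds_prod_eq] at h1
        obtain ⟨s, hs, t, ht, hst⟩ := eventually_prod_iff.1 h1
        refine ⟨{a | t a}, mem_nhdsWithin_of_mem_nhds ht, ‖k z a‖ + 1, ?_⟩
        filter_upwards [hs] with z' hz' a' ha'
        exact (hst hz' ha').le
    obtain ⟨C, hC⟩ := h
    refine ⟨fun _ => C, ?_, ?_⟩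
    · have : IsFiniteMeasure (μ.restrict K) := ⟨by simpa using hμ⟩
      exact integrable_const _
    · filter_upwards [hC] with z' hz'
      rw [ae_restrict_iff' hKm]
      exact Eventually.of_forall hz'

lemma analytic_circleIntegral {U : Set E} (hU : IsOpen U) {k : E × ℂ → ℂ} {c : ℂ} {r : ℝ} (hr : 0 ≤ r)
    (hk : ∀ z ∈ U, ∀ η ∈ sphere c r, AnalyticAt ℂ k (z, η)) :
    AnalyticOnNhd ℂ (fun z => ∮ η in C(c, r), k (z, η)) U := by
  have h : ∀ z, (∮ η in C(c, r), k (z, η)) = ∫ θ in Icc (0:ℝ) (2 * Real.pi),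
      deriv (circleMap c r) θ * k (z, circleMap c r θ) := by
    intro z
    rw [circleIntegral_def_Icc]; rfl
  simp only [h]
  refine analytic_integral_compact isCompact_Icc measurableSet_Icc isCompact_Icc.measure_lt_top hU ?_ ?_
  · intro θ _ z hz
    refine analyticAt_const.fun_mul ?_
    exact AnalyticAt.fun_comp (g := k) (f := fun z : E => (z, circleMap c r θ))
      (hk z hz _ (circleMap_mem_sphere _ hr _)) (by fun_prop)
  · intro z hz θ _
    refine ContinuousAt.mul ?_ ?_
    · simp only [deriv_circleMap]
      fun_prop
    · exact ContinuousAt.comp (g := k) (f := fun p : E × ℝ => (p.1, circleMap c r p.2))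
        (hk z hz _ (circleMap_mem_sphere _ hr _)).continuousAt (by fun_prop)

/-- `b` is divisible by `w` in the ring of germs of holomorphic functions at every point, and has
smaller degree: then `b = 0`. -/
lemma poly_eq_zero_of_local_dvd : ∀ (d : ℕ) (w b : Polynomial ℂ), w ≠ 0 → w.natDegree = d →
    b.degree < w.degree →
    (∀ ζ : ℂ, ∃ g : ℂ → ℂ, ContinuousAt g ζ ∧ ∀ᶠ η in 𝓝 ζ, b.eval η = g η * w.eval η) → b = 0 := by
  intro d
  induction d with
  | zero =>
    intro w b hw hd hb _
    rw [Polynomial.degree_eq_natDegree hw, hd] at hb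
    by_contra h
    have := Polynomial.zero_le_degree_iff.2 h
    exact absurd hb (not_lt.2 (by simpa using this))
  | succ d ih =>
    intro w b hw hd hb h
    obtain ⟨ζ₀, hζ₀⟩ := Complex.exists_root (f := w) (by
      rw [Polynomial.degree_eq_natDegree hw, hd]; exact_mod_cast Nat.succ_pos d)
    obtain ⟨w₁, rfl⟩ := Polynomial.dvd_iff_isRoot.2 hζ₀
    have hb0 : b.IsRoot ζ₀ := by
      obtain ⟨g, _, hg⟩ := h ζ₀
      have := hg.self_of_nhds
      rw [Polynomial.IsRoot, this, hζ₀.eq_zero, mul_zero]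
    obtain ⟨b₁, rfl⟩ := Polynomial.dvd_iff_isRoot.2 hb0
    have hX : (Polynomial.X - Polynomial.C ζ₀) ≠ 0 := Polynomial.X_sub_C_ne_zero ζ₀
    have hw₁ : w₁ ≠ 0 := right_ne_zero_of_mul hw
    have hd₁ : w₁.natDegree = d := by
      rw [Polynomial.natDegree_mul hX hw₁, Polynomial.natDegree_X_sub_C] at hd
      omega
    rw [ih w₁ b₁ hw₁ hd₁ ?_ ?_, mul_zero]
    · by_cases hb₁ : b₁ = 0
      · rw [hb₁, Polynomial.degree_zero]
        exact bot_lt_iff_ne_bot.2 (by simpa using hw₁)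
      · have hb2 : (Polynomial.X - Polynomial.C ζ₀) * b₁ ≠ 0 := mul_ne_zero hX hb₁
        rw [Polynomial.degree_eq_natDegree hb2, Polynomial.degree_eq_natDegree hw, hd,
          Polynomial.natDegree_mul hX hb₁, Polynomial.natDegree_X_sub_C] at hb
        rw [Polynomial.degree_eq_natDegree hb₁, Polynomial.degree_eq_natDegree hw₁, hd₁]
        have : 1 + b₁.natDegree < d + 1 := by exact_mod_cast hb
        exact_mod_cast (by omega : b₁.natDegree < d)
    · intro ζ
      obtain ⟨g, hgc, hg⟩ := h ζ
      refine ⟨g, hgc, ?_⟩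
      have h1 : ∀ᶠ η in 𝓝[≠] ζ, b₁.eval η = g η * w₁.eval η := by
        have h2 : ∀ᶠ η in 𝓝[≠] ζ, η ≠ ζ₀ := by
          by_cases hz : ζ = ζ₀
          · subst hz; exact eventually_mem_nhdsWithin
          · exact eventually_nhdsWithin_of_eventually_nhds (isOpen_ne.mem_nhds hz)
        filter_upwards [h2, eventually_nhdsWithin_of_eventually_nhds hg] with η h3 h4
        simp only [Polynomial.eval_mul, Polynomial.eval_sub, Polynomial.eval_X,
          Polynomial.eval_C] at h4
        have h5 : η - ζ₀ ≠ 0 := sub_ne_zero.2 h3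
        apply mul_left_cancel₀ h5
        linear_combination h4
      have h6 : b₁.eval ζ = g ζ * w₁.eval ζ := by
        have t1 : Tendsto (fun η => b₁.eval η) (𝓝[≠] ζ) (𝓝 (b₁.eval ζ)) :=
          (b₁.continuous.tendsto ζ).mono_left nhdsWithin_le_nhds
        have t2 : Tendsto (fun η => g η * w₁.eval η) (𝓝[≠] ζ) (𝓝 (g ζ * w₁.eval ζ)) :=
          (hgc.tendsto.mul (w₁.continuous.tendsto ζ)).mono_left nhdsWithin_le_nhds
        exact tendsto_nhds_unique (t1.congr' h1) t2
      rw [eventually_nhdsWithin_iff] at h1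
      filter_upwards [h1] with η h7
      by_cases hη : η = ζ
      · rw [hη]; exact h6
      · exact h7 hη

/-- Evaluation of a polynomial family with holomorphic coefficients is holomorphic. -/
lemma analyticAt_polyEval {P : E → Polynomial ℂ} {N : ℕ} {z : E}
    (hdeg : ∀ᶠ z' in 𝓝 z, (P z').natDegree < N)
    (hP : ∀ j, AnalyticAt ℂ (fun z => (P z).coeff j) z) (ζ : ℂ) :
    AnalyticAt ℂ (fun p : E × ℂ => (P p.1).eval p.2) (z, ζ) := by
  have h1 : AnalyticAt ℂ (fun p : E × ℂ => ∑ j ∈ Finset.range N, (P p.1).coeff j * p.2 ^ j) (z, ζ) := by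
    refine Finset.analyticAt_fun_sum _ fun j _ => AnalyticAt.fun_mul ?_ (by fun_prop)
    exact AnalyticAt.fun_comp (g := fun z => (P z).coeff j) (f := fun p : E × ℂ => p.1) (hP j)
      (by fun_prop)
  refine h1.congr ?_
  have h2 : ∀ᶠ p : E × ℂ in 𝓝 (z, ζ), (P p.1).natDegree < N :=
    (continuous_fst.tendsto (z, ζ)).eventually hdeg
  filter_upwards [h2] with p hp
  rw [Polynomial.eval_eq_sum_range' hp]

/-- A polynomial family of bounded degree whose values are holomorphic has holomorphic
coefficients (Lagrange interpolation). -/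
lemma analyticAt_coeff_of_eval {P : E → Polynomial ℂ} {d : ℕ} {z : E} {ζ : ℂ}
    (hdeg : ∀ᶠ z' in 𝓝 z, (P z').degree < d) {a : E × ℂ → ℂ} (ha : AnalyticAt ℂ a (z, ζ))
    (hPa : ∀ᶠ p in 𝓝 (z, ζ), (P p.1).eval p.2 = a p) (j : ℕ) :
    AnalyticAt ℂ (fun z => (P z).coeff j) z := by
  obtain ⟨r, hr, hball⟩ := Metric.eventually_nhds_iff_ball.1 (hPa.and ha.eventually_analyticAt)
  let v : ℕ → ℂ := fun i => ζ + ((r / 2 / (i + 1) : ℝ) : ℂ)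
  have hv : Function.Injective v := by
    intro i k h
    simp only [v, add_right_inj, Complex.ofReal_inj] at h
    have h1 : (i:ℝ) + 1 ≠ 0 := by positivity
    have h2 : (k:ℝ) + 1 ≠ 0 := by positivity
    field_simp at h
    have : (i:ℝ) = k := by linarith
    exact_mod_cast this
  have hvb : ∀ i, v i ∈ ball ζ r := by
    intro i
    rw [mem_ball, dist_eq_norm]
    simp only [v, add_sub_cancel_left, Complex.norm_real]
    rw [Real.norm_of_nonneg (by positivity)]
    have h5 : (1:ℝ) ≤ i + 1 := by linarith [Nat.cast_nonneg (α := ℝ) i]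
    exact lt_of_le_of_lt (div_le_self (by linarith) h5) (by linarith)
  have hmem : ∀ z' ∈ ball z r, ∀ i, (z', v i) ∈ ball (z, ζ) r := by
    intro z' hz' i
    rw [← ball_prod_same]
    exact ⟨hz', hvb i⟩
  have h1 : AnalyticAt ℂ (fun z' => ∑ i ∈ Finset.range d,
      a (z', v i) * (Lagrange.basis (Finset.range d) v i).coeff j) z := by
    refine Finset.analyticAt_fun_sum _ fun i _ => AnalyticAt.fun_mul ?_ analyticAt_const
    exact AnalyticAt.fun_comp (g := a) (f := fun z' : E => (z', v i))
      (hball _ (hmem z (mem_ball_self hr) i)).2 (by fun_prop)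
  refine h1.congr ?_
  filter_upwards [hdeg, ball_mem_nhds z hr] with z' hd hz'
  have h2 := Lagrange.eq_interpolate (s := Finset.range d) (v := v) (f := P z') hv.injOn
    (by simpa using hd)
  conv_rhs => rw [h2]
  simp only [Lagrange.interpolate_apply, Polynomial.finsetSum_coeff, Polynomial.coeff_C_mul]
  refine Finset.sum_congr rfl fun i _ => ?_
  rw [(hball _ (hmem z' hz' i)).1]

/-- **Weierstrass division theorem** on a disc, over an open set `V` of parameters, by a monic
polynomial family `W` without zeros on the bounding circle: the remainder is moreover divisible by
`W` outside the disc. -/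
lemma weierstrass_division_on {W : E → Polynomial ℂ} {d : ℕ} {V : Set E} (hVo : IsOpen V)
    {ζ₀ : ℂ} {r : ℝ} (hr : 0 < r)
    (hmon : ∀ z, (W z).Monic ∧ (W z).natDegree = d) {c : E × ℂ → ℂ}
    (hVsub : ∀ {z}, z ∈ V → (∀ j, AnalyticAt ℂ (fun z => (W z).coeff j) z) ∧
      (∀ ζ ∈ closedBall ζ₀ r, AnalyticAt ℂ c (z, ζ)) ∧ ∀ ζ ∈ sphere ζ₀ r, (W z).eval ζ ≠ 0) :
    ∃ (e : E × ℂ → ℂ) (ρ : E → Polynomial ℂ),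
      (∀ j, ∀ z ∈ V, AnalyticAt ℂ (fun z => (ρ z).coeff j) z) ∧ (∀ z, (ρ z).degree < d) ∧
      ∀ z ∈ V, (∀ ζ ∈ ball ζ₀ r, AnalyticAt ℂ e (z, ζ) ∧
          c (z, ζ) = e (z, ζ) * (W z).eval ζ + (ρ z).eval ζ) ∧
        (∀ ζ ∈ sphere ζ₀ r, (W z).eval ζ ≠ 0) ∧
        ∀ ζ ∉ ball ζ₀ r, ∃ g : ℂ → ℂ, ContinuousAt g ζ ∧
          ∀ᶠ η in 𝓝 ζ, (ρ z).eval η = g η * (W z).eval η := by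
  have hWe : ∀ z, (∀ j, AnalyticAt ℂ (fun z => (W z).coeff j) z) → ∀ ζ,
      AnalyticAt ℂ (fun p : E × ℂ => (W p.1).eval p.2) (z, ζ) := fun z hz ζ =>
    analyticAt_polyEval (N := d + 1) (Eventually.of_forall fun z' => by rw [(hmon z').2]; omega) hz ζ
  let q : E × ℂ → ℂ := fun p => c p / (W p.1).eval p.2
  have hq : ∀ z ∈ V, ∀ η ∈ sphere ζ₀ r, AnalyticAt ℂ q (z, η) := fun z hz η hη =>
    ((hVsub hz).2.1 η (sphere_subset_closedBall hη)).fun_div (hWe z (hVsub hz).1 η)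
      ((hVsub hz).2.2 η hη)
  let B : ℕ → E × ℂ → ℂ := fun j p =>
    ∑ k ∈ Finset.range (d + 1), if j < k then (W p.1).coeff k * p.2 ^ (k - 1 - j) else 0
  have hB : ∀ z η ζ, (W z).eval η - (W z).eval ζ =
      (∑ j ∈ Finset.range d, B j (z, η) * ζ ^ j) * (η - ζ) := by
    intro z η ζ
    have hd : (W z).natDegree < d + 1 := by rw [(hmon z).2]; omega
    rw [Polynomial.eval_eq_sum_range' hd, Polynomial.eval_eq_sum_range' hd, ← Finset.sum_sub_distrib]
    simp only [B, Finset.sum_mul]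
    rw [Finset.sum_comm]
    refine Finset.sum_congr rfl fun k hk => ?_
    have hk' : k ≤ d := by have := Finset.mem_range.1 hk; omega
    rw [← mul_sub, ← (Commute.all η ζ).geom_sum₂_mul]
    rw [← mul_assoc, Finset.mul_sum, Finset.sum_mul]
    rw [← Finset.sum_subset (s₁ := Finset.range k) (Finset.range_mono hk')]
    · have hrefl : ∀ i ∈ Finset.range k, (if i < k then (W z).coeff k * η ^ (k - 1 - i) else 0) * ζ ^ i
          * (η - ζ) = (W z).coeff k * (η ^ (k - 1 - i) * ζ ^ i) * (η - ζ) := by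
        intro i hi
        rw [if_pos (Finset.mem_range.1 hi)]; ring
      rw [Finset.sum_congr rfl hrefl]
      rw [← Finset.sum_range_reflect]
      refine Finset.sum_congr rfl fun i hi => ?_
      have := Finset.mem_range.1 hi
      rw [show k - 1 - (k - 1 - i) = i by omega]
    · intro i _ hi
      rw [if_neg (by simpa using hi)]; ring
  have hBan : ∀ j, ∀ z ∈ V, ∀ η, AnalyticAt ℂ (B j) (z, η) := by
    intro j z hz η
    refine Finset.analyticAt_fun_sum _ fun k _ => ?_
    split_ifs
    · refine AnalyticAt.fun_mul ?_ (by fun_prop)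
      exact AnalyticAt.fun_comp (g := fun z => (W z).coeff k) (f := fun p : E × ℂ => p.1)
        ((hVsub hz).1 k) (by fun_prop)
    · exact analyticAt_const
  let e : E × ℂ → ℂ := fun p => (2 * Real.pi * Complex.I)⁻¹ * ∮ η in C(ζ₀, r), q (p.1, η) / (η - p.2)
  let b : ℕ → E → ℂ := fun j z => (2 * Real.pi * Complex.I)⁻¹ * ∮ η in C(ζ₀, r), q (z, η) * B j (z, η)
  let ρ : E → Polynomial ℂ := fun z => ∑ j ∈ Finset.range d, Polynomial.C (b j z) * Polynomial.X ^ j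
  have hean : ∀ z ∈ V, ∀ ζ ∉ sphere ζ₀ r, AnalyticAt ℂ e (z, ζ) := by
    intro z hz ζ hζ
    refine analyticAt_const.fun_mul ?_
    refine analytic_circleIntegral (U := V ×ˢ (sphere ζ₀ r)ᶜ)
      (k := fun P : (E × ℂ) × ℂ => q (P.1.1, P.2) / (P.2 - P.1.2))
      (hVo.prod isClosed_sphere.isOpen_compl) hr.le ?_ (z, ζ) ⟨hz, hζ⟩
    rintro p hp η hη
    refine AnalyticAt.fun_div ?_ (by fun_prop) ?_
    · exact AnalyticAt.fun_comp (g := q) (f := fun P : (E × ℂ) × ℂ => (P.1.1, P.2))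
        (hq p.1 hp.1 η hη) (by fun_prop)
    · intro h0
      apply hp.2
      rw [← sub_eq_zero.1 h0]; exact hη
  have hban : ∀ j, ∀ z ∈ V, AnalyticAt ℂ (b j) z := by
    intro j z hz
    refine analyticAt_const.fun_mul ?_
    refine analytic_circleIntegral (U := V) (k := fun p => q p * B j p) hVo hr.le ?_ z hz
    intro z' hz' η hη
    exact (hq z' hz' η hη).fun_mul (hBan j z' hz' η)
  have h2pi : (2 * Real.pi * Complex.I : ℂ) ≠ 0 := Complex.two_pi_I_ne_zero
  -- the common identity inside and outside the disc
  have hid : ∀ z ∈ V, ∀ ζ ∉ sphere ζ₀ r, e (z, ζ) * (W z).eval ζ + (ρ z).eval ζ =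
      (2 * Real.pi * Complex.I)⁻¹ * ∮ η in C(ζ₀, r), c (z, η) / (η - ζ) := by
    intro z hz ζ hζ
    have hne : ∀ η ∈ sphere ζ₀ r, η - ζ ≠ 0 := fun η hη h0 => hζ (by
      rw [← sub_eq_zero.1 h0]; exact hη)
    have hqc : ContinuousOn (fun η => q (z, η)) (sphere ζ₀ r) := fun η hη =>
      (ContinuousAt.comp (g := q) (f := fun η : ℂ => (z, η)) (hq z hz η hη).continuousAt
        (by fun_prop)).continuousWithinAt
    have hBc : ∀ j, ContinuousOn (fun η => B j (z, η)) (sphere ζ₀ r) := fun j η hη =>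
      (ContinuousAt.comp (g := B j) (f := fun η : ℂ => (z, η)) (hBan j z hz η).continuousAt
        (by fun_prop)).continuousWithinAt
    have hρ : (ρ z).eval ζ = (2 * Real.pi * Complex.I)⁻¹ *
        ∮ η in C(ζ₀, r), ∑ j ∈ Finset.range d, q (z, η) * B j (z, η) * ζ ^ j := by
      rw [circleIntegral.integral_fun_sum]
      · simp only [ρ, b, Polynomial.eval_finsetSum, Polynomial.eval_mul, Polynomial.eval_C,
          Polynomial.eval_pow, Polynomial.eval_X, Finset.mul_sum]
        refine Finset.sum_congr rfl fun j _ => ?_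
        rw [mul_assoc]
        congr 1
        rw [mul_comm, ← circleIntegral.integral_const_mul]
        congr 1
        ext η; ring
      · intro j _
        exact ((hqc.mul (hBc j)).mul continuousOn_const).circleIntegrable hr.le
    simp only [e]
    rw [hρ, mul_assoc, mul_comm (circleIntegral _ _ _), ← circleIntegral.integral_const_mul, ← mul_add,
      ← circleIntegral.integral_add]
    · congr 1
      refine circleIntegral.integral_congr hr.le fun η hη => ?_
      have h1 := hne η hη
      have h2 := (hVsub hz).2.2 η hη
      have h3 := hB z η ζ
      have h4 : ∑ j ∈ Finset.range d, q (z, η) * B j (z, η) * ζ ^ j =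
          q (z, η) * ∑ j ∈ Finset.range d, B j (z, η) * ζ ^ j := by
        rw [Finset.mul_sum]
        exact Finset.sum_congr rfl fun j _ => by ring
      simp only [h4]
      have h5 : c (z, η) = q (z, η) * (W z).eval η := by simp only [q]; field_simp
      rw [h5]
      field_simp
      linear_combination -q (z, η) * h3
    · exact (continuousOn_const.mul (hqc.div (by fun_prop) hne)).circleIntegrable hr.le
    · refine ContinuousOn.circleIntegrable hr.le ?_
      exact continuousOn_finsetSum _ fun j _ => (hqc.mul (hBc j)).mul continuousOn_const
  refine ⟨e, ρ, ?_, ?_, ?_⟩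
  · intro j y hyV
    simp only [ρ, Polynomial.finsetSum_coeff, Polynomial.coeff_C_mul]
    exact Finset.analyticAt_fun_sum _ fun i _ => (hban i y hyV).fun_mul analyticAt_const
  · intro z
    rw [← Polynomial.mem_degreeLT]
    refine Submodule.sum_mem _ fun j hj => ?_
    rw [Polynomial.mem_degreeLT]
    refine (Polynomial.degree_C_mul_X_pow_le _ _).trans_lt ?_
    exact_mod_cast Finset.mem_range.1 hj
  · intro z hz
    have hcz : DifferentiableOn ℂ (fun η => c (z, η)) (closedBall ζ₀ r) := fun η hη =>
      (fib_differentiableAt ((hVsub hz).2.1 η hη)).differentiableWithinAt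
    refine ⟨fun ζ hζ => ?_, (hVsub hz).2.2, fun ζ hζ => ?_⟩
    · have hζ' : ζ ∉ sphere ζ₀ r := fun h => (mem_ball.1 hζ).ne (mem_sphere.1 h)
      refine ⟨hean z hz ζ hζ', ?_⟩
      rw [hid z hz ζ hζ']
      have := hcz.circleIntegral_sub_inv_smul hζ
      rw [eq_inv_mul_iff_mul_eq₀ h2pi]
      simp only [smul_eq_mul] at this
      rw [← this]
      congr 1; ext η; ring
    · by_cases hζs : ζ ∈ sphere ζ₀ r
      · have h1 := (hVsub hz).2.2 ζ hζs
        refine ⟨fun η => (ρ z).eval η / (W z).eval η,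
          ((ρ z).continuous.continuousAt).div ((W z).continuous.continuousAt) h1, ?_⟩
        filter_upwards [(W z).continuous.continuousAt.eventually_ne h1] with η hη
        field_simp
      · have hout : ζ ∈ (closedBall ζ₀ r)ᶜ := by
          rw [mem_compl_iff, mem_closedBall, not_le]
          rw [mem_ball, not_lt] at hζ
          exact lt_of_le_of_ne hζ fun h => hζs (mem_sphere.2 h.symm)
        refine ⟨fun η => -e (z, η), ?_, ?_⟩
        · exact (ContinuousAt.comp (g := e) (f := fun η : ℂ => (z, η))
            (hean z hz ζ hζs).continuousAt (by fun_prop)).neg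
        · filter_upwards [isClosed_closedBall.isOpen_compl.mem_nhds hout] with η hη
          have hη' : η ∉ sphere ζ₀ r := fun h => hη (sphere_subset_closedBall h)
          have h1 := hid z hz η hη'
          have h2 : (∮ ξ in C(ζ₀, r), c (z, ξ) / (ξ - η)) = 0 := by
            refine Complex.circleIntegral_eq_zero_of_differentiable_on_off_countable hr.le
              countable_empty ?_ ?_
            · exact hcz.continuousOn.div (by fun_prop) fun ξ hξ h0 => hη (by
                rw [← sub_eq_zero.1 h0]; exact hξ)
            · intro ξ hξ
              have hξ' := ball_subset_closedBall hξ.1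
              refine DifferentiableAt.fun_div (fib_differentiableAt ((hVsub hz).2.1 ξ hξ'))
                (by fun_prop) fun h0 => hη (by rw [← sub_eq_zero.1 h0]; exact hξ')
          rw [h2, mul_zero] at h1
          linear_combination h1

/-- Weierstrass division near a given parameter `y`. -/
lemma weierstrass_division {W : E → Polynomial ℂ} {d : ℕ} {y : E} {ζ₀ : ℂ} {r : ℝ} (hr : 0 < r)
    (hmon : ∀ z, (W z).Monic ∧ (W z).natDegree = d)
    (hW : ∀ j, AnalyticAt ℂ (fun z => (W z).coeff j) y)
    (hW0 : ∀ ζ ∈ sphere ζ₀ r, (W y).eval ζ ≠ 0) {c : E × ℂ → ℂ}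
    (hc : ∀ ζ ∈ closedBall ζ₀ r, AnalyticAt ℂ c (y, ζ)) :
    ∃ (e : E × ℂ → ℂ) (ρ : E → Polynomial ℂ), (∀ j, AnalyticAt ℂ (fun z => (ρ z).coeff j) y) ∧
      (∀ z, (ρ z).degree < d) ∧
      (∀ ζ ∈ ball ζ₀ r, AnalyticAt ℂ e (y, ζ)) ∧
      ∀ᶠ z in 𝓝 y, (∀ ζ ∈ ball ζ₀ r, AnalyticAt ℂ e (z, ζ) ∧
          c (z, ζ) = e (z, ζ) * (W z).eval ζ + (ρ z).eval ζ) ∧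
        (∀ ζ ∈ sphere ζ₀ r, (W z).eval ζ ≠ 0) ∧
        ∀ ζ ∉ ball ζ₀ r, ∃ g : ℂ → ℂ, ContinuousAt g ζ ∧
          ∀ᶠ η in 𝓝 ζ, (ρ z).eval η = g η * (W z).eval η := by
  have hWan : ∀ᶠ z in 𝓝 y, ∀ j, AnalyticAt ℂ (fun z => (W z).coeff j) z := by
    have : ∀ᶠ z in 𝓝 y, ∀ j ∈ Finset.range (d+1), AnalyticAt ℂ (fun z => (W z).coeff j) z := by
      rw [Filter.eventually_all_finset]
      exact fun j _ => (hW j).eventually_analyticAt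
    filter_upwards [this] with z hz j
    by_cases hj : j < d + 1
    · exact hz j (Finset.mem_range.2 hj)
    · have : (fun z => (W z).coeff j) = fun _ => 0 := by
        ext z'
        exact Polynomial.coeff_eq_zero_of_natDegree_lt (by rw [(hmon z').2]; omega)
      rw [this]; exact analyticAt_const
  have hWe : ∀ z, (∀ j, AnalyticAt ℂ (fun z => (W z).coeff j) z) → ∀ ζ,
      AnalyticAt ℂ (fun p : E × ℂ => (W p.1).eval p.2) (z, ζ) := fun z hz ζ =>
    analyticAt_polyEval (N := d + 1) (Eventually.of_forall fun z' => by rw [(hmon z').2]; omega) hz ζ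
  have hcpt : IsCompact (closedBall ζ₀ r) := isCompact_closedBall _ _
  have hev : ∀ᶠ z in 𝓝 y, (∀ j, AnalyticAt ℂ (fun z => (W z).coeff j) z) ∧
      (∀ ζ ∈ closedBall ζ₀ r, AnalyticAt ℂ c (z, ζ)) ∧ ∀ ζ ∈ sphere ζ₀ r, (W z).eval ζ ≠ 0 := by
    refine hWan.and (Eventually.and ?_ ?_)
    · refine hcpt.eventually_forall_of_forall_eventually fun ζ hζ => ?_
      simpa [nhds_prod_eq] using (hc ζ hζ).eventually_analyticAt
    · refine (isCompact_sphere ζ₀ r).eventually_forall_of_forall_eventually fun ζ hζ => ?_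
      have := (hWe y hWan.self_of_nhds ζ).continuousAt.eventually_ne (hW0 ζ hζ)
      simpa [nhds_prod_eq] using this
  obtain ⟨V, hVsub, hVo, hyV⟩ := _root_.mem_nhds_iff.1 hev
  obtain ⟨e, ρ, h1, h2, h3⟩ := weierstrass_division_on (c := c) hVo hr hmon (fun hz => hVsub hz)
  exact ⟨e, ρ, fun j => h1 j y hyV, h2, fun ζ hζ => ((h3 y hyV).1 ζ hζ).1,
    by filter_upwards [hVo.mem_nhds hyV] with z hz using h3 z hz⟩
end

/-! ### Relation modules -/

section
variable {E : Type*} [NormedAddCommGroup E] [NormedSpace ℂ E] [FiniteDimensional ℂ E]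
variable {F : Type*} [NormedAddCommGroup F] [NormedSpace ℂ F] [FiniteDimensional ℂ F]
variable {ι κ lam mu : Type} [Fintype ι] [Fintype κ] [Fintype lam] [Fintype mu]

/-- A matrix-valued function is holomorphic at `x` if all its entries are. -/
def AnM (s : E → Matrix ι κ ℂ) (x : E) : Prop := ∀ i j, AnalyticAt ℂ (fun z => s z i j) x

/-- The columns of `t` generate, over the ring of germs at `x`, the module of relations
`s c = 0`. -/
def GenAt (s : E → Matrix ι κ ℂ) (t : E → Matrix κ lam ℂ) (x : E) : Prop :=
  ∀ c : E → κ → ℂ, AnalyticAt ℂ c x → (∀ᶠ z in 𝓝 x, Matrix.mulVec (s z) (c z) = 0) →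
    ∃ g : E → lam → ℂ, AnalyticAt ℂ g x ∧ ∀ᶠ z in 𝓝 x, c z = Matrix.mulVec (t z) (g z)

/-- The relation sheaf of `s` is finitely generated near `x`. -/
def OkaAt (s : E → Matrix ι κ ℂ) (x : E) : Prop :=
  ∃ (lam : Type) (_ : Fintype lam) (t : E → Matrix κ lam ℂ), AnM t x ∧
    ∀ᶠ y in 𝓝 x, (∀ v, Matrix.mulVec (s y) (Matrix.mulVec (t y) v) = 0) ∧ GenAt s t y
end

open Matrix
section
variable {E : Type*} [NormedAddCommGroup E] [NormedSpace ℂ E] [FiniteDimensional ℂ E]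
variable {F : Type*} [NormedAddCommGroup F] [NormedSpace ℂ F] [FiniteDimensional ℂ F]
variable {ι κ lam mu : Type} [Fintype ι] [Fintype κ] [Fintype lam] [Fintype mu]

lemma AnM.mul {s : E → Matrix ι κ ℂ} {t : E → Matrix κ lam ℂ} {x : E} (hs : AnM s x) (ht : AnM t x) :
    AnM (fun z => s z * t z) x := by
  intro i j
  simp only [Matrix.mul_apply]
  exact Finset.analyticAt_fun_sum _ fun k _ => (hs i k).fun_mul (ht k j)

lemma AnM.mulVec {s : E → Matrix ι κ ℂ} {c : E → κ → ℂ} {x : E} (hs : AnM s x)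
    (hc : AnalyticAt ℂ c x) : AnalyticAt ℂ (fun z => s z *ᵥ c z) x := by
  rw [analyticAt_pi_iff] at hc ⊢
  intro i
  simp only [Matrix.mulVec, dotProduct]
  exact Finset.analyticAt_fun_sum _ fun k _ => (hs i k).fun_mul (hc k)

lemma AnM.eventually {s : E → Matrix ι κ ℂ} {x : E} (hs : AnM s x) : ∀ᶠ y in 𝓝 x, AnM s y := by
  simp only [AnM, eventually_all]
  exact fun i j => (hs i j).eventually_analyticAt

lemma AnM.congr {s s' : E → Matrix ι κ ℂ} {x : E} (hs : AnM s x) (h : ∀ᶠ z in 𝓝 x, s z = s' z) :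
    AnM s' x := fun i j => (hs i j).congr (h.mono fun z hz => by simp only [hz])

lemma AnM.comp {s : E → Matrix ι κ ℂ} {φ : F → E} {x : F} (hs : AnM s (φ x)) (h : AnalyticAt ℂ φ x) :
    AnM (fun z => s (φ z)) x := fun i j =>
  AnalyticAt.fun_comp (g := fun z => s z i j) (f := φ) (hs i j) h

lemma AnM.const (A : Matrix ι κ ℂ) (x : E) : AnM (fun _ => A) x := fun _ _ => analyticAt_const

/-- The relations of a stacked matrix are found by first generating the relations of the upper block
and then those relations among these generators which the lower block imposes. -/
lemma OkaAt.stack {ι' ι'' : Type} [Fintype ι'] [Fintype ι''] {s₁ : E → Matrix ι κ ℂ}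
    {s₂ : E → Matrix ι' κ ℂ} {s : E → Matrix ι'' κ ℂ}
    {x : E} (h₁ : OkaAt s₁ x) (hs₂ : AnM s₂ x)
    (h₂ : ∀ (mu : Type) [Fintype mu] (r : E → Matrix ι' mu ℂ), AnM r x → OkaAt r x)
    (h : ∀ᶠ z in 𝓝 x, ∀ v, s z *ᵥ v = 0 ↔ s₁ z *ᵥ v = 0 ∧ s₂ z *ᵥ v = 0) : OkaAt s x := by
  obtain ⟨lam, _, t, ht, h₁⟩ := h₁
  obtain ⟨mu, _, u, hu, h₂⟩ := h₂ lam (fun z => s₂ z * t z) (hs₂.mul ht)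
  refine ⟨mu, inferInstance, fun z => t z * u z, ht.mul hu, ?_⟩
  filter_upwards [h₁, h₂, h.eventually_nhds] with y h₁ h₂ h
  refine ⟨fun v => ?_, fun c hc hsc => ?_⟩
  · rw [h.self_of_nhds]
    constructor
    · rw [← mulVec_mulVec]; exact h₁.1 _
    · have := h₂.1 v
      rw [← mulVec_mulVec] at this ⊢
      exact this
  · obtain ⟨g, hg, hcg⟩ := h₁.2 c hc (by
      filter_upwards [hsc, h] with z h1 h2
      exact ((h2 _).1 h1).1)
    obtain ⟨k, hk, hgk⟩ := h₂.2 g hg (by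
      filter_upwards [hsc, h, hcg] with z h1 h2 h3
      rw [← mulVec_mulVec, ← h3]
      exact ((h2 _).1 h1).2)
    refine ⟨k, hk, ?_⟩
    filter_upwards [hcg, hgk] with z h1 h2
    rw [h1, h2, mulVec_mulVec]

lemma OkaAt.of_zero {s : E → Matrix ι κ ℂ} {x : E} (h : ∀ᶠ z in 𝓝 x, s z = 0) : OkaAt s x := by
  classical
  refine ⟨κ, inferInstance, fun _ => 1, AnM.const _ _, ?_⟩
  filter_upwards [h] with y hy
  refine ⟨fun v => by simp [hy], fun c hc _ => ⟨c, hc, ?_⟩⟩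
  simp

lemma OkaAt.transform {s r : E → Matrix ι κ ℂ} {M N : E → Matrix κ κ ℂ} [DecidableEq κ] {x : E}
    (hr : OkaAt r x) (hM : AnM M x) (hN : AnM N x) (h1 : ∀ᶠ z in 𝓝 x, M z * N z = 1)
    (h2 : ∀ᶠ z in 𝓝 x, r z = s z * M z) : OkaAt s x := by
  obtain ⟨lam, _, t, ht, h⟩ := hr
  refine ⟨lam, inferInstance, fun z => M z * t z, hM.mul ht, ?_⟩
  filter_upwards [h, h1.eventually_nhds, h2.eventually_nhds, hN.eventually] with y h h1 h2 hN
  refine ⟨fun v => ?_, fun c hc hsc => ?_⟩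
  · have := h.1 v
    rw [h2.self_of_nhds] at this
    simpa [mulVec_mulVec, Matrix.mul_assoc] using this
  · obtain ⟨g, hg, hcg⟩ := h.2 (fun z => N z *ᵥ c z) (hN.mulVec hc) (by
      filter_upwards [hsc, h1, h2] with z h3 h4 h5
      rw [h5, mulVec_mulVec, Matrix.mul_assoc, h4, Matrix.mul_one, h3])
    refine ⟨g, hg, ?_⟩
    filter_upwards [hcg, h1] with z h3 h4
    rw [← mulVec_mulVec, ← h3, mulVec_mulVec, h4, one_mulVec]

lemma GenAt.comp {s : E → Matrix ι κ ℂ} {t : E → Matrix κ lam ℂ} {φ : F → E} {ψ : E → F} {x : F}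
    (h : GenAt s t (φ x)) (hφ : AnalyticAt ℂ φ x) (hψ : AnalyticAt ℂ ψ (φ x))
    (h1 : ∀ z, φ (ψ z) = z) (h2 : ∀ z, ψ (φ z) = z) :
    GenAt (fun z => s (φ z)) (fun z => t (φ z)) x := by
  intro c hc hsc
  obtain ⟨g, hg, hcg⟩ := h (fun z => c (ψ z))
    (AnalyticAt.fun_comp (g := c) (f := ψ) (by rw [h2]; exact hc) hψ) (by
      have := hψ.continuousAt.tendsto
      rw [h2] at this
      filter_upwards [this.eventually hsc] with z hz
      rw [h1] at hz; exact hz)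
  refine ⟨fun z => g (φ z), AnalyticAt.fun_comp (g := g) hg hφ, ?_⟩
  filter_upwards [hφ.continuousAt.tendsto.eventually hcg] with z hz
  rw [h2] at hz; exact hz

lemma OkaAt.comp {s : E → Matrix ι κ ℂ} {φ : F → E} {ψ : E → F} {x : F}
    (h : OkaAt s (φ x)) (hφ : ∀ x, AnalyticAt ℂ φ x) (hψ : ∀ x, AnalyticAt ℂ ψ x)
    (h1 : ∀ z, φ (ψ z) = z) (h2 : ∀ z, ψ (φ z) = z) :
    OkaAt (fun z => s (φ z)) x := by
  obtain ⟨lam, _, t, ht, h⟩ := h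
  refine ⟨lam, inferInstance, fun z => t (φ z), ht.comp (hφ x), ?_⟩
  filter_upwards [(hφ x).continuousAt.tendsto.eventually h] with y hy
  exact ⟨hy.1, hy.2.comp (hφ y) (hψ _) h1 h2⟩

/-- If one-row matrices have finitely generated relations, so do all matrices. -/
lemma OkaAt.of_row {x : E}
    (h : ∀ (κ : Type) [Fintype κ] (r : E → Matrix Unit κ ℂ), AnM r x → OkaAt r x)
    (s : E → Matrix ι κ ℂ) (hs : AnM s x) : OkaAt s x := by
  classical
  have key : ∀ S : Finset ι, OkaAt (fun z => Matrix.of fun i j => if i ∈ S then s z i j else 0) x := by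
    intro S
    induction S using Finset.induction_on with
    | empty =>
      refine OkaAt.of_zero (Eventually.of_forall fun z => ?_)
      ext i j; simp
    | insert i S hi ih =>
      refine ih.stack (s₂ := fun z => Matrix.of fun (_ : Unit) j => s z i j) (fun _ j => hs i j) h ?_
      refine Eventually.of_forall fun z v => ?_
      have aux : ∀ T : Finset ι, ((Matrix.of fun i j => if i ∈ T then s z i j else 0) *ᵥ v = 0) ↔
          ∀ k ∈ T, s z k ⬝ᵥ v = 0 := by
        intro T
        constructor
        · intro h k hk
          have := congrFun h k
          simpa [Matrix.mulVec, dotProduct, hk] using this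
        · intro h
          ext k
          by_cases hk : k ∈ T
          · simpa [Matrix.mulVec, dotProduct, hk] using h k hk
          · simp [Matrix.mulVec, dotProduct, hk]
      rw [aux, aux, Finset.forall_mem_insert, and_comm]
      refine and_congr_right fun _ => ?_
      constructor
      · intro h; ext k; simpa [Matrix.mulVec, dotProduct] using h
      · intro h; simpa [Matrix.mulVec, dotProduct] using congrFun h ()
  have := key Finset.univ
  simp only [Finset.mem_univ, if_true] at this
  exact this

/-- If one entry of a row is invertible, its relations are generated by the trivial ones. -/
lemma OkaAt.of_unit [DecidableEq κ] {r : E → Matrix Unit κ ℂ} {x : E} (hr : AnM r x) (k₀ : κ)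
    (h0 : r x () k₀ ≠ 0) : OkaAt r x := by
  refine ⟨κ, inferInstance, fun z => r z () k₀ • (1 : Matrix κ κ ℂ) -
    vecMulVec (Pi.single k₀ 1) (r z ()), ?_, ?_⟩
  · intro i j
    simp only [Matrix.sub_apply, Matrix.smul_apply, vecMulVec_apply, smul_eq_mul]
    exact ((hr () k₀).fun_mul analyticAt_const).fun_sub (analyticAt_const.fun_mul (hr () j))
  · have hT : ∀ z (v : κ → ℂ), (r z () k₀ • (1 : Matrix κ κ ℂ) -
        vecMulVec (Pi.single k₀ 1) (r z ())) *ᵥ v = r z () k₀ • v - (r z () ⬝ᵥ v) • Pi.single k₀ 1 := by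
      intro z v
      rw [sub_mulVec, smul_mulVec, one_mulVec, vecMulVec_mulVec]
      simp
    have hrm : ∀ z (v : κ → ℂ), r z *ᵥ v = fun _ => r z () ⬝ᵥ v := fun z v => by
      ext i; rfl
    filter_upwards [(hr () k₀).continuousAt.eventually_ne h0, hr.eventually] with y hy hry
    refine ⟨fun v => ?_, fun c hc hsc => ?_⟩
    · rw [hT, hrm]
      ext i
      simp [mul_comm]
    · refine ⟨fun z => (r z () k₀)⁻¹ • c z, ?_, ?_⟩
      · exact ((hry () k₀).fun_inv hy).smul hc
      · filter_upwards [hsc, (hry () k₀).continuousAt.eventually_ne hy] with z h1 h2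
        have h3 : r z () ⬝ᵥ c z = 0 := by
          rw [hrm] at h1; exact congrFun h1 ()
        rw [hT, dotProduct_smul, h3]
        simp [smul_smul, h2]
end

/-! ### Relations between polynomial families -/

section
variable {E : Type*} [NormedAddCommGroup E] [NormedSpace ℂ E] [FiniteDimensional ℂ E]

lemma eq_zero_of_poly_mul {w : Polynomial ℂ} (hw : w ≠ 0) {h : ℂ → ℂ} {ζ : ℂ} (hc : ContinuousAt h ζ)
    (h0 : ∀ᶠ η in 𝓝 ζ, w.eval η * h η = 0) : h ζ = 0 := by
  have h1 : ∀ᶠ η in 𝓝[≠] ζ, w.eval η ≠ 0 := by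
    have : ((w.roots.toFinset : Set ℂ) \ {ζ})ᶜ ∈ 𝓝 ζ :=
      ((w.roots.toFinset.finite_toSet.subset sdiff_subset).isClosed).isOpen_compl.mem_nhds (by simp)
    filter_upwards [mem_nhdsWithin_of_mem_nhds this, self_mem_nhdsWithin] with η h1 h2 h3
    exact h1 ⟨by simpa [hw] using h3, h2⟩
  have h2 : ∀ᶠ η in 𝓝[≠] ζ, h η = 0 := by
    filter_upwards [h1, mem_nhdsWithin_of_mem_nhds h0] with η h3 h4
    exact (mul_eq_zero.1 h4).resolve_left h3
  exact tendsto_nhds_unique (hc.tendsto.mono_left nhdsWithin_le_nhds)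
    ((tendsto_const_nhds).congr' (h2.mono fun η h => h.symm))

lemma exists_good_radius {w : Polynomial ℂ} (hw : w ≠ 0) (ζ : ℂ) {R : ℝ} (hR : 0 < R) :
    ∃ r, 0 < r ∧ r < R ∧ ∀ η ∈ sphere ζ r, w.eval η ≠ 0 := by
  have hfin : (Set.image (fun η => dist η ζ) (w.roots.toFinset : Set ℂ)).Finite :=
    (w.roots.toFinset.finite_toSet).image _
  obtain ⟨r, hr, hr'⟩ := (Set.Ioo_infinite hR).exists_notMem_finite hfin
  refine ⟨r, hr.1, hr.2, fun η hη h0 => hr' ⟨η, by simpa [hw] using h0, mem_sphere.1 hη⟩⟩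

end
section
variable {E : Type*} [NormedAddCommGroup E] [NormedSpace ℂ E] [FiniteDimensional ℂ E]
variable {κ : Type} [Fintype κ] [DecidableEq κ]

/-- Relations among polynomials `P k` in `ζ` with holomorphic coefficients, one of which is monic and
of the highest degree `d`: locally every relation is a combination of the trivial relations and of a
relation by polynomials of degree `< d`. -/
lemma relation_decomp {P : E → κ → Polynomial ℂ} {k₀ : κ} {d : ℕ} {y : E} {ζ₀ : ℂ}
    (hmon : ∀ z, (P z k₀).Monic ∧ (P z k₀).natDegree = d)
    (hdeg : ∀ z k, k ≠ k₀ → (P z k).degree < d)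
    (hP : ∀ k j, AnalyticAt ℂ (fun z => (P z k).coeff j) y)
    {c : E × ℂ → κ → ℂ} (hc : AnalyticAt ℂ c (y, ζ₀))
    (hrel : ∀ᶠ p in 𝓝 (y, ζ₀), ∑ k, (P p.1 k).eval p.2 * c p k = 0) :
    ∃ (e : E × ℂ → κ → ℂ) (C : E → κ → Polynomial ℂ), AnalyticAt ℂ e (y, ζ₀) ∧
      (∀ k j, AnalyticAt ℂ (fun z => (C z k).coeff j) y) ∧
      (∀ᶠ z in 𝓝 y, (∀ k, (C z k).degree < d) ∧ ∑ k, P z k * C z k = 0) ∧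
      ∀ᶠ p in 𝓝 (y, ζ₀), c p = (P p.1 k₀).eval p.2 • e p -
        (∑ k, (P p.1 k).eval p.2 * e p k) • Pi.single k₀ 1 + fun k => (C p.1 k).eval p.2 := by
  obtain ⟨R, hR, hball⟩ := Metric.eventually_nhds_iff_ball.1 (hrel.and hc.eventually_analyticAt)
  obtain ⟨r, hr, hrR, hsph⟩ := exists_good_radius (hmon y).1.ne_zero ζ₀ hR
  have hcan : ∀ k, ∀ ζ ∈ closedBall ζ₀ r, AnalyticAt ℂ (fun p => c p k) (y, ζ) := by
    intro k ζ hζ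
    refine analyticAt_pi_iff.1 (hball (y, ζ) ?_).2 k
    rw [← ball_prod_same]
    exact ⟨mem_ball_self hR, closedBall_subset_ball hrR hζ⟩
  have hdiv := fun k => weierstrass_division hr hmon (hP k₀) hsph (hcan k)
  choose e₀ ρ hρan hρdeg he₀ hdivz using hdiv
  let e : E × ℂ → κ → ℂ := fun p k => if k = k₀ then 0 else e₀ k p
  let p : E → Polynomial ℂ := fun z => ∑ k ∈ Finset.univ.erase k₀, P z k * ρ k z
  let a : E → Polynomial ℂ := fun z => -(p z /ₘ P z k₀)
  let C : E → κ → Polynomial ℂ := fun z k => if k = k₀ then a z else ρ k z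
  have hev : ∀ᶠ z in 𝓝 y, ∀ k, ((∀ ζ ∈ ball ζ₀ r, AnalyticAt ℂ (e₀ k) (z, ζ) ∧
          c (z, ζ) k = e₀ k (z, ζ) * (P z k₀).eval ζ + (ρ k z).eval ζ) ∧
        (∀ ζ ∈ sphere ζ₀ r, (P z k₀).eval ζ ≠ 0) ∧
        ∀ ζ ∉ ball ζ₀ r, ∃ g : ℂ → ℂ, ContinuousAt g ζ ∧
          ∀ᶠ η in 𝓝 ζ, (ρ k z).eval η = g η * (P z k₀).eval η) := eventually_all.2 hdivz
  -- the quotient at the distinguished index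
  let b : E × ℂ → ℂ := fun q => c q k₀ + ∑ k, (P q.1 k).eval q.2 * e q k
  have hean : ∀ᶠ z in 𝓝 y, ∀ ζ ∈ ball ζ₀ r, ∀ k, AnalyticAt ℂ (fun q => e q k) (z, ζ) := by
    filter_upwards [hev] with z hz ζ hζ k
    by_cases hk : k = k₀
    · simp only [e, hk, if_true]; exact analyticAt_const
    · simp only [e, hk, if_false]; exact ((hz k).1 ζ hζ).1
  have hpdeg : ∀ z, p z = 0 ∨ (p z).natDegree < 2 * d := by
    intro z
    by_cases h0 : p z = 0
    · exact Or.inl h0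
    right
    have hlt : (p z).degree < (2 * d : ℕ) := by
      rw [← Polynomial.mem_degreeLT]
      refine Submodule.sum_mem _ fun k hk => ?_
      rw [Polynomial.mem_degreeLT]
      have h1 := hdeg z k (Finset.ne_of_mem_erase hk)
      have h2 := hρdeg k z
      by_cases hz1 : P z k = 0
      · rw [hz1, zero_mul, Polynomial.degree_zero]; exact WithBot.bot_lt_coe _
      by_cases hz2 : ρ k z = 0
      · rw [hz2, mul_zero, Polynomial.degree_zero]; exact WithBot.bot_lt_coe _
      rw [Polynomial.degree_mul]
      rw [Polynomial.degree_eq_natDegree hz1] at h1 ⊢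
      rw [Polynomial.degree_eq_natDegree hz2] at h2 ⊢
      have h3 : (P z k).natDegree < d := by exact_mod_cast h1
      have h4 : (ρ k z).natDegree < d := by exact_mod_cast h2
      exact_mod_cast (by omega : (P z k).natDegree + (ρ k z).natDegree < 2 * d)
    rw [Polynomial.degree_eq_natDegree h0] at hlt
    exact_mod_cast hlt
  have hadeg : ∀ z, (a z).degree < d := by
    intro z
    simp only [a, Polynomial.degree_neg]
    by_cases h0 : p z /ₘ P z k₀ = 0
    · rw [h0, Polynomial.degree_zero]; exact WithBot.bot_lt_coe _
    rw [Polynomial.degree_eq_natDegree h0, Polynomial.natDegree_divByMonic _ (hmon z).1, (hmon z).2]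
    rcases hpdeg z with h | h
    · rw [h] at h0; simp at h0
    · exact_mod_cast (by omega : (p z).natDegree - d < d)
  have hinner : ∀ᶠ z in 𝓝 y, ∀ ζ ∈ ball ζ₀ r, (p z).eval ζ = - b (z, ζ) * (P z k₀).eval ζ := by
    filter_upwards [hev, ball_mem_nhds y hR] with z hz hzR ζ hζ
    have h1 := (hball (z, ζ) (by
      rw [← ball_prod_same]; exact ⟨hzR, ball_subset_ball hrR.le hζ⟩)).1
    simp only [b]
    rw [← Finset.add_sum_erase _ _ (Finset.mem_univ k₀)] at h1
    rw [← Finset.add_sum_erase _ (fun k => (P (z, ζ).1 k).eval (z, ζ).2 * e (z, ζ) k) (Finset.mem_univ k₀)]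
    have h2 : ∀ k ∈ Finset.univ.erase k₀, (P z k).eval ζ * c (z, ζ) k =
        (P z k).eval ζ * e (z, ζ) k * (P z k₀).eval ζ + (P z k * ρ k z).eval ζ := by
      intro k hk
      simp only [e, Finset.ne_of_mem_erase hk, if_false, ((hz k).1 ζ hζ).2, Polynomial.eval_mul]
      ring
    rw [Finset.sum_congr rfl h2, Finset.sum_add_distrib, ← Finset.sum_mul] at h1
    simp only [p, Polynomial.eval_finsetSum]
    have h3 : e (z, ζ) k₀ = 0 := by simp [e]
    rw [h3]
    linear_combination h1
  have hpa : ∀ᶠ z in 𝓝 y, p z = - (P z k₀ * a z) := by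
    filter_upwards [hev, hinner, hean, ball_mem_nhds y hR,
      (eventually_all.2 fun k => eventually_all.2 fun j : Fin (d+1) => (hP k j).eventually_analyticAt)]
      with z hz hin hea hzR hPz
    have hPz' : ∀ k j, AnalyticAt ℂ (fun z => (P z k).coeff j) z := by
      intro k j
      by_cases hj : j < d + 1
      · exact hPz k ⟨j, hj⟩
      · have : (fun z => (P z k).coeff j) = fun _ => 0 := by
          ext z'
          by_cases hk : k = k₀
          · exact Polynomial.coeff_eq_zero_of_natDegree_lt (by rw [hk, (hmon z').2]; omega)
          · exact Polynomial.coeff_eq_zero_of_degree_lt ((hdeg z' k hk).trans_le (by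
              exact_mod_cast (by omega : d ≤ j)))
        rw [this]; exact analyticAt_const
    have hPe : ∀ k ζ, ContinuousAt (fun η => (P z k).eval η) ζ := fun k ζ =>
      (P z k).continuous.continuousAt
    have hmod : p z %ₘ P z k₀ = 0 := by
      refine poly_eq_zero_of_local_dvd d (P z k₀) _ (hmon z).1.ne_zero (hmon z).2
        (Polynomial.degree_modByMonic_lt _ (hmon z).1) fun ζ => ?_
      have hq : ∃ g : ℂ → ℂ, ContinuousAt g ζ ∧ ∀ᶠ η in 𝓝 ζ, (p z).eval η = g η * (P z k₀).eval η := by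
        by_cases hζ : ζ ∈ ball ζ₀ r
        · refine ⟨fun η => - b (z, η), ?_, ?_⟩
          · refine ContinuousAt.neg (ContinuousAt.add ?_ ?_)
            · have h1 := (hball (z, ζ) (by
                rw [← ball_prod_same]; exact ⟨hzR, ball_subset_ball hrR.le hζ⟩)).2
              exact (fib_differentiableAt (analyticAt_pi_iff.1 h1 k₀)).continuousAt
            · refine tendsto_finsetSum _ fun k _ => ?_
              exact (hPe k ζ).mul (fib_differentiableAt (hea ζ hζ k)).continuousAt
          · filter_upwards [isOpen_ball.mem_nhds hζ] with η hη
            exact hin η hη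
        · choose g hg hg' using fun k => (hz k).2.2 ζ hζ
          refine ⟨fun η => ∑ k ∈ Finset.univ.erase k₀, (P z k).eval η * g k η, ?_, ?_⟩
          · exact tendsto_finsetSum _ fun k _ => (hPe k ζ).mul (hg k)
          · filter_upwards [eventually_all.2 hg'] with η hη
            simp only [p, Polynomial.eval_finsetSum, Finset.sum_mul, Polynomial.eval_mul]
            refine Finset.sum_congr rfl fun k _ => ?_
            rw [hη k]; ring
      obtain ⟨g, hg, hg'⟩ := hq
      refine ⟨fun η => g η - (p z /ₘ P z k₀).eval η,
        hg.sub (Polynomial.continuous _).continuousAt, ?_⟩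
      filter_upwards [hg'] with η hη
      have := congrArg (Polynomial.eval η) (Polynomial.modByMonic_add_div (p z) (P z k₀))
      rw [Polynomial.eval_add, Polynomial.eval_mul, hη] at this
      linear_combination this
    have := Polynomial.modByMonic_add_div (p z) (P z k₀)
    rw [hmod, zero_add] at this
    simp only [a]
    rw [mul_neg, neg_neg, this]
  have hbcont : ∀ᶠ z in 𝓝 y, ∀ ζ ∈ ball ζ₀ r, ContinuousAt (fun η => b (z, η)) ζ := by
    filter_upwards [hean, ball_mem_nhds y hR] with z hea hzR ζ hζ
    refine ContinuousAt.add ?_ ?_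
    · have h1 := (hball (z, ζ) (by
        rw [← ball_prod_same]; exact ⟨hzR, ball_subset_ball hrR.le hζ⟩)).2
      exact (fib_differentiableAt (analyticAt_pi_iff.1 h1 k₀)).continuousAt
    · refine tendsto_finsetSum _ fun k _ => ?_
      exact ((P z k).continuous.continuousAt).mul (fib_differentiableAt (hea ζ hζ k)).continuousAt
  have hab : ∀ᶠ z in 𝓝 y, ∀ ζ ∈ ball ζ₀ r, (a z).eval ζ = b (z, ζ) := by
    filter_upwards [hinner, hpa, hbcont] with z h1 h2 h3 ζ hζ
    rw [← sub_eq_zero]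
    refine eq_zero_of_poly_mul (h := fun η => (a z).eval η - b (z, η)) (hmon z).1.ne_zero
      ((a z).continuous.continuousAt.sub (h3 ζ hζ)) ?_
    filter_upwards [isOpen_ball.mem_nhds hζ] with η hη
    have := h1 η hη
    rw [h2, Polynomial.eval_neg, Polynomial.eval_mul] at this
    linear_combination -this
  have hζ₀ : ζ₀ ∈ ball ζ₀ r := mem_ball_self hr
  have hnb : ∀ {Q : E → ℂ → Prop}, (∀ᶠ z in 𝓝 y, ∀ ζ ∈ ball ζ₀ r, Q z ζ) →
      ∀ᶠ q : E × ℂ in 𝓝 (y, ζ₀), Q q.1 q.2 := by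
    intro Q hQ
    rw [nhds_prod_eq]
    filter_upwards [prod_mem_prod hQ (isOpen_ball.mem_nhds hζ₀)] with q hq
    exact hq.1 _ hq.2
  have hPey : ∀ k, AnalyticAt ℂ (fun q : E × ℂ => (P q.1 k).eval q.2) (y, ζ₀) := by
    intro k
    refine analyticAt_polyEval (N := d + 1) (P := fun z => P z k) (Eventually.of_forall fun z => ?_) (hP k) ζ₀
    by_cases hk : k = k₀
    · rw [hk, (hmon z).2]; omega
    · refine lt_of_le_of_lt (Polynomial.natDegree_le_of_degree_le (hdeg z k hk).le) (by omega)
  have heany : AnalyticAt ℂ e (y, ζ₀) := analyticAt_pi_iff.2 fun k => hean.self_of_nhds ζ₀ hζ₀ k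
  have hban : AnalyticAt ℂ b (y, ζ₀) := by
    refine (analyticAt_pi_iff.1 hc k₀).fun_add (Finset.analyticAt_fun_sum _ fun k _ => ?_)
    exact (hPey k).fun_mul (analyticAt_pi_iff.1 heany k)
  refine ⟨e, C, heany, ?_, ?_, ?_⟩
  · intro k j
    by_cases hk : k = k₀
    · simp only [C, hk, if_true]
      exact analyticAt_coeff_of_eval (d := d) (Eventually.of_forall hadeg) hban (hnb hab) j
    · simp only [C, hk, if_false]
      exact hρan k j
  · filter_upwards [hpa] with z hz
    refine ⟨fun k => ?_, ?_⟩
    · by_cases hk : k = k₀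
      · simp only [C, hk, if_true]; exact hadeg z
      · simp only [C, hk, if_false]; exact hρdeg k z
    · rw [← Finset.add_sum_erase _ _ (Finset.mem_univ k₀)]
      have : ∑ k ∈ Finset.univ.erase k₀, P z k * C z k = p z :=
        Finset.sum_congr rfl fun k hk => by simp [C, Finset.ne_of_mem_erase hk]
      rw [this, hz]
      simp [C]
  · filter_upwards [hnb hab, hnb (hev.mono fun z hz ζ hζ k => ((hz k).1 ζ hζ).2)] with q h1 h2
    ext k
    by_cases hk : k = k₀
    · subst hk
      simp only [Pi.add_apply, Pi.sub_apply, Pi.smul_apply, smul_eq_mul, Pi.single_eq_same, C, if_true,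
        h1, b]
      simp only [e, if_true]
      ring
    · simp only [Pi.add_apply, Pi.sub_apply, Pi.smul_apply, smul_eq_mul, Pi.single_eq_of_ne hk, C,
        hk, if_false, e, h2 k]
      ring
end

/-! ### Oka's coherence theorem -/

universe u
section
variable {E : Type*} [NormedAddCommGroup E] [NormedSpace ℂ E] [FiniteDimensional ℂ E]
variable {κ : Type} [Fintype κ] [DecidableEq κ]

/-- The vector of polynomials of degree `< d` with given coefficients. -/
noncomputable def polyOf (d : ℕ) (v : κ × Fin d → ℂ) (k : κ) : Polynomial ℂ :=
  ∑ j : Fin d, Polynomial.C (v (k, j)) * Polynomial.X ^ (j : ℕ)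

lemma polyOf_degree (d : ℕ) (v : κ × Fin d → ℂ) (k : κ) : (polyOf d v k).degree < d := by
  rw [← Polynomial.mem_degreeLT]
  refine Submodule.sum_mem _ fun j hj => ?_
  rw [Polynomial.mem_degreeLT]
  refine (Polynomial.degree_C_mul_X_pow_le _ _).trans_lt ?_
  exact_mod_cast j.2

lemma polyOf_coeff {d : ℕ} {C : Polynomial ℂ} (hC : C.degree < d) (k : κ) (v : κ × Fin d → ℂ)
    (hv : ∀ j, v (k, j) = C.coeff j) : polyOf d v k = C := by
  simp only [polyOf, hv]
  rw [Finset.sum_fin_eq_sum_range]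
  by_cases h0 : C = 0
  · simp [h0]
  rw [Polynomial.degree_eq_natDegree h0] at hC
  conv_rhs => rw [Polynomial.as_sum_range' C d (by exact_mod_cast hC)]
  refine Finset.sum_congr rfl fun j hj => ?_
  rw [dif_pos (Finset.mem_range.1 hj), Polynomial.C_mul_X_pow_eq_monomial]

/-- The matrix, with holomorphic entries in the base variables, expressing relations
`∑ P k * C k = 0` with `C k` of degree `< d` as linear equations between coefficients. -/
noncomputable def relMat (d : ℕ) (P : κ → Polynomial ℂ) : Matrix (Fin (2 * d)) (κ × Fin d) ℂ :=
  Matrix.of fun m kj => (P kj.1 * Polynomial.X ^ (kj.2 : ℕ)).coeff m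

lemma relMat_mulVec {d : ℕ} {P : κ → Polynomial ℂ} (hP : ∀ k, (P k).natDegree ≤ d)
    (v : κ × Fin d → ℂ) : relMat d P *ᵥ v = 0 ↔ ∑ k, P k * polyOf d v k = 0 := by
  have h1 : ∀ m : Fin (2 * d), (relMat d P *ᵥ v) m = (∑ k, P k * polyOf d v k).coeff m := by
    intro m
    simp only [Matrix.mulVec, dotProduct, relMat, Matrix.of_apply, polyOf, Polynomial.finsetSum_coeff,
      Finset.mul_sum, Fintype.sum_prod_type]
    refine Finset.sum_congr rfl fun k _ => Finset.sum_congr rfl fun j _ => ?_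
    rw [mul_left_comm, Polynomial.coeff_C_mul, mul_comm]
  constructor
  · intro h
    ext m
    by_cases hm : m < 2 * d
    · have := congrFun h ⟨m, hm⟩
      rw [h1] at this
      simpa using this
    · rw [Polynomial.coeff_zero, Polynomial.finsetSum_coeff]
      refine Finset.sum_eq_zero fun k _ => ?_
      have h2 := polyOf_degree d v k
      by_cases h0 : polyOf d v k = 0
      · simp [h0]
      rw [Polynomial.degree_eq_natDegree h0] at h2
      have h3 : (polyOf d v k).natDegree < d := by exact_mod_cast h2
      refine Polynomial.coeff_eq_zero_of_natDegree_lt ?_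
      refine lt_of_le_of_lt Polynomial.natDegree_mul_le ?_
      have := hP k
      omega
  · intro h
    ext m
    rw [h1, h]; simp

/-- Oka's theorem for a row of polynomials in the last variable, from Oka's theorem in the remaining
variables: by `relation_decomp` it suffices to consider relations of bounded degree, and these are
governed by the matrix `relMat` over the base. -/
lemma oka_poly {y₀ : E} {ζ₁ : ℂ}
    (hO : ∀ (ι κ : Type) [Fintype ι] [Fintype κ] (s : E → Matrix ι κ ℂ), AnM s y₀ → OkaAt s y₀)
    {P : E → κ → Polynomial ℂ} {k₀ : κ} {d : ℕ}
    (hmon : ∀ z, (P z k₀).Monic ∧ (P z k₀).natDegree = d)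
    (hdeg : ∀ z k, k ≠ k₀ → (P z k).degree < d)
    (hP : ∀ k j, AnalyticAt ℂ (fun z => (P z k).coeff j) y₀) :
    OkaAt (fun q : E × ℂ => Matrix.of fun (_ : Unit) k => (P q.1 k).eval q.2) (y₀, ζ₁) := by
  have hnat : ∀ z k, (P z k).natDegree ≤ d := by
    intro z k
    by_cases hk : k = k₀
    · rw [hk, (hmon z).2]
    · exact Polynomial.natDegree_le_of_degree_le (hdeg z k hk).le
  obtain ⟨lam, _, t, ht, h⟩ := hO (Fin (2 * d)) (κ × Fin d) (fun z => relMat d (P z)) (by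
    rintro m ⟨k, j⟩
    simp only [relMat, Matrix.of_apply, Polynomial.coeff_mul_X_pow']
    split_ifs
    · exact hP _ _
    · exact analyticAt_const)
  have hPev : ∀ᶠ z in 𝓝 y₀, ∀ k j, AnalyticAt ℂ (fun z => (P z k).coeff j) z := by
    filter_upwards [(eventually_all.2 fun k => eventually_all.2 fun j : Fin (d+1) =>
      (hP k j).eventually_analyticAt)] with z hPz k j
    by_cases hj : j < d + 1
    · exact hPz k ⟨j, hj⟩
    · have : (fun z => (P z k).coeff j) = fun _ => 0 := by
        ext z'
        exact Polynomial.coeff_eq_zero_of_natDegree_lt (by have := hnat z' k; omega)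
      rw [this]; exact analyticAt_const
  let A : E × ℂ → Matrix κ κ ℂ := fun q => (P q.1 k₀).eval q.2 • (1 : Matrix κ κ ℂ) -
    vecMulVec (Pi.single k₀ 1) (fun k => (P q.1 k).eval q.2)
  let B : E × ℂ → Matrix κ lam ℂ := fun q => Matrix.of fun k l =>
    ∑ j : Fin d, t q.1 (k, j) l * q.2 ^ (j : ℕ)
  have hA : ∀ q v, A q *ᵥ v = (P q.1 k₀).eval q.2 • v -
      (∑ k, (P q.1 k).eval q.2 * v k) • Pi.single k₀ 1 := by
    intro q v
    simp only [A]
    rw [sub_mulVec, smul_mulVec, one_mulVec, vecMulVec_mulVec, op_smul_eq_smul]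
    rfl
  have hB : ∀ q v, B q *ᵥ v = fun k => (polyOf d (t q.1 *ᵥ v) k).eval q.2 := by
    intro q v
    ext k
    simp only [B, polyOf, Matrix.mulVec, dotProduct, Matrix.of_apply, Polynomial.eval_finsetSum,
      Polynomial.eval_mul, Polynomial.eval_C, Polynomial.eval_pow, Polynomial.eval_X, Finset.sum_mul]
    rw [Finset.sum_comm]
    exact Finset.sum_congr rfl fun j _ => Finset.sum_congr rfl fun i _ => by ring
  have hPan : ∀ k, AnalyticAt ℂ (fun q : E × ℂ => (P q.1 k).eval q.2) (y₀, ζ₁) := fun k =>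
    analyticAt_polyEval (N := d + 1) (P := fun z => P z k)
      (Eventually.of_forall fun z => Nat.lt_succ_of_le (hnat z k)) (hP k) ζ₁
  refine ⟨κ ⊕ lam, inferInstance, fun q => Matrix.fromCols (A q) (B q), ?_, ?_⟩
  · rintro k (k' | l)
    · simp only [Matrix.fromCols_apply_inl, A, Matrix.sub_apply, Matrix.smul_apply, smul_eq_mul,
        vecMulVec_apply]
      exact ((hPan k₀).fun_mul analyticAt_const).fun_sub (analyticAt_const.fun_mul (hPan k'))
    · simp only [Matrix.fromCols_apply_inr, B, Matrix.of_apply]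
      refine Finset.analyticAt_fun_sum _ fun j _ => AnalyticAt.fun_mul ?_ (by fun_prop)
      exact AnalyticAt.fun_comp (g := fun z => t z (k, j) l) (f := fun p : E × ℂ => p.1) (ht _ _)
        (by fun_prop)
  · have hev : ∀ᶠ q : E × ℂ in 𝓝 (y₀, ζ₁), (∀ k j, AnalyticAt ℂ (fun z => (P z k).coeff j) q.1) ∧
        (∀ v, relMat d (P q.1) *ᵥ (t q.1 *ᵥ v) = 0) ∧ GenAt (fun z => relMat d (P z)) t q.1 :=
      (continuous_fst.tendsto (y₀, ζ₁)).eventually (hPev.and h)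
    filter_upwards [hev] with q hq
    obtain ⟨y, ζ₀⟩ := q
    obtain ⟨hPy, hz, hgen⟩ := hq
    refine ⟨fun v => ?_, fun c hc hsc => ?_⟩
    · rw [Matrix.fromCols_mulVec, Matrix.mulVec_add, hA, hB]
      have h1 := (relMat_mulVec (hnat y) _).1 (hz (v ∘ Sum.inr))
      ext i
      simp only [Pi.add_apply, Pi.zero_apply, Matrix.mulVec, Matrix.of_apply, dotProduct, Pi.sub_apply,
        Pi.smul_apply, smul_eq_mul]
      have h2 := congrArg (Polynomial.eval ζ₀) h1
      simp only [Polynomial.eval_finsetSum, Polynomial.eval_mul, Polynomial.eval_zero] at h2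
      rw [h2, add_zero]
      simp only [mul_sub, Finset.sum_sub_distrib]
      rw [sub_eq_zero, Finset.sum_eq_single (f := fun x => Polynomial.eval ζ₀ (P y x) * ((∑ k, Polynomial.eval ζ₀ (P y k) * (v ∘ Sum.inl) k) * (Pi.single k₀ (1:ℂ) : κ → ℂ) x)) k₀]
      · simp only [Pi.single_eq_same, mul_one, Finset.mul_sum]
        exact Finset.sum_congr rfl fun k _ => by ring
      · intro k _ hk; simp [hk]
      · simp
    · obtain ⟨e, C, he, hC, hCz, hcC⟩ := relation_decomp hmon hdeg hPy hc (by
        filter_upwards [hsc] with q hq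
        exact congrFun hq ())
      obtain ⟨g, hg, hCg⟩ := hgen (fun z kj => (C z kj.1).coeff kj.2)
        (analyticAt_pi_iff.2 fun kj => hC kj.1 kj.2) (by
          filter_upwards [hCz] with z hz
          rw [relMat_mulVec (hnat z), ← hz.2]
          refine Finset.sum_congr rfl fun k _ => ?_
          rw [polyOf_coeff (hz.1 k) k _ fun j => rfl])
      refine ⟨fun q => Sum.elim (e q) (g q.1), ?_, ?_⟩
      · rw [analyticAt_pi_iff]
        rintro (k | l)
        · exact analyticAt_pi_iff.1 he k
        · exact AnalyticAt.fun_comp (g := fun z => g z l) (f := fun p : E × ℂ => p.1)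
            (analyticAt_pi_iff.1 hg l) (by fun_prop)
      · have h5 : ∀ᶠ q : E × ℂ in 𝓝 (y, ζ₀), (∀ k, (C q.1 k).degree < d) ∧
            (fun kj : κ × Fin d => (C q.1 kj.1).coeff kj.2) = t q.1 *ᵥ g q.1 :=
          (continuous_fst.tendsto (y, ζ₀)).eventually ((hCz.mono fun z hz => hz.1).and hCg)
        filter_upwards [hcC, h5] with q h6 h7
        rw [h6, Matrix.fromCols_mulVec, hA, hB]
        congr 1
        ext k
        have h8 := polyOf_coeff (h7.1 k) k (t q.1 *ᵥ g q.1) fun j => by rw [← h7.2]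
        simp only [Sum.elim_comp_inr]
        rw [h8]

/-- Oka's theorem for a row with an entry regular in the last variable: after Weierstrass preparation
and division all entries may be taken polynomial in that variable. -/
lemma oka_step (hO : ∀ (ι κ : Type) [Fintype ι] [Fintype κ] (s : E → Matrix ι κ ℂ), AnM s 0 → OkaAt s 0)
    {r : E × ℂ → Matrix Unit κ ℂ} (hr : AnM r 0) (k₀ : κ)
    (h0 : ¬ ∀ᶠ ζ : ℂ in 𝓝 0, r (0, ζ) () k₀ = 0) : OkaAt r 0 := by
  obtain ⟨d, W, e, hmon, hWan, hW0, hean, he0, heW⟩ :=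
    weierstrass_preparation (f := fun q => r q () k₀) (hr () k₀) h0
  obtain ⟨R, hR, hball⟩ := Metric.eventually_nhds_iff_ball.1 hr.eventually
  have hsph : ∀ ζ ∈ sphere (0:ℂ) (R/2), (W 0).eval ζ ≠ 0 := by
    intro ζ hζ
    rw [hW0, Polynomial.eval_pow, Polynomial.eval_X]
    refine pow_ne_zero _ ?_
    rintro rfl
    simp at hζ
    linarith
  have hdiv := fun k => weierstrass_division (c := fun q => r q () k) (half_pos hR) hmon hWan hsph
    (fun ζ hζ => hball (0, ζ) (by
      rw [← Prod.mk_zero_zero, ← ball_prod_same]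
      exact ⟨mem_ball_self hR, closedBall_subset_ball (by linarith) hζ⟩) () k)
  choose e₀ ρ hρan hρdeg he₀ hdivz using hdiv
  have hid : ∀ᶠ q : E × ℂ in 𝓝 0, ∀ k, r q () k = e₀ k q * (W q.1).eval q.2 + (ρ k q.1).eval q.2 := by
    rw [← Prod.mk_zero_zero, nhds_prod_eq]
    filter_upwards [prod_mem_prod (eventually_all.2 hdivz) (ball_mem_nhds (0:ℂ) (half_pos hR))]
      with q hq k
    exact ((hq.1 k).1 _ hq.2).2
  have hoka := oka_poly (y₀ := (0:E)) (ζ₁ := 0) hO (P := fun z k => if k = k₀ then W z else ρ k z)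
    (k₀ := k₀) (d := d) (by simpa using hmon) (by
      intro z k hk; simp only [hk, if_false]; exact hρdeg k z) (by
      intro k j
      by_cases hk : k = k₀
      · simp only [hk, if_true]; exact hWan j
      · simp only [hk, if_false]; exact hρan k j)
  let u : E × ℂ → κ → ℂ := fun q k => if k = k₀ then e q - 1 else - (e₀ k q * e q)
  have hu : ∀ k, AnalyticAt ℂ (fun q => u q k) 0 := by
    intro k
    by_cases hk : k = k₀
    · simp only [u, hk, if_true]; exact hean.fun_sub analyticAt_const
    · simp only [u, hk, if_false]
      exact ((he₀ k 0 (mem_ball_self (half_pos hR))).fun_mul hean).fun_neg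
  refine OkaAt.transform (M := fun q => 1 + vecMulVec (Pi.single k₀ 1) (u q))
    (N := fun q => 1 - vecMulVec (Pi.single k₀ 1) ((e q)⁻¹ • u q)) hoka ?_ ?_ ?_ ?_
  · intro i j
    simp only [Matrix.add_apply, vecMulVec_apply]
    exact analyticAt_const.fun_add (analyticAt_const.fun_mul (hu j))
  · intro i j
    simp only [Matrix.sub_apply, vecMulVec_apply, Pi.smul_apply, smul_eq_mul]
    exact analyticAt_const.fun_sub (analyticAt_const.fun_mul ((hean.fun_inv he0).fun_mul (hu j)))
  · filter_upwards [hean.continuousAt.eventually_ne he0] with q hq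
    have h1 : u q ⬝ᵥ Pi.single k₀ 1 = e q - 1 := by simp [u]
    rw [Matrix.add_mul, Matrix.mul_sub, Matrix.mul_sub, vecMulVec_mul_vecMulVec, h1]
    simp only [Matrix.one_mul, Matrix.mul_one]
    ext i j
    simp only [Matrix.add_apply, Matrix.sub_apply, vecMulVec_apply, Pi.smul_apply, smul_eq_mul]
    field_simp
    ring
  · filter_upwards [heW, hid] with q h1 h2
    rw [Matrix.mul_add, Matrix.mul_one, Matrix.mul_vecMulVec]
    ext i k
    simp only [Matrix.add_apply, vecMulVec_apply, Matrix.of_apply, mulVec_single_one]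
    by_cases hk : k = k₀
    · simp only [hk, if_true, u, ← h1]
      simp [Matrix.col]
      ring
    · simp only [hk, if_false, u]
      have := h2 k
      simp [Matrix.col]
      rw [← h1] at this
      linear_combination -this
end

section
variable {E : Type*} [NormedAddCommGroup E] [NormedSpace ℂ E] [FiniteDimensional ℂ E]

lemma exists_split {v : E} (hv : v ≠ 0) : ∃ (E' : Submodule ℂ E) (φ : (E' × ℂ) ≃L[ℂ] E),
    φ (0, 1) = v ∧ Module.finrank ℂ E' + 1 = Module.finrank ℂ E := by
  obtain ⟨E', hE'⟩ := Submodule.exists_isCompl (ℂ ∙ v)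
  refine ⟨E', ?_⟩
  let φ₁ : (E' × (ℂ ∙ v)) ≃ₗ[ℂ] E := Submodule.prodEquivOfIsCompl E' (ℂ ∙ v) hE'.symm
  let φ₂ : (E' × ℂ) ≃ₗ[ℂ] (E' × (ℂ ∙ v)) :=
    (LinearEquiv.refl ℂ E').prodCongr (LinearEquiv.toSpanNonzeroSingleton ℂ E v hv)
  refine ⟨(φ₂.trans φ₁).toContinuousLinearEquiv, ?_, ?_⟩
  · simp [φ₁, φ₂]
  · rw [← (φ₂.trans φ₁).finrank_eq]; simp

lemma exists_direction {f : E → ℂ} {x : E} (hf : AnalyticAt ℂ f x) (h : ¬ ∀ᶠ z in 𝓝 x, f z = 0) :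
    ∃ v : E, ¬ ∀ᶠ t : ℂ in 𝓝 0, f (x + t • v) = 0 := by
  by_contra! hcon
  apply h
  obtain ⟨r, hr, hball⟩ := Metric.eventually_nhds_iff_ball.1 hf.eventually_analyticAt
  filter_upwards [ball_mem_nhds x hr] with z hz
  have han : AnalyticOnNhd ℂ (fun t : ℂ => f (x + t • (z - x))) ((fun t : ℂ => x + t • (z - x)) ⁻¹' ball x r) := by
    intro t ht
    exact AnalyticAt.fun_comp (g := f) (f := fun t : ℂ => x + t • (z - x)) (hball _ ht) (by fun_prop)
  have hpre : IsPreconnected ((fun t : ℂ => x + t • (z - x)) ⁻¹' ball x r) := by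
    have : Convex ℝ ((fun t : ℂ => x + t • (z - x)) ⁻¹' ball x r) := by
      intro a ha b hb s t hs ht hst
      have h1 := (convex_ball x r) ha hb hs ht hst
      simp only [mem_preimage] at h1 ⊢
      convert h1 using 1
      rw [smul_add, smul_add, add_add_add_comm, ← add_smul, hst, one_smul, add_smul, smul_assoc,
        smul_assoc]
    exact this.isPreconnected
  have := han.eqOn_zero_of_preconnected_of_eventuallyEq_zero hpre (z₀ := 0) (by simpa using hr)
    (hcon (z - x)) (x := 1) (by simpa using hz)
  simpa using this

/-- **Oka's coherence theorem.** -/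
theorem oka (n : ℕ) : ∀ (E : Type u) [NormedAddCommGroup E] [NormedSpace ℂ E] [FiniteDimensional ℂ E],
    Module.finrank ℂ E = n → ∀ (ι κ : Type) [Fintype ι] [Fintype κ] (s : E → Matrix ι κ ℂ) (x : E),
    AnM s x → OkaAt s x := by
  induction n with
  | zero =>
    intro E _ _ _ hE ι κ _ _ s x hs
    refine OkaAt.of_row (fun κ _ r hr => ?_) s hs
    classical
    have hsub : Subsingleton E := Module.finrank_zero_iff.1 hE
    by_cases h : ∃ k, r x () k ≠ 0
    · obtain ⟨k, hk⟩ := h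
      exact OkaAt.of_unit hr k hk
    · push Not at h
      refine OkaAt.of_zero (Eventually.of_forall fun z => ?_)
      ext i k
      rw [Subsingleton.elim z x]
      exact h k
  | succ n ih =>
    intro E _ _ _ hE ι κ _ _ s x hs
    refine OkaAt.of_row (fun κ _ r hr => ?_) s hs
    classical
    by_cases h : ∃ k, ¬ ∀ᶠ z in 𝓝 x, r z () k = 0
    · obtain ⟨k, hk⟩ := h
      by_cases hk0 : r x () k = 0
      swap
      · exact OkaAt.of_unit hr k hk0
      obtain ⟨v, hv⟩ := exists_direction (hr () k) hk
      have hv0 : v ≠ 0 := by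
        rintro rfl
        exact hv (by simp [hk0])
      obtain ⟨E', φ, hφ, hfr⟩ := exists_split hv0
      have h1 : OkaAt (fun q : E' × ℂ => r (x + φ q)) 0 := by
        refine oka_step (fun ι κ _ _ s hs => ih E' (by omega) ι κ s 0 hs) ?_ k ?_
        · refine AnM.comp (φ := fun q => x + φ q) (by simpa using hr) ?_
          exact analyticAt_const.fun_add (φ.toContinuousLinearMap.analyticAt 0)
        · have : ∀ t : ℂ, φ (0, t) = t • v := by
            intro t
            rw [← hφ, ← map_smul]; simp
          simpa only [this] using hv
      have h2 := OkaAt.comp (s := fun q : E' × ℂ => r (x + φ q)) (φ := fun z => φ.symm (z - x))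
        (ψ := fun q => x + φ q) (x := x) (by simpa using h1)
        (fun z => AnalyticAt.fun_comp (g := φ.symm) (f := fun z => z - x)
          (φ.symm.toContinuousLinearMap.analyticAt _) (by fun_prop))
        (fun q => analyticAt_const.fun_add (φ.toContinuousLinearMap.analyticAt q))
        (fun q => by simp) (fun z => by simp)
      simpa using h2
    · push Not at h
      refine OkaAt.of_zero ?_
      filter_upwards [eventually_all.2 h] with z hz
      ext i k
      exact hz k
end

/-! ### Elimination of a variable -/

section
variable {E : Type*} [NormedAddCommGroup E] [NormedSpace ℂ E] [FiniteDimensional ℂ E]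
variable {F : Type*} [NormedAddCommGroup F] [NormedSpace ℂ F] [FiniteDimensional ℂ F]

/-- Functions whose germ at `x` lies in the ideal generated by the germs of the members of `S`. -/
inductive GI (S : Set (E → ℂ)) (x : E) : (E → ℂ) → Prop
  | of {f : E → ℂ} : f ∈ S → GI S x f
  | zero : GI S x (fun _ => 0)
  | add {f g : E → ℂ} : GI S x f → GI S x g → GI S x (fun z => f z + g z)
  | mul {f g : E → ℂ} : AnalyticAt ℂ g x → GI S x f → GI S x (fun z => g z * f z)
  | congr {f g : E → ℂ} : GI S x f → f =ᶠ[𝓝 x] g → GI S x g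

lemma GI.trans {S T : Set (E → ℂ)} {x : E} (h : ∀ f ∈ T, GI S x f) {f : E → ℂ} (hf : GI T x f) :
    GI S x f := by
  induction hf with
  | of hf => exact h _ hf
  | zero => exact GI.zero
  | add _ _ h1 h2 => exact h1.add h2
  | mul hg _ h1 => exact h1.mul hg
  | congr _ he h1 => exact h1.congr he

lemma GI.comp {S : Set (E → ℂ)} {x : F} {φ : F → E} (hφ : AnalyticAt ℂ φ x) {f : E → ℂ}
    (hf : GI S (φ x) f) : GI ((fun g => g ∘ φ) '' S) x (f ∘ φ) := by
  induction hf with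
  | of hf => exact GI.of ⟨_, hf, rfl⟩
  | zero => exact GI.zero
  | add _ _ h1 h2 => exact h1.add h2
  | mul hg _ h1 => exact h1.mul (hg.comp hφ)
  | congr _ he h1 => exact h1.congr (hφ.continuousAt.tendsto.eventually he)

lemma GI.sum {S : Set (E → ℂ)} {x : E} {ι : Type*} (s : Finset ι) {f : ι → E → ℂ}
    (h : ∀ i ∈ s, GI S x (f i)) : GI S x (fun z => ∑ i ∈ s, f i z) := by
  classical
  induction s using Finset.induction_on with
  | empty => simpa using GI.zero
  | insert i s hi ih =>
    simp only [Finset.sum_insert hi]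
    exact (h i (by simp)).add (ih fun j hj => h j (by simp [hj]))

lemma GI.span {S : Set (E → ℂ)} {x : E} {f : E → ℂ} (hf : f ∈ Submodule.span ℂ S) : GI S x f := by
  induction hf using Submodule.span_induction with
  | mem f hf => exact GI.of hf
  | zero => exact GI.zero
  | add f g _ _ h1 h2 => exact h1.add h2
  | smul a f _ h => exact h.mul (g := fun _ => a) analyticAt_const

lemma monic_no_root {d : ℕ} {W : E → Polynomial ℂ} (hmon : ∀ z, (W z).Monic ∧ (W z).natDegree = d)
    (hWan : ∀ j, AnalyticAt ℂ (fun z => (W z).coeff j) 0) (hW0 : W 0 = Polynomial.X ^ d)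
    {r : ℝ} (hr : 0 < r) : ∀ᶠ z in 𝓝 0, ∀ ζ : ℂ, r ≤ ‖ζ‖ → (W z).eval ζ ≠ 0 := by
  have hc : ContinuousAt (fun z => ∑ j ∈ Finset.range d, ‖(W z).coeff j‖ / r ^ (d - j)) 0 :=
    tendsto_finsetSum _ fun j _ => (hWan j).continuousAt.norm.div_const _
  have h0 : ∑ j ∈ Finset.range d, ‖(W 0).coeff j‖ / r ^ (d - j) < 1 := by
    rw [Finset.sum_eq_zero]
    · exact one_pos
    · intro j hj
      rw [hW0, Polynomial.coeff_X_pow, if_neg (by have := Finset.mem_range.1 hj; omega)]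
      simp
  filter_upwards [hc.eventually_lt_const h0] with z hz ζ hζ hzero
  have hζ0 : 0 < ‖ζ‖ := hr.trans_le hζ
  rw [Polynomial.eval_eq_sum_range, (hmon z).2, Finset.sum_range_succ] at hzero
  have hlead : (W z).coeff d = 1 := by
    have := (hmon z).1
    rw [Polynomial.Monic, Polynomial.leadingCoeff, (hmon z).2] at this
    exact this
  rw [hlead, one_mul] at hzero
  have h1 : ‖ζ‖ ^ d ≤ ∑ j ∈ Finset.range d, ‖(W z).coeff j‖ * ‖ζ‖ ^ j := by
    have : ζ ^ d = - ∑ j ∈ Finset.range d, (W z).coeff j * ζ ^ j := by linear_combination hzero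
    rw [← norm_pow, this, norm_neg]
    refine (norm_sum_le _ _).trans (Finset.sum_le_sum fun j _ => ?_)
    rw [norm_mul, norm_pow]
  have h2 : ∑ j ∈ Finset.range d, ‖(W z).coeff j‖ * ‖ζ‖ ^ j ≤
      (∑ j ∈ Finset.range d, ‖(W z).coeff j‖ / r ^ (d - j)) * ‖ζ‖ ^ d := by
    rw [Finset.sum_mul]
    refine Finset.sum_le_sum fun j hj => ?_
    have hj' := Finset.mem_range.1 hj
    rw [div_mul_eq_mul_div, mul_div_assoc]
    refine mul_le_mul_of_nonneg_left ?_ (norm_nonneg _)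
    rw [le_div_iff₀ (by positivity)]
    calc ‖ζ‖ ^ j * r ^ (d - j) ≤ ‖ζ‖ ^ j * ‖ζ‖ ^ (d - j) := by gcongr
      _ = ‖ζ‖ ^ d := by rw [← pow_add]; congr 1; omega
  have h3 : 0 < ‖ζ‖ ^ d := by positivity
  nlinarith

lemma analyticAt_det {m : Type*} [Fintype m] [DecidableEq m] {A : E → Matrix m m ℂ} {x : E}
    (h : ∀ i j, AnalyticAt ℂ (fun z => A z i j) x) : AnalyticAt ℂ (fun z => (A z).det) x := by
  simp only [Matrix.det_apply']
  refine Finset.analyticAt_fun_sum _ fun σ _ => ?_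
  refine analyticAt_const.fun_mul ?_
  exact Finset.analyticAt_fun_prod _ fun i _ => h _ _

lemma analyticAt_adjugate {m : Type*} [Fintype m] [DecidableEq m] {A : E → Matrix m m ℂ} {x : E}
    (h : ∀ i j, AnalyticAt ℂ (fun z => A z i j) x) (i j : m) :
    AnalyticAt ℂ (fun z => (A z).adjugate i j) x := by
  simp only [Matrix.adjugate_apply]
  refine analyticAt_det fun k l => ?_
  simp only [Matrix.updateRow_apply]
  split_ifs
  · exact analyticAt_const
  · exact h _ _

/-- Elimination of one variable from a linear system of holomorphic functions containing a function
regular in the fibre variable: the norms `det` of multiplication modulo the Weierstrass polynomial. -/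
lemma elimination {R : ℝ} (hR : 0 < R) (S : Submodule ℂ (E × ℂ → ℂ))
    (hS : ∀ f ∈ S, AnalyticOnNhd ℂ f (ball 0 R)) {H : E × ℂ → ℂ} (hH : H ∈ S)
    (hH0 : ¬ ∀ᶠ ζ in 𝓝 (0:ℂ), H (0, ζ) = 0) :
    ∃ δ > 0, ∃ T : Set (E → ℂ), (∀ N ∈ T, AnalyticOnNhd ℂ N (ball 0 δ)) ∧
      (∀ N ∈ T, GI (S : Set (E × ℂ → ℂ)) 0 (fun q => N q.1)) ∧
      ∀ z ∈ ball (0:E) δ, (∀ N ∈ T, N z = 0) →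
        ∃ ζ, (z, ζ) ∈ ball (0 : E × ℂ) R ∧ ∀ f ∈ S, f (z, ζ) = 0 := by
  obtain ⟨d, W, e, hmon, hWan, hW0, hean, he0, heW⟩ :=
    weierstrass_preparation (f := H) (hS H hH 0 (mem_ball_self hR)) hH0
  have hWG : GI (S : Set (E × ℂ → ℂ)) 0 (fun q => (W q.1).eval q.2) := ((GI.of hH).mul hean).congr heW
  rcases Nat.eq_zero_or_pos d with hd | hd
  · refine ⟨1, one_pos, {fun _ => 1}, ?_, ?_, ?_⟩
    · rintro N rfl z _; exact analyticAt_const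
    · rintro N rfl
      refine hWG.congr (Eventually.of_forall fun q => ?_)
      have : W q.1 = 1 := (hmon q.1).1.natDegree_eq_zero.1 ((hmon q.1).2.trans hd)
      simp [this]
    · intro z _ h
      exact absurd (h _ rfl) one_ne_zero
  have hWan' : ∀ᶠ z in 𝓝 (0:E), ∀ j, AnalyticAt ℂ (fun z => (W z).coeff j) z := by
    have : ∀ᶠ z in 𝓝 (0:E), ∀ j ∈ Finset.range (d+1), AnalyticAt ℂ (fun z => (W z).coeff j) z := by
      rw [Filter.eventually_all_finset]
      exact fun j _ => (hWan j).eventually_analyticAt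
    filter_upwards [this] with z hz j
    by_cases hj : j < d + 1
    · exact hz j (Finset.mem_range.2 hj)
    · have : (fun z => (W z).coeff j) = fun _ => 0 := by
        ext z'
        exact Polynomial.coeff_eq_zero_of_natDegree_lt (by rw [(hmon z').2]; omega)
      rw [this]; exact analyticAt_const
  obtain ⟨r, hr, hrR⟩ := exists_between hR
  obtain ⟨δ, hδ, hδball⟩ := Metric.eventually_nhds_iff_ball.1
    ((hWan'.and (monic_no_root hmon hWan hW0 hr)).and (ball_mem_nhds (0:E) hR))
  have hSan : ∀ f ∈ S, ∀ z ∈ ball (0:E) δ, ∀ ζ ∈ closedBall (0:ℂ) r, AnalyticAt ℂ f (z, ζ) := by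
    intro f hf z hz ζ hζ
    refine hS f hf _ ?_
    rw [← Prod.mk_zero_zero, ← ball_prod_same]
    exact ⟨(hδball z hz).2, closedBall_subset_ball hrR hζ⟩
  have hdiv : ∀ f : S, ∀ j : Fin d, _ := fun f j =>
    weierstrass_division_on (V := ball (0:E) δ) (W := W) (d := d) (ζ₀ := 0) (r := r)
      (c := fun q => q.2 ^ (j:ℕ) * f.1 q) isOpen_ball hr hmon (fun {z} hz =>
      ⟨(hδball z hz).1.1, fun ζ hζ => AnalyticAt.fun_mul (by fun_prop) (hSan f.1 f.2 z hz ζ hζ),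
        fun ζ hζ => (hδball z hz).1.2 ζ (by rw [mem_sphere_zero_iff_norm.1 hζ])⟩)
  choose q ρ hρan hρdeg hdivz using hdiv
  let M : S → E → Matrix (Fin d) (Fin d) ℂ := fun f z => Matrix.of fun i j => (ρ f j z).coeff i
  have hM : ∀ f, ∀ z ∈ ball (0:E) δ, ∀ i j, AnalyticAt ℂ (fun z => M f z i j) z :=
    fun f z hz i j => hρan f j i z hz
  have hρM : ∀ f j z ζ, (ρ f j z).eval ζ = ∑ i, M f z i j * ζ ^ (i:ℕ) := by
    intro f j z ζ
    have : (ρ f j z).natDegree < d := by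
      by_cases h0 : ρ f j z = 0
      · simpa [h0] using hd
      · have := hρdeg f j z
        rw [Polynomial.degree_eq_natDegree h0] at this
        exact_mod_cast this
    rw [Polynomial.eval_eq_sum_range' this, Finset.sum_fin_eq_sum_range]
    exact Finset.sum_congr rfl fun i hi => by rw [dif_pos (Finset.mem_range.1 hi)]; rfl
  have hid : ∀ f : S, ∀ j : Fin d, ∀ z ∈ ball (0:E) δ, ∀ ζ ∈ ball (0:ℂ) r,
      ζ ^ (j:ℕ) * f.1 (z, ζ) = q f j (z, ζ) * (W z).eval ζ + ∑ i, M f z i j * ζ ^ (i:ℕ) := by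
    intro f j z hz ζ hζ
    rw [← hρM]
    exact ((hdivz f j z hz).1 ζ hζ).2
  refine ⟨δ, hδ, range fun f : S => fun z => (M f z).det, ?_, ?_, ?_⟩
  · rintro _ ⟨f, rfl⟩ z hz
    exact analyticAt_det (hM f z hz)
  · rintro _ ⟨f, rfl⟩
    let k : Fin d := ⟨0, hd⟩
    have hz0 := mem_ball_self (x := (0:E)) hδ
    have hadj : ∀ j, AnalyticAt ℂ (fun p : E × ℂ => (M f p.1).adjugate j k) 0 := fun j =>
      AnalyticAt.fun_comp (g := fun z => (M f z).adjugate j k) (f := fun p : E × ℂ => p.1)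
        (analyticAt_adjugate (hM f 0 hz0) j k) (by fun_prop)
    have h1 : GI (S : Set (E × ℂ → ℂ)) 0 (fun p => (∑ j : Fin d, (M f p.1).adjugate j k * p.2 ^ (j:ℕ)) * f.1 p +
        (-∑ j : Fin d, (M f p.1).adjugate j k * q f j p) * (W p.1).eval p.2) := by
      refine ((GI.of f.2).mul ?_).add (hWG.mul ?_)
      · exact Finset.analyticAt_fun_sum _ fun j _ => (hadj j).fun_mul (by fun_prop)
      · refine (Finset.analyticAt_fun_sum _ fun j _ => (hadj j).fun_mul ?_).fun_neg
        exact ((hdivz f j 0 hz0).1 0 (mem_ball_self hr)).1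
    refine h1.congr ?_
    rw [← Prod.mk_zero_zero, nhds_prod_eq]
    filter_upwards [prod_mem_prod (ball_mem_nhds (0:E) hδ) (ball_mem_nhds (0:ℂ) hr)] with p hp
    have h2 : ∀ i, ∑ j, M f p.1 i j * (M f p.1).adjugate j k = if i = k then (M f p.1).det else 0 := by
      intro i
      have := congrFun (congrFun (Matrix.mul_adjugate (M f p.1)) i) k
      rw [Matrix.mul_apply] at this
      rw [this, Matrix.smul_apply, Matrix.one_apply]
      split_ifs <;> simp
    have h3 : ∀ j : Fin d, (M f p.1).adjugate j k * (p.2 ^ (j:ℕ) * f.1 p - q f j p * (W p.1).eval p.2) =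
        ∑ i, (M f p.1 i j * (M f p.1).adjugate j k) * p.2 ^ (i:ℕ) := by
      intro j
      rw [hid f j p.1 hp.1 p.2 hp.2, add_sub_cancel_left, Finset.mul_sum]
      exact Finset.sum_congr rfl fun i _ => by ring
    have h4 : ∑ j : Fin d, (M f p.1).adjugate j k * (p.2 ^ (j:ℕ) * f.1 p - q f j p * (W p.1).eval p.2) =
        (M f p.1).det := by
      rw [Finset.sum_congr rfl fun j _ => h3 j, Finset.sum_comm]
      simp only [← Finset.sum_mul, h2]
      simp [k]
    rw [← h4]
    simp only [mul_sub, Finset.sum_sub_distrib, Finset.sum_mul, neg_mul]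
    rw [sub_eq_add_neg]
    congr 1
    · exact Finset.sum_congr rfl fun j _ => by ring
    · congr 1
      exact Finset.sum_congr rfl fun j _ => by ring
  · intro z hz hN
    have hWz := (hδball z hz).1.2
    -- every member of `S` vanishes at one of the finitely many roots
    have hvan : ∀ f : S, ∃ ζ ∈ (W z).roots.toFinset, f.1 (z, ζ) = 0 := by
      intro f
      by_contra! hcon
      obtain ⟨v, hv0, hv⟩ := Matrix.exists_mulVec_eq_zero_iff.2 (hN _ ⟨f, rfl⟩)
      let b : Polynomial ℂ := ∑ j : Fin d, Polynomial.C (v j) * Polynomial.X ^ (j:ℕ)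
      have hb : ∀ ζ ∈ ball (0:ℂ) r, b.eval ζ * f.1 (z, ζ) = (∑ j, v j * q f j (z, ζ)) * (W z).eval ζ := by
        intro ζ hζ
        simp only [b, Polynomial.eval_finsetSum, Polynomial.eval_mul, Polynomial.eval_C,
          Polynomial.eval_pow, Polynomial.eval_X]
        rw [Finset.sum_mul]
        have h1 : ∀ j : Fin d, v j * ζ ^ (j:ℕ) * f.1 (z, ζ) = v j * q f j (z, ζ) * (W z).eval ζ +
            ∑ i, M f z i j * v j * ζ ^ (i:ℕ) := by
          intro j
          rw [mul_assoc, hid f j z hz ζ hζ, mul_add, Finset.mul_sum]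
          congr 1
          · ring
          · exact Finset.sum_congr rfl fun i _ => by ring
        rw [Finset.sum_congr rfl fun j _ => h1 j, Finset.sum_add_distrib, ← Finset.sum_mul,
          Finset.sum_comm]
        simp only [← Finset.sum_mul]
        have h2 : ∀ i, ∑ j, M f z i j * v j = 0 := fun i => congrFun hv i
        simp [h2]
      have hbdeg : b.degree < (W z).degree := by
        rw [Polynomial.degree_eq_natDegree (hmon z).1.ne_zero, (hmon z).2, ← Polynomial.mem_degreeLT]
        refine Submodule.sum_mem _ fun j hj => ?_
        rw [Polynomial.mem_degreeLT]
        refine (Polynomial.degree_C_mul_X_pow_le _ _).trans_lt ?_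
        exact_mod_cast j.2
      have hb0 : b = 0 := by
        refine poly_eq_zero_of_local_dvd d (W z) b (hmon z).1.ne_zero (hmon z).2 hbdeg fun ζ => ?_
        by_cases hζW : (W z).eval ζ = 0
        · have hζr : ζ ∈ ball (0:ℂ) r := by
            by_contra hζ
            rw [mem_ball_zero_iff, not_lt] at hζ
            exact hWz ζ hζ hζW
          have hf0 := hcon ζ (by simpa [(hmon z).1.ne_zero] using hζW)
          have hfc : ContinuousAt (fun η => f.1 (z, η)) ζ :=
            (fib_differentiableAt (hSan f.1 f.2 z hz ζ (ball_subset_closedBall hζr))).continuousAt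
          refine ⟨fun η => (∑ j, v j * q f j (z, η)) / f.1 (z, η), ?_, ?_⟩
          · refine ContinuousAt.div ?_ hfc hf0
            refine tendsto_finsetSum _ fun j _ => tendsto_const_nhds.mul ?_
            exact (fib_differentiableAt ((hdivz f j z hz).1 ζ hζr).1).continuousAt
          · filter_upwards [hfc.eventually_ne hf0, isOpen_ball.mem_nhds hζr] with η h1 h2
            have := hb η h2
            field_simp
            linear_combination this
        · refine ⟨fun η => b.eval η / (W z).eval η,
            (b.continuous.continuousAt).div ((W z).continuous.continuousAt) hζW, ?_⟩
          filter_upwards [(W z).continuous.continuousAt.eventually_ne hζW] with η hη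
          field_simp
      apply hv0
      ext j
      have := congrArg (fun p => Polynomial.coeff p j) hb0
      simp only [b, Polynomial.finsetSum_coeff, Polynomial.coeff_C_mul, Polynomial.coeff_X_pow,
        Polynomial.coeff_zero] at this
      rw [Finset.sum_eq_single j] at this
      · simpa using this
      · intro i _ hij
        rw [if_neg (fun h => hij (Fin.ext h.symm)), mul_zero]
      · simp
    -- a vector space is not a finite union of proper subspaces
    let L : ℂ → Submodule ℂ S := fun ζ =>
      { carrier := {f | f.1 (z, ζ) = 0}
        add_mem' := fun {a b} ha hb => by
          simp only [mem_ofPred_eq] at ha hb ⊢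
          simp [ha, hb]
        zero_mem' := by simp
        smul_mem' := fun c a ha => by
          simp only [mem_ofPred_eq] at ha ⊢
          simp [ha] }
    have hex : ∃ ζ ∈ (W z).roots.toFinset, L ζ = ⊤ := by
      classical
      by_contra! hcon
      refine Subspace.biUnion_ne_univ_of_top_notMem (k := ℂ) (E := S)
        (s := (W z).roots.toFinset.image L) ?_ ?_
      · intro h
        obtain ⟨ζ, hζ, h⟩ := Finset.mem_image.1 h
        exact hcon ζ hζ h
      · rw [eq_univ_iff_forall]
        intro f
        obtain ⟨ζ, hζ, h⟩ := hvan f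
        simp only [mem_iUnion]
        exact ⟨L ζ, Finset.mem_image_of_mem L hζ, h⟩
    obtain ⟨ζ, hζ, hL⟩ := hex
    refine ⟨ζ, ?_, fun f hf => ?_⟩
    · have h0 : (W z).eval ζ = 0 := by simpa [(hmon z).1.ne_zero] using hζ
      have hζr : ‖ζ‖ < r := by
        by_contra h
        exact hWz ζ (not_lt.1 h) h0
      rw [← Prod.mk_zero_zero, ← ball_prod_same]
      exact ⟨(hδball z hz).2, by rw [mem_ball_zero_iff]; linarith⟩
    · have : (⟨f, hf⟩ : S) ∈ L ζ := by rw [hL]; trivial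
      exact this
end

/-! ### Rückert's Nullstellensatz -/

section
variable {E : Type*} [NormedAddCommGroup E] [NormedSpace ℂ E] [FiniteDimensional ℂ E]

lemma GI.one_of_ne_zero {S : Set (E → ℂ)} {x : E} {F : E → ℂ} (hF : F ∈ S) (ha : AnalyticAt ℂ F x)
    (h0 : F x ≠ 0) : GI S x (fun _ => 1) := by
  refine ((GI.of hF).mul (ha.fun_inv h0)).congr ?_
  filter_upwards [ha.continuousAt.eventually_ne h0] with z hz
  exact inv_mul_cancel₀ hz

/-- The case of the Nullstellensatz where some member of the family does not vanish identically on
the hyperplane `{q.2 = 0}`: one variable is eliminated. -/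
lemma ruckert_key {E : Type u} [NormedAddCommGroup E] [NormedSpace ℂ E] [FiniteDimensional ℂ E]
    (IH : ∀ (E' : Type u) [NormedAddCommGroup E'] [NormedSpace ℂ E'] [FiniteDimensional ℂ E'],
      Module.finrank ℂ E' + 1 = Module.finrank ℂ E → ∀ (R : ℝ), 0 < R → ∀ 𝓕 : Set (E' × ℂ → ℂ),
      (∀ F ∈ 𝓕, AnalyticOnNhd ℂ F (ball 0 R)) →
      (∀ q ∈ ball (0 : E' × ℂ) R, (∀ F ∈ 𝓕, F q = 0) → q.2 = 0) → ∃ k : ℕ, GI 𝓕 0 (fun q => q.2 ^ k))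
    {R : ℝ} (hR : 0 < R) (𝓕 : Set (E × ℂ → ℂ))
    (han : ∀ F ∈ 𝓕, AnalyticOnNhd ℂ F (ball 0 R))
    (hz : ∀ q ∈ ball (0 : E × ℂ) R, (∀ F ∈ 𝓕, F q = 0) → q.2 = 0)
    {F : E × ℂ → ℂ} (hF : F ∈ 𝓕) (hF0 : ¬ ∀ᶠ z in 𝓝 (0:E), F (z, 0) = 0) :
    ∃ k : ℕ, GI 𝓕 0 (fun q => q.2 ^ k) := by
  have hFan := han F hF 0 (mem_ball_self hR)
  by_cases hF00 : F 0 = 0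
  swap
  · exact ⟨0, by simpa using GI.one_of_ne_zero hF hFan hF00⟩
  have hf : AnalyticAt ℂ (fun z : E => F (z, 0)) 0 :=
    AnalyticAt.fun_comp (g := F) (f := fun z : E => (z, (0:ℂ))) hFan (by fun_prop)
  obtain ⟨v, hv⟩ := exists_direction hf hF0
  have hv0 : v ≠ 0 := by
    rintro rfl
    apply hv
    exact Eventually.of_forall fun _ => by simp only [smul_zero, add_zero]; exact hF00
  obtain ⟨E', φ, hφ, hdim⟩ := exists_split hv0
  let ψ : ((E' × ℂ) × ℂ) → E × ℂ := fun p => (φ (p.1.1, p.2), p.1.2)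
  let θ : E × ℂ → ((E' × ℂ) × ℂ) := fun q => (((φ.symm q.1).1, q.2), (φ.symm q.1).2)
  have hψan : ∀ p, AnalyticAt ℂ ψ p := fun p =>
    ((φ.toContinuousLinearMap.analyticAt _).fun_comp (f := fun p : (E' × ℂ) × ℂ => (p.1.1, p.2))
      (by fun_prop)).prod (by fun_prop)
  have hs : ∀ q, AnalyticAt ℂ (fun q : E × ℂ => φ.symm q.1) q := fun q =>
    (φ.symm.toContinuousLinearMap.analyticAt _).fun_comp (f := fun p : E × ℂ => p.1) (by fun_prop)
  have hθan : ∀ q, AnalyticAt ℂ θ q := fun q =>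
    (((analyticAt_fst.fun_comp (f := fun q : E × ℂ => φ.symm q.1) (hs q))).prod
      (by fun_prop)).prod (analyticAt_snd.fun_comp (f := fun q : E × ℂ => φ.symm q.1) (hs q))
  have hψθ : ∀ q, ψ (θ q) = q := fun q => by simp [ψ, θ]
  have hψ0 : ψ 0 = 0 := by
    have : φ ((0 : E'), (0:ℂ)) = 0 := by rw [Prod.mk_zero_zero, map_zero]
    ext <;> simp [ψ, this]
  have hθ0 : θ 0 = 0 := by ext <;> simp [θ]
  obtain ⟨R', hR', hball⟩ := Metric.mem_nhds_iff.1 ((hψan 0).continuousAt.preimage_mem_nhds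
    (by rw [hψ0]; exact ball_mem_nhds _ hR))
  let 𝓢 : Set ((E' × ℂ) × ℂ → ℂ) := (fun g => g ∘ ψ) '' 𝓕
  have hS : ∀ f ∈ Submodule.span ℂ 𝓢, AnalyticOnNhd ℂ f (ball 0 R') := by
    intro f hf p hp
    induction hf using Submodule.span_induction with
    | mem f hf =>
      obtain ⟨g, hg, rfl⟩ := hf
      exact (han g hg _ (hball hp)).comp (hψan p)
    | zero => exact analyticAt_const
    | add f g _ _ h1 h2 => exact h1.add h2
    | smul a f _ h => exact h.const_smul
  obtain ⟨δ, hδ, T, hTan, hTGI, hTz⟩ := elimination hR' (Submodule.span ℂ 𝓢) hS (H := F ∘ ψ)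
    (Submodule.subset_span ⟨F, hF, rfl⟩) (by
      intro h
      apply hv
      filter_upwards [h] with t ht
      have h2 : φ ((0 : E'), t) = t • v := by
        rw [← hφ, ← map_smul]; simp
      have : ψ (0, t) = (t • v, 0) := by simp [ψ, h2]
      rw [Function.comp_apply, this] at ht
      simpa using ht)
  obtain ⟨k, hk⟩ := IH E' hdim δ hδ T hTan (by
    intro z hzb hN
    obtain ⟨ζ, hζ, h⟩ := hTz z hzb hN
    exact hz (ψ (z, ζ)) (hball hζ) fun G hG => h (G ∘ ψ) (Submodule.subset_span ⟨G, hG, rfl⟩))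
  refine ⟨k, ?_⟩
  have h1 := GI.comp (x := (0 : (E' × ℂ) × ℂ)) (φ := Prod.fst) analyticAt_fst hk
  have h2 : GI (Submodule.span ℂ 𝓢 : Set ((E' × ℂ) × ℂ → ℂ)) 0 (fun q => q.1.2 ^ k) := GI.trans (by
    rintro _ ⟨N, hN, rfl⟩
    exact hTGI N hN) h1
  have h3 : GI 𝓢 0 (fun q => q.1.2 ^ k) := GI.trans (fun f hf => GI.span hf) h2
  rw [← hθ0] at h3
  have h4 := GI.comp (hθan 0) h3
  refine GI.trans ?_ h4
  rintro _ ⟨_, ⟨g, hg, rfl⟩, rfl⟩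
  refine (GI.of hg).congr (Eventually.of_forall fun q => ?_)
  simp [hψθ]

lemma GI.mul_of_div {𝓕 𝓖 : Set (E × ℂ → ℂ)} (h : ∀ G ∈ 𝓖, GI 𝓕 0 (fun q => q.2 * G q))
    {f : E × ℂ → ℂ} (hf : GI 𝓖 0 f) : GI 𝓕 0 (fun q => q.2 * f q) := by
  induction hf with
  | of hf => exact h _ hf
  | zero => simpa using GI.zero
  | add _ _ h1 h2 => exact (h1.add h2).congr (Eventually.of_forall fun q => by ring)
  | mul hg _ h1 => exact (h1.mul hg).congr (Eventually.of_forall fun q => by ring)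
  | congr _ he h1 => exact h1.congr (he.mono fun q hq => by simp only [hq])

/-- The Nullstellensatz for the coordinate `q.2`, by induction on the order `N` of vanishing on the
last axis: if the whole family vanishes on `{q.2 = 0}`, its members are divided by `q.2`. -/
lemma ruckert_div {R : ℝ} (hR : 0 < R)
    (key : ∀ 𝓕 : Set (E × ℂ → ℂ), (∀ F ∈ 𝓕, AnalyticOnNhd ℂ F (ball 0 R)) →
      (∀ q ∈ ball (0 : E × ℂ) R, (∀ F ∈ 𝓕, F q = 0) → q.2 = 0) →
      ∀ F ∈ 𝓕, (¬ ∀ᶠ z in 𝓝 (0:E), F (z, 0) = 0) → ∃ k : ℕ, GI 𝓕 0 (fun q => q.2 ^ k)) (N : ℕ) :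
    ∀ 𝓕 : Set (E × ℂ → ℂ), (∀ F ∈ 𝓕, AnalyticOnNhd ℂ F (ball 0 R)) →
      (∀ q ∈ ball (0 : E × ℂ) R, (∀ F ∈ 𝓕, F q = 0) → q.2 = 0) →
      ∀ F ∈ 𝓕, ∀ g : ℂ → ℂ, ContinuousAt g 0 → g 0 ≠ 0 → (∀ᶠ t in 𝓝[≠] 0, F (0, t) = t ^ N * g t) →
      ∃ k : ℕ, GI 𝓕 0 (fun q => q.2 ^ k) := by
  induction N with
  | zero =>
    intro 𝓕 han hz F hF g hg hg0 hFg
    refine key 𝓕 han hz F hF fun h => ?_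
    have h1 : Tendsto (fun t : ℂ => F (0, t)) (𝓝[≠] 0) (𝓝 (F (0, 0))) :=
      ((fib_differentiableAt (z := (0:E)) (ζ := (0:ℂ))
        (han F hF 0 (mem_ball_self hR))).continuousAt.tendsto).mono_left nhdsWithin_le_nhds
    have h2 : Tendsto (fun t : ℂ => F (0, t)) (𝓝[≠] 0) (𝓝 (g 0)) :=
      (hg.tendsto.mono_left nhdsWithin_le_nhds).congr' (by filter_upwards [hFg] with t ht; simp [ht])
    exact hg0 ((tendsto_nhds_unique h2 h1).trans h.self_of_nhds)
  | succ N ih =>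
    intro 𝓕 han hz F hF g hg hg0 hFg
    by_cases hkey : ∃ F ∈ 𝓕, ¬ ∀ᶠ z in 𝓝 (0:E), F (z, 0) = 0
    · obtain ⟨F', hF', h⟩ := hkey
      exact key 𝓕 han hz F' hF' h
    push Not at hkey
    have hb : ∀ p : E × ℂ, p ∈ ball (0 : E × ℂ) R ↔ p.1 ∈ ball (0:E) R ∧ p.2 ∈ ball (0:ℂ) R := by
      intro p
      rw [← Prod.mk_zero_zero, ← ball_prod_same]; rfl
    have hvan : ∀ F ∈ 𝓕, ∀ z ∈ ball (0:E) R, F (z, 0) = 0 := by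
      intro F hF z hz
      have : AnalyticOnNhd ℂ (fun z : E => F (z, 0)) (ball 0 R) := fun z hz =>
        AnalyticAt.fun_comp (g := F) (f := fun z : E => (z, (0:ℂ)))
          (han F hF _ ((hb _).2 ⟨hz, mem_ball_self hR⟩)) (by fun_prop)
      exact this.eqOn_zero_of_preconnected_of_eventuallyEq_zero (convex_ball _ _).isPreconnected
        (mem_ball_self hR) (hkey F hF) hz
    let dv : (E × ℂ → ℂ) → E × ℂ → ℂ := fun F p => dslope (fun η => F (p.1, η)) 0 p.2
    have hdv : ∀ F ∈ 𝓕, ∀ q ∈ ball (0 : E × ℂ) R, q.2 * dv F q = F q := by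
      intro F hF q hq
      have := sub_smul_dslope (fun η => F (q.1, η)) 0 q.2
      rw [hvan F hF q.1 ((hb q).1 hq).1] at this
      simpa using this
    have hdvan : ∀ F ∈ 𝓕, AnalyticOnNhd ℂ (dv F) (ball 0 R) := fun F hF q hq =>
      analyticAt_dslope (g := F) (z := q.1) (w := 0) (ζ := q.2)
        (han F hF _ ((hb _).2 ⟨((hb q).1 hq).1, mem_ball_self hR⟩)) (han F hF q hq)
    obtain ⟨k, hk⟩ := ih (dv '' 𝓕) (by rintro _ ⟨F, hF, rfl⟩; exact hdvan F hF)
      (fun q hq h => hz q hq fun F hF => by rw [← hdv F hF q hq, h _ ⟨F, hF, rfl⟩, mul_zero])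
      (dv F) ⟨F, hF, rfl⟩ g hg hg0 (by
        filter_upwards [hFg, self_mem_nhdsWithin,
          mem_nhdsWithin_of_mem_nhds (ball_mem_nhds (0:ℂ) hR)] with t ht ht0 htb
        have h1 := hdv F hF (0, t) ((hb _).2 ⟨mem_ball_self hR, htb⟩)
        rw [ht] at h1
        refine mul_left_cancel₀ (show t ≠ 0 from ht0) ?_
        simp only at h1
        rw [h1]; ring)
    refine ⟨k + 1, (GI.mul_of_div ?_ hk).congr (Eventually.of_forall fun q => by ring)⟩
    rintro _ ⟨F, hF, rfl⟩
    refine (GI.of hF).congr ?_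
    filter_upwards [ball_mem_nhds _ hR] with q hq
    exact (hdv F hF q hq).symm

/-- The inductive step of the Nullstellensatz for the coordinate function `q.2`. -/
lemma ruckert_step {E : Type u} [NormedAddCommGroup E] [NormedSpace ℂ E] [FiniteDimensional ℂ E]
    (IH : ∀ (E' : Type u) [NormedAddCommGroup E'] [NormedSpace ℂ E'] [FiniteDimensional ℂ E'],
      Module.finrank ℂ E' + 1 = Module.finrank ℂ E → ∀ (R : ℝ), 0 < R → ∀ 𝓕 : Set (E' × ℂ → ℂ),
      (∀ F ∈ 𝓕, AnalyticOnNhd ℂ F (ball 0 R)) →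
      (∀ q ∈ ball (0 : E' × ℂ) R, (∀ F ∈ 𝓕, F q = 0) → q.2 = 0) → ∃ k : ℕ, GI 𝓕 0 (fun q => q.2 ^ k))
    {R : ℝ} (hR : 0 < R) (𝓕 : Set (E × ℂ → ℂ))
    (han : ∀ F ∈ 𝓕, AnalyticOnNhd ℂ F (ball 0 R))
    (hz : ∀ q ∈ ball (0 : E × ℂ) R, (∀ F ∈ 𝓕, F q = 0) → q.2 = 0) :
    ∃ k : ℕ, GI 𝓕 0 (fun q => q.2 ^ k) := by
  have hb : ∀ t ∈ ball (0:ℂ) R, ((0:E), t) ∈ ball (0 : E × ℂ) R := by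
    intro t ht
    rw [← Prod.mk_zero_zero, ← ball_prod_same]
    exact ⟨mem_ball_self hR, ht⟩
  have hfan : ∀ F ∈ 𝓕, AnalyticOnNhd ℂ (fun t : ℂ => F (0, t)) (ball 0 R) := fun F hF t ht =>
    AnalyticAt.fun_comp (g := F) (f := fun t : ℂ => ((0:E), t)) (han F hF _ (hb t ht)) (by fun_prop)
  have hex : ∃ F ∈ 𝓕, ¬ ∀ᶠ t in 𝓝 (0:ℂ), F (0, t) = 0 := by
    by_contra! h
    have hmem : ((R / 2 : ℝ) : ℂ) ∈ ball (0:ℂ) R := by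
      rw [mem_ball_zero_iff, Complex.norm_real, Real.norm_of_nonneg (by positivity)]; linarith
    have : ((R / 2 : ℝ) : ℂ) = 0 := hz (0, ((R / 2 : ℝ) : ℂ)) (hb _ hmem) fun F hF =>
      (hfan F hF).eqOn_zero_of_preconnected_of_eventuallyEq_zero (convex_ball _ _).isPreconnected
        (mem_ball_self hR) (h F hF) hmem
    have h2 : R / 2 = 0 := by exact_mod_cast this
    linarith
  obtain ⟨F, hF, hF0⟩ := hex
  obtain ⟨N, g, hg, hg0, hFg⟩ :=
    (hfan F hF 0 (mem_ball_self hR)).exists_eventuallyEq_pow_smul_nonzero_iff.2 hF0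
  refine ruckert_div hR (fun 𝓕 h1 h2 F hF h => ruckert_key IH hR 𝓕 h1 h2 hF h) N 𝓕 han hz F hF g
    hg.continuousAt hg0 ?_
  filter_upwards [mem_nhdsWithin_of_mem_nhds hFg] with t ht
  simpa using ht

/-- The Nullstellensatz for the coordinate function `q.2` on `E × ℂ`. The general case reduces to it
by passing to the graph of `f`. -/
lemma ruckert_coord (n : ℕ) : ∀ (E : Type u) [NormedAddCommGroup E] [NormedSpace ℂ E]
    [FiniteDimensional ℂ E], Module.finrank ℂ E = n → ∀ (R : ℝ), 0 < R → ∀ 𝓕 : Set (E × ℂ → ℂ),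
      (∀ F ∈ 𝓕, AnalyticOnNhd ℂ F (ball 0 R)) →
      (∀ q ∈ ball (0 : E × ℂ) R, (∀ F ∈ 𝓕, F q = 0) → q.2 = 0) → ∃ k : ℕ, GI 𝓕 0 (fun q => q.2 ^ k) := by
  induction n with
  | zero =>
    intro E _ _ _ hE R hR 𝓕 han hz
    exact ruckert_step (fun E' _ _ _ hd => by omega) hR 𝓕 han hz
  | succ n ih =>
    intro E _ _ _ hE R hR 𝓕 han hz
    exact ruckert_step (fun E' _ _ _ hd => ih E' (by omega)) hR 𝓕 han hz

/-- Rückert's Nullstellensatz for an arbitrary family of holomorphic functions. -/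
lemma ruckert {E : Type u} [NormedAddCommGroup E] [NormedSpace ℂ E] [FiniteDimensional ℂ E]
    {U : Set E} (hU : IsOpen U) {x : E} (hx : x ∈ U) {𝓕 : Set (E → ℂ)}
    (han : ∀ F ∈ 𝓕, AnalyticOnNhd ℂ F U) {f : E → ℂ} (hf : AnalyticOnNhd ℂ f U)
    (hz : ∀ z ∈ U, (∀ F ∈ 𝓕, F z = 0) → f z = 0) : ∃ k : ℕ, GI 𝓕 x (fun z => f z ^ k) := by
  by_cases hfx : f x = 0
  swap
  · have : ∃ F ∈ 𝓕, F x ≠ 0 := by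
      by_contra! h
      exact hfx (hz x hx h)
    obtain ⟨F, hF, h⟩ := this
    exact ⟨0, by simpa using GI.one_of_ne_zero hF (han F hF x hx) h⟩
  obtain ⟨R, hR, hball⟩ := Metric.isOpen_iff.1 hU x hx
  have hmem : ∀ q ∈ ball (0 : E × ℂ) R, x + q.1 ∈ U := by
    intro q hq
    rw [← Prod.mk_zero_zero, ← ball_prod_same] at hq
    refine hball ?_
    simpa using hq.1
  have htr : ∀ (F : E → ℂ), AnalyticOnNhd ℂ F U → AnalyticOnNhd ℂ (fun q : E × ℂ => F (x + q.1)) (ball 0 R) :=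
    fun F hF q hq => AnalyticAt.fun_comp (g := F) (f := fun q : E × ℂ => x + q.1)
      (hF _ (hmem q hq)) (by fun_prop)
  obtain ⟨k, hk⟩ := ruckert_coord _ E rfl R hR
    ((fun F (q : E × ℂ) => F (x + q.1)) '' 𝓕 ∪ {fun q => q.2 - f (x + q.1)})
    (by
      rintro _ (⟨F, hF, rfl⟩ | rfl)
      · exact htr F (han F hF)
      · exact fun q hq => analyticAt_snd.fun_sub (htr f hf q hq))
    (by
      intro q hq h
      have h1 := h _ (Or.inr rfl)
      rw [hz (x + q.1) (hmem q hq) fun F hF => h _ (Or.inl ⟨F, hF, rfl⟩), sub_zero] at h1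
      exact h1)
  refine ⟨k, ?_⟩
  have hγ : AnalyticAt ℂ (fun z => (z - x, f z)) x := (by fun_prop : AnalyticAt ℂ (fun z => z - x) x).prod (hf x hx)
  have h0 : (fun z => (z - x, f z)) x = (0 : E × ℂ) := by simp [hfx]
  rw [← h0] at hk
  refine GI.trans ?_ (GI.comp hγ hk)
  rintro _ ⟨_, ⟨F, hF, rfl⟩ | rfl, rfl⟩
  · exact (GI.of hF).congr (Eventually.of_forall fun z => by simp)
  · exact GI.zero.congr (Eventually.of_forall fun z => by simp)

lemma GI.exists_sum {S : Set (E → ℂ)} {x : E} {f : E → ℂ} (hf : GI S x f) :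
    ∃ (t : Finset (E → ℂ)) (g : (E → ℂ) → E → ℂ), (∀ F ∈ t, F ∈ S) ∧ (∀ F, AnalyticAt ℂ (g F) x) ∧
      ∀ᶠ z in 𝓝 x, f z = ∑ F ∈ t, g F z * F z := by
  classical
  induction hf with
  | @of f hf => exact ⟨{f}, fun _ _ => 1, by simpa using hf, fun _ => analyticAt_const, by simp⟩
  | zero => exact ⟨∅, fun _ _ => 0, by simp, fun _ => analyticAt_const, by simp⟩
  | add _ _ h1 h2 =>
    obtain ⟨t1, g1, ht1, ha1, h1⟩ := h1
    obtain ⟨t2, g2, ht2, ha2, h2⟩ := h2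
    refine ⟨t1 ∪ t2, fun F z => (if F ∈ t1 then g1 F z else 0) + (if F ∈ t2 then g2 F z else 0), ?_, ?_, ?_⟩
    · intro F hF
      exact (Finset.mem_union.1 hF).elim (ht1 F) (ht2 F)
    · intro F
      refine AnalyticAt.fun_add ?_ ?_ <;> split_ifs
      exacts [ha1 F, analyticAt_const, ha2 F, analyticAt_const]
    · filter_upwards [h1, h2] with z h1 h2
      simp only [add_mul, Finset.sum_add_distrib, ite_mul, zero_mul, h1, h2]
      rw [Finset.sum_ite_mem, Finset.sum_ite_mem, Finset.union_inter_cancel_left,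
        Finset.union_inter_cancel_right]
  | @mul f g hg _ h1 =>
    obtain ⟨t1, g1, ht1, ha1, h1⟩ := h1
    refine ⟨t1, fun F z => g z * g1 F z, ht1, fun F => hg.fun_mul (ha1 F), ?_⟩
    filter_upwards [h1] with z h1
    rw [h1, Finset.mul_sum]
    exact Finset.sum_congr rfl fun F _ => by ring
  | congr _ he h1 =>
    obtain ⟨t1, g1, ht1, ha1, h1⟩ := h1
    refine ⟨t1, g1, ht1, ha1, ?_⟩
    filter_upwards [h1, he] with z h1 he
    rw [← he, h1]
end

/-! ### The Cauchy kernel of a strip -/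

/-- Open rectangles in `ℂ`. -/
def rect (a b c d : ℝ) : Set ℂ := {ζ | (a < ζ.re ∧ ζ.re < b) ∧ c < ζ.im ∧ ζ.im < d}

lemma isOpen_rect (a b c d : ℝ) : IsOpen (rect a b c d) :=
  ((isOpen_lt continuous_const Complex.continuous_re).inter
    (isOpen_lt Complex.continuous_re continuous_const)).inter
  ((isOpen_lt continuous_const Complex.continuous_im).inter
    (isOpen_lt Complex.continuous_im continuous_const))

lemma rect_eq_preimage (a b c d : ℝ) :
    rect a b c d = Complex.measurableEquivRealProd ⁻¹' (Ioo a b ×ˢ Ioo c d) := by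
  ext ζ; simp [rect, and_assoc]

lemma volume_rect_lt_top (a b c d : ℝ) : volume (rect a b c d) < ⊤ := by
  rw [rect_eq_preimage, Complex.volume_preserving_equiv_real_prod.measure_preimage_equiv,
    Measure.volume_eq_prod, Measure.prod_prod]
  simp [ENNReal.mul_lt_top]

/-- The Cauchy kernel is integrable over a rectangle, uniformly in the position of the pole. -/
lemma inv_integrable (a b c d : ℝ) : ∃ C : ℝ, 0 ≤ C ∧ ∀ ζ : ℂ,
    IntegrableOn (fun w => ‖w - ζ‖⁻¹) (rect a b c d) ∧ ∫ w in rect a b c d, ‖w - ζ‖⁻¹ ≤ C := by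
  let g : ℂ → ℝ := (ball (0:ℂ) 1).indicator (fun w => ‖w‖⁻¹)
  have hg : Integrable g := by
    rw [integrable_indicator_iff isOpen_ball.measurableSet]
    refine integrableOn_ball_of_norm_le_rpow (C := 1) (α := 1) ?_ ?_ ?_ ?_
    · simp
    · simp
    · refine Eventually.of_forall fun w => ?_
      rw [Real.rpow_neg_one]; simp
    · exact (measurable_norm.inv).aestronglyMeasurable
  have hg0 : ∀ w, 0 ≤ g w := fun w => indicator_nonneg (fun w _ => by positivity) w
  have hle : ∀ ζ w : ℂ, ‖w - ζ‖⁻¹ ≤ g (w - ζ) + 1 := by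
    intro ζ w
    by_cases h : w - ζ ∈ ball (0:ℂ) 1
    · simp only [g, indicator_of_mem h]; linarith
    · simp only [g, indicator_of_notMem h]
      rw [mem_ball_zero_iff, not_lt] at h
      simpa using inv_le_one_of_one_le₀ h
  have h1 : ∀ ζ : ℂ, Integrable (fun w => g (w - ζ)) := fun ζ => hg.comp_sub_right ζ
  have hconst : IntegrableOn (fun _ : ℂ => (1:ℝ)) (rect a b c d) :=
    integrableOn_const (volume_rect_lt_top a b c d).ne
  have h2 : ∀ ζ, IntegrableOn (fun w => g (w - ζ) + 1) (rect a b c d) := fun ζ =>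
    (h1 ζ).integrableOn.add hconst
  have h3 : ∀ ζ, IntegrableOn (fun w => ‖w - ζ‖⁻¹) (rect a b c d) := fun ζ => by
    refine (h2 ζ).mono' (by fun_prop) (Eventually.of_forall fun w => ?_)
    rw [Real.norm_of_nonneg (by positivity)]; exact hle ζ w
  refine ⟨(∫ w, g w) + ∫ w in rect a b c d, (1:ℝ), ?_, fun ζ => ⟨h3 ζ, ?_⟩⟩
  · exact add_nonneg (integral_nonneg hg0) (integral_nonneg fun _ => zero_le_one)
  · refine (integral_mono (h3 ζ) (h2 ζ) (hle ζ)).trans ?_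
    rw [integral_add (h1 ζ).integrableOn hconst]
    gcongr
    rw [← integral_sub_right_eq_self (fun w => g w) ζ]
    exact setIntegral_le_integral (h1 ζ) (Eventually.of_forall fun w => hg0 _)

lemma log_neg_of_im_pos {x : ℂ} (h : 0 < x.im) : Complex.log (-x) = Complex.log x - Real.pi * Complex.I := by
  rw [Complex.log, Complex.log, Complex.arg_neg_eq_arg_sub_pi_of_im_pos h, norm_neg]
  push_cast; ring

lemma log_neg_of_im_neg {x : ℂ} (h : x.im < 0) : Complex.log (-x) = Complex.log x + Real.pi * Complex.I := by
  rw [Complex.log, Complex.log, Complex.arg_neg_eq_arg_add_pi_of_im_neg h, norm_neg]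
  push_cast; ring

lemma vert_integral {s c d : ℝ} {ζ : ℂ} (hs : s ≠ ζ.re) (hc : c < ζ.im) (hd : ζ.im < d) :
    ∫ y in c..d, Complex.I / (((s:ℂ) + y * Complex.I) - ζ) =
      Complex.log (s + d * Complex.I - ζ) - Complex.log (s + c * Complex.I - ζ)
        - if s < ζ.re then 2 * Real.pi * Complex.I else 0 := by
  have hne : ∀ y : ℝ, (s:ℂ) + y * Complex.I - ζ ≠ 0 := by
    intro y h
    have := congrArg Complex.re h
    simp at this
    exact hs (by linarith)
  have hcont : Continuous fun y : ℝ => Complex.I / (((s:ℂ) + y * Complex.I) - ζ) :=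
    continuous_const.div (by fun_prop) hne
  rcases lt_or_gt_of_ne hs with h | h
  · rw [if_pos h]
    have hder : ∀ y ∈ uIcc c d, HasDerivAt (fun y : ℝ => Complex.log (-((s:ℂ) + y * Complex.I - ζ)))
        (Complex.I / (((s:ℂ) + y * Complex.I) - ζ)) y := by
      intro y _
      have h1 : HasDerivAt (fun y : ℝ => -((s:ℂ) + y * Complex.I - ζ)) (-(1 * Complex.I)) y :=
        (((Complex.ofRealCLM.hasDerivAt (x := y)).mul_const Complex.I).const_add (s:ℂ) |>.sub_const ζ).neg
      have h2 := h1.clog_real (by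
        left; simp; linarith)
      convert h2 using 1
      rw [neg_div_neg_eq, one_mul]
    rw [intervalIntegral.integral_eq_sub_of_hasDerivAt hder (hcont.intervalIntegrable _ _),
      log_neg_of_im_pos (by simp; linarith), log_neg_of_im_neg (by simp; linarith)]
    ring
  · rw [if_neg h.not_gt, sub_zero]
    have hder : ∀ y ∈ uIcc c d, HasDerivAt (fun y : ℝ => Complex.log ((s:ℂ) + y * Complex.I - ζ))
        (Complex.I / (((s:ℂ) + y * Complex.I) - ζ)) y := by
      intro y _
      have h1 : HasDerivAt (fun y : ℝ => ((s:ℂ) + y * Complex.I - ζ)) (1 * Complex.I) y :=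
        (((Complex.ofRealCLM.hasDerivAt (x := y)).mul_const Complex.I).const_add (s:ℂ) |>.sub_const ζ)
      have h2 := h1.clog_real (by
        left; simp; linarith)
      simpa using h2
    rw [intervalIntegral.integral_eq_sub_of_hasDerivAt hder (hcont.intervalIntegrable _ _)]

/-- The cutoff function: `0` to the left of the strip `a < re ζ < b`, `1` to the right of it, and
affine in `re ζ` on it. -/
noncomputable def chi (a b : ℝ) (ζ : ℂ) : ℝ := max 0 (min 1 ((ζ.re - a) / (b - a)))

lemma chi_of_le {a b : ℝ} (hab : a < b) {ζ : ℂ} (h : ζ.re ≤ a) : chi a b ζ = 0 := by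
  rw [chi, max_eq_left]
  exact (min_le_right _ _).trans (div_nonpos_of_nonpos_of_nonneg (by linarith) (by linarith))

lemma chi_of_ge {a b : ℝ} (hab : a < b) {ζ : ℂ} (h : b ≤ ζ.re) : chi a b ζ = 1 := by
  have : 1 ≤ (ζ.re - a) / (b - a) := by rw [le_div_iff₀ (by linarith)]; linarith
  rw [chi, min_eq_left this, max_eq_right zero_le_one]

lemma chi_mem (a b : ℝ) (ζ : ℂ) : 0 ≤ chi a b ζ ∧ chi a b ζ ≤ 1 :=
  ⟨le_max_left _ _, max_le zero_le_one (min_le_left _ _)⟩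

lemma integral_indicator_chi {a b : ℝ} (hab : a < b) (ζ : ℂ) :
    ∫ s in Ioo a b, (if s < ζ.re then (1:ℂ) else 0) = (b - a) * chi a b ζ := by
  have h1 : (fun s : ℝ => if s < ζ.re then (1:ℂ) else 0) = (Iio ζ.re).indicator (fun _ => 1) := by
    ext s; simp [indicator_apply]
  rw [h1, setIntegral_indicator measurableSet_Iio, Ioo_inter_Iio, setIntegral_const]
  have hb : 0 < b - a := by linarith
  have h2 : (volume.real (Ioo a (min b ζ.re))) = (b - a) * chi a b ζ := by
    rw [Real.volume_real_Ioo, chi, mul_max_of_nonneg _ _ hb.le, mul_min_of_nonneg _ _ hb.le,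
      mul_div_cancel₀ _ hb.ne', mul_one, mul_zero, max_comm, ← min_sub_sub_right]
  rw [h2]; simp

lemma kernel_integrable (a b c d : ℝ) (ζ : ℂ) : IntegrableOn (fun w => (w - ζ)⁻¹) (rect a b c d) := by
  obtain ⟨C, _, hC⟩ := inv_integrable a b c d
  refine (hC ζ).1.mono' ?_ (Eventually.of_forall fun w => by rw [norm_inv])
  exact (measurable_id.sub_const ζ).inv.aestronglyMeasurable

lemma setIntegral_rect {a b c d : ℝ} {f : ℂ → ℂ} (hf : IntegrableOn f (rect a b c d)) :
    ∫ w in rect a b c d, f w = ∫ s in Ioo a b, ∫ y in Ioo c d, f (s + y * Complex.I) := by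
  have hmp := Complex.volume_preserving_equiv_real_prod.symm
  have hpre : rect a b c d = Complex.measurableEquivRealProd.symm '' (Ioo a b ×ˢ Ioo c d) := by
    rw [rect_eq_preimage, MeasurableEquiv.image_symm]
  have hpre' : Complex.measurableEquivRealProd.symm ⁻¹' (rect a b c d) = Ioo a b ×ˢ Ioo c d := by
    ext p; simp [rect]
  have h1 := hmp.setIntegral_preimage_emb Complex.measurableEquivRealProd.symm.measurableEmbedding f
    (rect a b c d)
  have h2 := hmp.integrableOn_comp_preimage (f := f) (s := rect a b c d)
    Complex.measurableEquivRealProd.symm.measurableEmbedding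
  rw [hpre'] at h1 h2
  rw [← h1, Measure.volume_eq_prod, setIntegral_prod]
  · refine integral_congr_ae (Eventually.of_forall fun s => ?_)
    refine integral_congr_ae (Eventually.of_forall fun y => ?_)
    simp only [Complex.measurableEquivRealProd_symm_apply, ← Complex.mk_eq_add_mul_I]
  · exact h2.2 hf

/-- The sum of the normalised Cauchy transform of the strip and the cutoff `chi`; it is given by a
formula which is holomorphic in the horizontal band `c < im ζ < d`. -/
noncomputable def hfun (a b c d : ℝ) (ζ : ℂ) : ℂ :=
  (2 * Real.pi * (b - a))⁻¹ * (-Complex.I * ∫ s in Icc a b,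
    (Complex.log ((s:ℝ) + d * Complex.I - ζ) - Complex.log (s + c * Complex.I - ζ)))

lemma log_analytic {s d : ℝ} {ζ : ℂ} (h : ζ.im ≠ d) :
    AnalyticAt ℂ (fun q : ℂ × ℂ => Complex.log (q.1 + d * Complex.I - q.2)) ((s:ℂ), ζ) := by
  refine AnalyticAt.clog (by fun_prop) ?_
  right
  simp
  intro h'
  exact h (by linarith)

lemma hfun_analytic (a b c d : ℝ) : AnalyticOnNhd ℂ (hfun a b c d) {ζ | c < ζ.im ∧ ζ.im < d} := by
  refine fun ζ hζ => analyticAt_const.mul (analyticAt_const.mul ?_)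
  have hU : IsOpen {ζ : ℂ | c < ζ.im ∧ ζ.im < d} :=
    (isOpen_lt continuous_const Complex.continuous_im).inter
      (isOpen_lt Complex.continuous_im continuous_const)
  have hj : ∀ ζ ∈ {ζ : ℂ | c < ζ.im ∧ ζ.im < d}, ∀ s : ℝ, AnalyticAt ℂ (fun q : ℂ × ℂ =>
      Complex.log (q.1 + d * Complex.I - q.2) - Complex.log (q.1 + c * Complex.I - q.2)) ((s:ℂ), ζ) :=
    fun ζ hζ s => (log_analytic hζ.2.ne).fun_sub (log_analytic hζ.1.ne')
  refine analytic_integral_compact (U := {ζ : ℂ | c < ζ.im ∧ ζ.im < d}) (μ := volume) (K := Icc a b)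
    (k := fun ζ s => Complex.log ((s:ℝ) + d * Complex.I - ζ) - Complex.log (s + c * Complex.I - ζ))
    isCompact_Icc measurableSet_Icc (by simp) hU ?_ ?_ ζ hζ
  · intro s _ ζ hζ
    exact (hj ζ hζ s).fun_comp (f := fun ζ : ℂ => ((s:ℂ), ζ)) (by fun_prop)
  · intro ζ hζ s _
    exact ContinuousAt.comp (x := (ζ, s)) (f := fun p : ℂ × ℝ => ((p.2 : ℂ), p.1))
      (g := fun q : ℂ × ℂ => Complex.log (q.1 + d * Complex.I - q.2) - Complex.log (q.1 + c * Complex.I - q.2))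
      (hj ζ hζ s).continuousAt (by fun_prop)

/-- The Cauchy transform of the strip differs from the cutoff `-chi` by a holomorphic function. -/
lemma kernel_integral {a b c d : ℝ} (hab : a < b) {ζ : ℂ} (hc : c < ζ.im) (hd : ζ.im < d) :
    (2 * Real.pi * (b - a))⁻¹ * ∫ w in rect a b c d, (w - ζ)⁻¹ = hfun a b c d ζ - chi a b ζ := by
  have hcd : c ≤ d := (hc.trans hd).le
  have hj : Continuous fun s : ℝ => Complex.log ((s:ℝ) + d * Complex.I - ζ) -
      Complex.log (s + c * Complex.I - ζ) := by
    rw [continuous_iff_continuousAt]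
    intro s
    exact ContinuousAt.comp (f := fun s : ℝ => ((s : ℂ), ζ))
      (g := fun q : ℂ × ℂ => Complex.log (q.1 + d * Complex.I - q.2) - Complex.log (q.1 + c * Complex.I - q.2))
      ((log_analytic hd.ne).fun_sub (log_analytic hc.ne')).continuousAt (by fun_prop)
  have h1 : ∀ᵐ s : ℝ ∂(volume.restrict (Ioo a b)), ∫ y in Ioo c d, ((s:ℂ) + y * Complex.I - ζ)⁻¹ =
      -Complex.I * (Complex.log ((s:ℝ) + d * Complex.I - ζ) - Complex.log (s + c * Complex.I - ζ))
        - 2 * Real.pi * (if s < ζ.re then 1 else 0) := by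
    have : ∀ᵐ s : ℝ ∂(volume.restrict (Ioo a b)), s ≠ ζ.re := ae_restrict_of_ae (Measure.ae_ne volume _)
    filter_upwards [this] with s hs
    have := vert_integral hs hc hd
    rw [intervalIntegral.integral_of_le hcd, integral_Ioc_eq_integral_Ioo] at this
    simp only [div_eq_mul_inv] at this
    rw [integral_const_mul] at this
    have hI := Complex.I_mul_I
    have h3 : ∫ y in Ioo c d, ((s:ℂ) + y * Complex.I - ζ)⁻¹ =
      -Complex.I * (Complex.I * ∫ y in Ioo c d, ((s:ℂ) + y * Complex.I - ζ)⁻¹) := by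
      rw [← mul_assoc, neg_mul, hI]; simp
    rw [h3, this, mul_sub]
    split_ifs
    · linear_combination (2 * Real.pi : ℂ) * hI
    · simp
  have hint1 : IntegrableOn (fun s : ℝ => -Complex.I * (Complex.log ((s:ℝ) + d * Complex.I - ζ) -
      Complex.log (s + c * Complex.I - ζ))) (Ioo a b) :=
    ((hj.const_mul _ : Continuous _).continuousOn.integrableOn_Icc).mono_set Ioo_subset_Icc_self
  have hint2 : IntegrableOn (fun s : ℝ => 2 * (Real.pi:ℂ) * (if s < ζ.re then 1 else 0)) (Ioo a b) := by
    refine Integrable.const_mul ?_ _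
    have : (fun s : ℝ => if s < ζ.re then (1:ℂ) else 0) = (Iio ζ.re).indicator (fun _ => 1) := by
      ext s; simp [indicator_apply]
    rw [this]
    exact (integrableOn_const (by simp)).integrable.indicator measurableSet_Iio
  rw [setIntegral_rect (kernel_integrable a b c d ζ), integral_congr_ae h1, integral_sub hint1 hint2,
    integral_const_mul, integral_const_mul, integral_indicator_chi hab, hfun, integral_Icc_eq_integral_Ioo]
  have h2 : (2 * Real.pi * (b - a) : ℂ) ≠ 0 := by
    have : (b:ℂ) - a ≠ 0 := by
      rw [← Complex.ofReal_sub]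
      exact_mod_cast (sub_pos.2 hab).ne'
    have hpi : (Real.pi : ℂ) ≠ 0 := by exact_mod_cast Real.pi_ne_zero
    exact mul_ne_zero (mul_ne_zero two_ne_zero hpi) this
  push_cast
  rw [mul_sub]
  congr 1
  rw [← mul_assoc (2 * (Real.pi:ℂ)), ← mul_assoc, inv_mul_cancel₀ h2, one_mul]

/-! ### Additive splitting along a strip -/

section
variable {E : Type*} [NormedAddCommGroup E] [NormedSpace ℂ E] [FiniteDimensional ℂ E]

/-- The Cauchy transform in the last variable, over the strip `rect a b c d`. -/
noncomputable def cV (a b c d : ℝ) (g : E × ℂ → ℂ) (p : E × ℂ) : ℂ :=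
  ((2 * Real.pi * (b - a))⁻¹ : ℝ) * ∫ w in rect a b c d, g (p.1, w) * (w - p.2)⁻¹

/-- The part of `g` which extends holomorphically to the left of the strip. -/
noncomputable def S1 (a b c d : ℝ) (g : E × ℂ → ℂ) (p : E × ℂ) : ℂ :=
  cV a b c d g p + chi a b p.2 * g p

/-- Minus the part of `g` which extends holomorphically to the right of the strip. -/
noncomputable def S2 (a b c d : ℝ) (g : E × ℂ → ℂ) (p : E × ℂ) : ℂ :=
  cV a b c d g p + (chi a b p.2 - 1) * g p

lemma S1_sub_S2 (a b c d : ℝ) (g : E × ℂ → ℂ) (p : E × ℂ) :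
    S1 a b c d g p - S2 a b c d g p = g p := by rw [S1, S2]; ring

lemma rect_mono {a b a' b' c d : ℝ} (ha : a' ≤ a) (hb : b ≤ b') : rect a b c d ⊆ rect a' b' c d :=
  fun _ h => ⟨⟨ha.trans_lt h.1.1, h.1.2.trans_le hb⟩, h.2⟩

variable {U : Set E} {a0 a b b0 c d M : ℝ} {g : E × ℂ → ℂ}

lemma slice_continuousOn (hg : AnalyticOnNhd ℂ g (U ×ˢ rect a0 b0 c d)) {z : E} (hz : z ∈ U) :
    ContinuousOn (fun w => g (z, w)) (rect a0 b0 c d) := fun _ hw =>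
  (fib_differentiableAt (hg _ ⟨hz, hw⟩)).continuousAt.continuousWithinAt

lemma cV_integrable (ha : a0 < a) (hb : b < b0) (hg : AnalyticOnNhd ℂ g (U ×ˢ rect a0 b0 c d))
    (hM : ∀ p ∈ U ×ˢ rect a0 b0 c d, ‖g p‖ ≤ M) {z : E} (hz : z ∈ U) (ζ : ℂ) :
    IntegrableOn (fun w => g (z, w) * (w - ζ)⁻¹) (rect a b c d) := by
  refine (kernel_integrable a b c d ζ).bdd_mul (c := M) ?_ ?_
  · exact ((slice_continuousOn hg hz).mono (rect_mono ha.le hb.le)).aestronglyMeasurable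
      (isOpen_rect a b c d).measurableSet
  · rw [ae_restrict_iff' (isOpen_rect a b c d).measurableSet]
    exact Eventually.of_forall fun w hw => hM _ ⟨hz, rect_mono ha.le hb.le hw⟩

/-- Boundedness of the Cauchy transform in the supremum norm, without shrinking the domain. -/
lemma cV_bound (a b c d : ℝ) : ∃ C : ℝ, 0 ≤ C ∧ ∀ {E : Type*} (g : E × ℂ → ℂ) (M : ℝ) (p : E × ℂ),
    0 ≤ M → (∀ w ∈ rect a b c d, ‖g (p.1, w)‖ ≤ M) →
    ‖(((2 * Real.pi * (b - a))⁻¹ : ℝ) : ℂ) * ∫ w in rect a b c d, g (p.1, w) * (w - p.2)⁻¹‖ ≤ C * M := by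
  obtain ⟨C, hC0, hC⟩ := inv_integrable a b c d
  refine ⟨|(2 * Real.pi * (b - a))⁻¹| * C, by positivity, fun g M p hM h => ?_⟩
  rw [norm_mul, Complex.norm_real, Real.norm_eq_abs, mul_assoc |(2 * Real.pi * (b - a))⁻¹| C M]
  have habs : 0 ≤ |(2 * Real.pi * (b - a))⁻¹| := abs_nonneg _
  refine mul_le_mul_of_nonneg_left ?_ habs
  have h1 : ‖∫ w in rect a b c d, g (p.1, w) * (w - p.2)⁻¹‖ ≤
      ∫ w in rect a b c d, M * ‖w - p.2‖⁻¹ := by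
    refine norm_integral_le_of_norm_le ((hC p.2).1.const_mul M) ?_
    rw [ae_restrict_iff' (isOpen_rect a b c d).measurableSet]
    refine Eventually.of_forall fun w hw => ?_
    rw [norm_mul, norm_inv]
    exact mul_le_mul_of_nonneg_right (h w hw) (by positivity)
  refine h1.trans ?_
  rw [integral_const_mul, mul_comm C]
  exact mul_le_mul_of_nonneg_left (hC p.2).2 hM

/-- The splitting operators are bounded in the supremum norm, on the full domains of the two parts. -/
lemma S_bound (a b c d : ℝ) : ∃ C : ℝ, 0 ≤ C ∧ ∀ {E : Type*} [NormedAddCommGroup E] [NormedSpace ℂ E]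
    [FiniteDimensional ℂ E] (U : Set E) (a0 b0 : ℝ) (g : E × ℂ → ℂ) (M : ℝ), a0 < a → a < b → b < b0 →
    0 ≤ M → (∀ p ∈ U ×ˢ rect a0 b0 c d, ‖g p‖ ≤ M) →
    (∀ p : E × ℂ, p.1 ∈ U → p.2.re < b0 → c < p.2.im → p.2.im < d → ‖S1 a b c d g p‖ ≤ C * M) ∧
    (∀ p : E × ℂ, p.1 ∈ U → a0 < p.2.re → c < p.2.im → p.2.im < d → ‖S2 a b c d g p‖ ≤ C * M) := by
  obtain ⟨C, hC0, hC⟩ := cV_bound a b c d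
  refine ⟨C + 1, by positivity, fun U a0 b0 g M ha hab hb hM h => ⟨?_, ?_⟩⟩
  · intro p hp h1 h2 h3
    rw [S1, add_mul]
    refine (norm_add_le _ _).trans (add_le_add (hC g M p hM fun w hw =>
      h _ ⟨hp, rect_mono ha.le hb.le hw⟩) ?_)
    by_cases hre : p.2.re ≤ a
    · rw [chi_of_le hab hre]; simpa using hM
    · rw [norm_mul, Complex.norm_real, Real.norm_of_nonneg (chi_mem a b p.2).1]
      exact mul_le_mul (chi_mem a b p.2).2 (h p ⟨hp, ⟨ha.trans (not_le.1 hre), h1⟩, h2, h3⟩)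
        (norm_nonneg _) zero_le_one
  · intro p hp h1 h2 h3
    rw [S2, add_mul]
    refine (norm_add_le _ _).trans (add_le_add (hC g M p hM fun w hw =>
      h _ ⟨hp, rect_mono ha.le hb.le hw⟩) ?_)
    by_cases hre : b ≤ p.2.re
    · rw [chi_of_ge hab hre]; simpa using hM
    · have hn : ‖(chi a b p.2 : ℂ) - 1‖ ≤ 1 := by
        rw [← Complex.ofReal_one, ← Complex.ofReal_sub, Complex.norm_real, Real.norm_eq_abs, abs_le]
        constructor <;> linarith [(chi_mem a b p.2).1, (chi_mem a b p.2).2]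
      rw [norm_mul]
      exact mul_le_mul hn (h p ⟨hp, ⟨h1, (not_le.1 hre).trans hb⟩, h2, h3⟩)
        (norm_nonneg _) zero_le_one

lemma cV_analytic_off (hU : IsOpen U) (ha : a0 < a) (hb : b < b0)
    (hg : AnalyticOnNhd ℂ g (U ×ˢ rect a0 b0 c d)) (hM : ∀ p ∈ U ×ˢ rect a0 b0 c d, ‖g p‖ ≤ M)
    {O : Set ℂ} (hO : IsOpen O) (hoff : ∀ ζ ∈ O, ∃ ρ > 0, ∀ w ∈ rect a b c d, ρ ≤ ‖w - ζ‖) :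
    AnalyticOnNhd ℂ (cV a b c d g) (U ×ˢ O) := by
  refine fun p hp => analyticAt_const.mul ?_
  refine analytic_integral (μ := volume.restrict (rect a b c d))
    (k := fun (p : E × ℂ) w => g (p.1, w) * (w - p.2)⁻¹) (hU.prod hO) ?_ ?_ ?_ p hp
  · rw [ae_restrict_iff' (isOpen_rect a b c d).measurableSet]
    refine Eventually.of_forall fun w hw p hp => ?_
    obtain ⟨ρ, hρ, h⟩ := hoff p.2 hp.2
    refine AnalyticAt.fun_mul ?_ (AnalyticAt.fun_inv (by fun_prop) ?_)
    · exact AnalyticAt.fun_comp (g := g) (f := fun p : E × ℂ => (p.1, w))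
        (hg _ ⟨hp.1, rect_mono ha.le hb.le hw⟩) (by fun_prop)
    · exact norm_pos_iff.1 (hρ.trans_le (h w hw))
  · exact fun p hp => (cV_integrable ha hb hg hM hp.1 p.2).aestronglyMeasurable
  · intro p hp
    obtain ⟨ρ, hρ, h⟩ := hoff p.2 hp.2
    refine ⟨fun _ => M * (ρ / 2)⁻¹, integrableOn_const (volume_rect_lt_top a b c d).ne, ?_⟩
    have h1 : ∀ᶠ p' : E × ℂ in 𝓝 p, p'.2 ∈ ball p.2 (ρ / 2) :=
      continuous_snd.continuousAt.eventually (ball_mem_nhds _ (by positivity))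
    have h2 : ∀ᶠ p' : E × ℂ in 𝓝 p, p'.1 ∈ U := continuous_fst.continuousAt.eventually (hU.mem_nhds hp.1)
    filter_upwards [h1, h2] with p' h1 h2
    rw [ae_restrict_iff' (isOpen_rect a b c d).measurableSet]
    refine Eventually.of_forall fun w hw => ?_
    have hgM := hM (p'.1, w) ⟨h2, rect_mono ha.le hb.le hw⟩
    rw [norm_mul, norm_inv]
    refine mul_le_mul hgM ?_ (by positivity) ((norm_nonneg _).trans hgM)
    refine inv_anti₀ (by positivity) ?_
    have h3 := h w hw
    rw [mem_ball, dist_eq_norm] at h1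
    have h4 : ‖w - p.2‖ ≤ ‖w - p'.2‖ + ‖p'.2 - p.2‖ := by
      have := norm_add_le (w - p'.2) (p'.2 - p.2)
      simpa using this
    linarith

/-- On the strip, `g(w)` is replaced by `g(w) - g(ζ)` under the integral to remove the singularity of
the kernel; the remaining multiple of `g(ζ)` is holomorphic by `kernel_integral`. -/
lemma S1_analytic_mid (hU : IsOpen U) (ha : a0 < a) (hab : a < b) (hb : b < b0)
    (hg : AnalyticOnNhd ℂ g (U ×ˢ rect a0 b0 c d)) (hM : ∀ p ∈ U ×ˢ rect a0 b0 c d, ‖g p‖ ≤ M) :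
    AnalyticOnNhd ℂ (S1 a b c d g) (U ×ˢ rect a0 b0 c d) := by
  have hR := (isOpen_rect a b c d).measurableSet
  have hsub := rect_mono (c := c) (d := d) ha.le hb.le
  have hsl : ∀ p ∈ U ×ˢ rect a0 b0 c d, ∀ w : ℂ, w ≠ p.2 → dslope (fun η => g (p.1, η)) w p.2 =
      (g (p.1, w) - g p) * (w - p.2)⁻¹ := by
    intro p hp w hw
    rw [dslope_of_ne _ hw.symm, slope_def_field, div_eq_mul_inv, ← neg_sub w, inv_neg]
    ring
  have hne : ∀ ζ : ℂ, ∀ᵐ w ∂(volume.restrict (rect a b c d)), w ≠ ζ := fun ζ =>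
    ae_restrict_of_ae (Measure.ae_ne volume ζ)
  have hmain : AnalyticOnNhd ℂ (fun p : E × ℂ => ∫ w in rect a b c d, dslope (fun η => g (p.1, η)) w p.2)
      (U ×ˢ rect a0 b0 c d) := by
    refine analytic_integral (hU.prod (isOpen_rect a0 b0 c d)) ?_ ?_ ?_
    · rw [ae_restrict_iff' hR]
      refine Eventually.of_forall fun w hw p hp => ?_
      exact analyticAt_dslope (z := p.1) (ζ := p.2) (hg _ ⟨hp.1, hsub hw⟩) (hg p hp)
    · intro p hp
      have h1 : AEStronglyMeasurable (fun w => (g (p.1, w) - g p) * (w - p.2)⁻¹)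
          (volume.restrict (rect a b c d)) := by
        refine AEStronglyMeasurable.mul ?_ (kernel_integrable a b c d p.2).aestronglyMeasurable
        exact (((slice_continuousOn hg hp.1).mono hsub).sub continuousOn_const).aestronglyMeasurable hR
      refine h1.congr ?_
      filter_upwards [hne p.2] with w hw
      exact (hsl p hp w hw).symm
    · intro p hp
      have hMn : 0 ≤ M := (norm_nonneg _).trans (hM p hp)
      have hgt : AnalyticAt ℂ (fun q : (E × ℂ) × ℂ => g (q.1.1, q.1.2 + q.2)) ((p.1, p.2), 0) :=
        AnalyticAt.fun_comp (g := g) (f := fun q : (E × ℂ) × ℂ => (q.1.1, q.1.2 + q.2))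
          (by simpa using hg p hp) (by fun_prop)
      have hD := (analyticAt_dslope hgt hgt).continuousAt
      obtain ⟨B, hB⟩ : ∃ B, ∀ᶠ q : (E × ℂ) × ℂ in 𝓝 ((p.1, p.2), 0),
          ‖dslope (fun η => g (q.1.1, q.1.2 + η)) 0 q.2‖ ≤ B :=
        ⟨_, (hD.norm.eventually_lt_const (lt_add_one _)).mono fun _ h => h.le⟩
      obtain ⟨ρ, hρ, hBρ⟩ := Metric.eventually_nhds_iff_ball.1 hB
      refine ⟨fun _ => max B (2 * M * (ρ / 4)⁻¹), integrableOn_const (volume_rect_lt_top a b c d).ne, ?_⟩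
      filter_upwards [ball_mem_nhds p (show (0:ℝ) < ρ / 4 by positivity),
        (hU.prod (isOpen_rect a0 b0 c d)).mem_nhds hp] with p' hp' hp'U
      filter_upwards [hne p'.2, (ae_restrict_iff' hR).2 (Eventually.of_forall fun w hw => hw)] with w hw hwR
      have hd1 : dist p'.1 p.1 < ρ / 4 := (le_max_left _ _).trans_lt hp'
      have hd2 : dist p'.2 p.2 < ρ / 4 := (le_max_right _ _).trans_lt hp'
      by_cases hwp : dist w p.2 < ρ / 2
      · refine le_trans ?_ (le_max_left _ _)
        have h1 := hBρ ((p'.1, w), p'.2 - w) (by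
          simp only [mem_ball, Prod.dist_eq, max_lt_iff]
          refine ⟨⟨by linarith, by linarith⟩, ?_⟩
          rw [dist_zero_right, ← dist_eq_norm]
          have := dist_triangle p'.2 p.2 w
          rw [dist_comm p.2 w] at this
          linarith)
        have h2 : dslope (fun η => g (p'.1, w + η)) 0 (p'.2 - w) = dslope (fun η => g (p'.1, η)) w p'.2 := by
          rw [dslope_of_ne _ (sub_ne_zero.2 hw.symm), dslope_of_ne _ hw.symm, slope_def_field, slope_def_field]
          simp
        rw [← h2]; exact h1
      · refine le_trans ?_ (le_max_right _ _)
        rw [hsl p' hp'U w hw, norm_mul, norm_inv]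
        have h1 : ‖g (p'.1, w) - g p'‖ ≤ 2 * M := by
          refine (norm_sub_le _ _).trans ?_
          linarith [hM p' hp'U, hM (p'.1, w) ⟨hp'U.1, hsub hwR⟩]
        refine mul_le_mul h1 (inv_anti₀ (by positivity) ?_) (by positivity) (by positivity)
        rw [← dist_eq_norm]
        have := dist_triangle w p'.2 p.2
        push Not at hwp
        linarith
  have heq : ∀ p ∈ U ×ˢ rect a0 b0 c d, S1 a b c d g p = ((2 * Real.pi * (b - a))⁻¹ : ℝ) *
      (∫ w in rect a b c d, dslope (fun η => g (p.1, η)) w p.2) + g p * hfun a b c d p.2 := by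
    intro p hp
    have h1 : ∫ w in rect a b c d, dslope (fun η => g (p.1, η)) w p.2 =
        (∫ w in rect a b c d, g (p.1, w) * (w - p.2)⁻¹) - g p * ∫ w in rect a b c d, (w - p.2)⁻¹ := by
      rw [← integral_const_mul, ← integral_sub (cV_integrable ha hb hg hM hp.1 p.2)
        ((kernel_integrable a b c d p.2).const_mul _)]
      refine integral_congr_ae ?_
      filter_upwards [hne p.2] with w hw
      rw [hsl p hp w hw]; ring
    have h2 := kernel_integral hab hp.2.2.1 hp.2.2.2
    rw [S1, cV, h1]
    linear_combination (g p) * h2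
  intro p hp
  refine AnalyticAt.congr (f := fun p => ((2 * Real.pi * (b - a))⁻¹ : ℝ) *
      (∫ w in rect a b c d, dslope (fun η => g (p.1, η)) w p.2) + g p * hfun a b c d p.2) ?_ ?_
  · refine (analyticAt_const.fun_mul (hmain p hp)).fun_add ((hg p hp).fun_mul ?_)
    exact AnalyticAt.fun_comp (g := hfun a b c d) (f := fun p : E × ℂ => p.2)
      (hfun_analytic a b c d p.2 hp.2.2) (by fun_prop)
  · filter_upwards [(hU.prod (isOpen_rect a0 b0 c d)).mem_nhds hp] with p hp
    exact (heq p hp).symm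

/-- Additive splitting: the two parts are holomorphic on the two sides. -/
lemma S_analytic (hU : IsOpen U) (ha : a0 < a) (hab : a < b) (hb : b < b0)
    (hg : AnalyticOnNhd ℂ g (U ×ˢ rect a0 b0 c d)) (hM : ∀ p ∈ U ×ˢ rect a0 b0 c d, ‖g p‖ ≤ M) :
    (∀ p : E × ℂ, p.1 ∈ U → p.2.re < b0 → c < p.2.im → p.2.im < d → AnalyticAt ℂ (S1 a b c d g) p) ∧
    (∀ p : E × ℂ, p.1 ∈ U → a0 < p.2.re → c < p.2.im → p.2.im < d → AnalyticAt ℂ (S2 a b c d g) p) := by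
  have hmid := S1_analytic_mid hU ha hab hb hg hM
  constructor
  · intro p hp h1 h2 h3
    by_cases hre : p.2.re < a
    · have hO : IsOpen {ζ : ℂ | ζ.re < a} := isOpen_lt Complex.continuous_re continuous_const
      have := cV_analytic_off hU ha hb hg hM hO (fun ζ hζ => ⟨a - ζ.re, sub_pos.2 hζ, fun w hw => by
        have := Complex.re_le_norm (w - ζ)
        rw [Complex.sub_re] at this
        linarith [hw.1.1]⟩) p ⟨hp, hre⟩
      refine this.congr ?_
      filter_upwards [continuous_snd.continuousAt.eventually (hO.mem_nhds hre)] with q hq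
      rw [S1, chi_of_le hab (le_of_lt hq)]; simp
    · exact hmid p ⟨hp, ⟨ha.trans_le (not_lt.1 hre), h1⟩, h2, h3⟩
  · intro p hp h1 h2 h3
    by_cases hre : b < p.2.re
    · have hO : IsOpen {ζ : ℂ | b < ζ.re} := isOpen_lt continuous_const Complex.continuous_re
      have := cV_analytic_off hU ha hb hg hM hO (fun ζ hζ => ⟨ζ.re - b, sub_pos.2 hζ, fun w hw => by
        have := Complex.re_le_norm (ζ - w)
        rw [Complex.sub_re, norm_sub_rev] at this
        linarith [hw.1.2]⟩) p ⟨hp, hre⟩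
      refine this.congr ?_
      filter_upwards [continuous_snd.continuousAt.eventually (hO.mem_nhds hre)] with q hq
      rw [S2, chi_of_ge hab (le_of_lt hq)]; simp
    · have hp' : p ∈ U ×ˢ rect a0 b0 c d := ⟨hp, ⟨h1, (not_lt.1 hre).trans_lt hb⟩, h2, h3⟩
      refine ((hmid p hp').fun_sub (hg p hp')).congr (Eventually.of_forall fun q => ?_)
      simp only
      rw [← S1_sub_S2 a b c d g q]; ring

lemma S2_sub (ha : a0 < a) (hb : b < b0) {g' : E × ℂ → ℂ} {M' : ℝ}
    (hg : AnalyticOnNhd ℂ g (U ×ˢ rect a0 b0 c d)) (hM : ∀ p ∈ U ×ˢ rect a0 b0 c d, ‖g p‖ ≤ M)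
    (hg' : AnalyticOnNhd ℂ g' (U ×ˢ rect a0 b0 c d)) (hM' : ∀ p ∈ U ×ˢ rect a0 b0 c d, ‖g' p‖ ≤ M')
    {p : E × ℂ} (hp : p.1 ∈ U) :
    S2 a b c d g p - S2 a b c d g' p = S2 a b c d (fun q => g q - g' q) p := by
  simp only [S2, cV, sub_mul (g _)]
  rw [integral_sub (cV_integrable ha hb hg hM hp p.2) (cV_integrable ha hb hg' hM' hp p.2)]
  ring
end

/-! ### Runge approximation -/

section
variable {E : Type*} [NormedAddCommGroup E] [NormedSpace ℂ E] [FiniteDimensional ℂ E]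
variable {U : Set E} {a0 b0 c d M : ℝ} {A : E × ℂ → ℂ}

/-- Runge approximation, from a strip to everything on its right. The Cauchy kernel with pole on the
right is expanded in powers of `ζ - p`, where `p` lies far to the left. -/
lemma runge (hU : IsOpen U) (hA : AnalyticOnNhd ℂ A (U ×ˢ rect a0 b0 c d)) (hM0 : 0 ≤ M)
    (hM : ∀ p ∈ U ×ˢ rect a0 b0 c d, ‖A p‖ ≤ M) {τ : ℝ} (hτ0 : a0 < τ) (hτ : τ < b0) {ε : ℝ} (hε : 0 < ε) :
    ∃ B : E × ℂ → ℂ, (∀ p : E × ℂ, p.1 ∈ U → a0 < p.2.re → c < p.2.im → p.2.im < d → AnalyticAt ℂ B p) ∧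
      ∀ p ∈ U ×ˢ rect a0 τ c d, ‖A p - B p‖ ≤ ε := by
  obtain ⟨a, hτa, hab0⟩ := exists_between hτ
  obtain ⟨b, hab, hb⟩ := exists_between hab0
  have ha : a0 < a := hτ0.trans hτa
  obtain ⟨C, hC0, hC⟩ := cV_bound a b c d
  have hR := (isOpen_rect a b c d).measurableSet
  have hsub := rect_mono (c := c) (d := d) ha.le hb.le
  -- the centre of expansion lies so far to the left that the expansion converges geometrically
  let η := a - τ
  have hη : 0 < η := sub_pos.2 hτa
  let D := d - c
  let L : ℝ := 1 + |a0| + |τ| + D ^ 2 / η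
  have hD : 0 ≤ D ^ 2 / η := by positivity
  have hL0 : 1 ≤ a0 + L := by
    have := neg_abs_le a0
    have := abs_nonneg τ
    simp only [L]; linarith
  have hLt : 1 + D ^ 2 / η ≤ τ + L := by
    have := neg_abs_le τ
    have := abs_nonneg a0
    simp only [L]; linarith
  let p0 : ℂ := ⟨-L, c⟩
  let q : ℝ := √((τ + L) ^ 2 + D ^ 2) / (a + L)
  have haL : 1 ≤ a + L := by linarith
  have hq0 : 0 ≤ q := by positivity
  have hq1 : q < 1 := by
    rw [div_lt_one (by linarith), Real.sqrt_lt' (by linarith)]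
    have h1 : D ^ 2 / η * η = D ^ 2 := div_mul_cancel₀ _ hη.ne'
    have h2 : a + L = (τ + L) + η := by simp only [η]; ring
    rw [h2]
    nlinarith
  have hw1 : ∀ w ∈ rect a b c d, a + L ≤ ‖w - p0‖ := by
    intro w hw
    refine le_trans ?_ (Complex.re_le_norm _)
    simp only [Complex.sub_re, p0]
    linarith [hw.1.1]
  have hζ1 : ∀ ζ ∈ rect a0 τ c d, ‖ζ - p0‖ ≤ √((τ + L) ^ 2 + D ^ 2) := by
    intro ζ hζ
    rw [Complex.norm_eq_sqrt_sq_add_sq]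
    refine Real.sqrt_le_sqrt ?_
    simp only [Complex.sub_re, Complex.sub_im, p0, D]
    have h1 : 0 ≤ ζ.re - -L := by linarith [hζ.1.1]
    have h2 : 0 ≤ ζ.im - c := by linarith [hζ.2.1]
    gcongr ?_ ^ 2 + ?_ ^ 2
    · linarith [hζ.1.2]
    · linarith [hζ.2.2]
  have hr : ∀ w ∈ rect a b c d, ∀ ζ ∈ rect a0 τ c d, ‖(ζ - p0) / (w - p0)‖ ≤ q := by
    intro w hw ζ hζ
    rw [norm_div]
    exact div_le_div₀ (Real.sqrt_nonneg _) (hζ1 ζ hζ) (by linarith) (hw1 w hw)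
  -- the coefficients of the expansion in powers of `ζ - p0`
  let cf : ℕ → E → ℂ := fun k z => ∫ w in rect a b c d, A (z, w) * ((w - p0) ^ (k + 1))⁻¹
  have hkc : ∀ k : ℕ, ContinuousOn (fun w : ℂ => ((w - p0) ^ (k + 1))⁻¹) (rect a b c d) := by
    intro k
    refine ContinuousOn.inv₀ (by fun_prop) fun w hw => pow_ne_zero _ (norm_pos_iff.1 ?_)
    linarith [hw1 w hw]
  have hkb : ∀ k z, z ∈ U → ∀ w ∈ rect a b c d, ‖A (z, w) * ((w - p0) ^ (k + 1))⁻¹‖ ≤ M := by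
    intro k z hz w hw
    rw [norm_mul, norm_inv, norm_pow]
    have h1 := hM (z, w) ⟨hz, hsub hw⟩
    have h2 : (‖w - p0‖ ^ (k + 1))⁻¹ ≤ 1 :=
      inv_le_one_of_one_le₀ (one_le_pow₀ (haL.trans (hw1 w hw)))
    calc _ ≤ M * 1 := mul_le_mul h1 h2 (by positivity) hM0
      _ = M := mul_one M
  have hkm : ∀ k z, z ∈ U → AEStronglyMeasurable (fun w => A (z, w) * ((w - p0) ^ (k + 1))⁻¹)
      (volume.restrict (rect a b c d)) := fun k z hz =>
    (((slice_continuousOn hA hz).mono hsub).mul (hkc k)).aestronglyMeasurable hR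
  have hki : ∀ k z, z ∈ U → IntegrableOn (fun w => A (z, w) * ((w - p0) ^ (k + 1))⁻¹) (rect a b c d) := by
    intro k z hz
    refine Integrable.mono' (g := fun _ => M) (integrableOn_const (volume_rect_lt_top a b c d).ne) (hkm k z hz) ?_
    rw [ae_restrict_iff' hR]
    exact Eventually.of_forall (hkb k z hz)
  have hcf : ∀ k, AnalyticOnNhd ℂ (cf k) U := by
    intro k
    refine analytic_integral hU ?_ (hkm k) ?_
    · rw [ae_restrict_iff' hR]
      refine Eventually.of_forall fun w hw z hz => AnalyticAt.fun_mul ?_ analyticAt_const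
      exact AnalyticAt.fun_comp (g := A) (f := fun z : E => (z, w)) (hA _ ⟨hz, hsub hw⟩) (by fun_prop)
    · intro z hz
      refine ⟨fun _ => M, integrableOn_const (volume_rect_lt_top a b c d).ne, ?_⟩
      filter_upwards [hU.mem_nhds hz] with z hz
      rw [ae_restrict_iff' hR]
      exact Eventually.of_forall (hkb k z hz)
  obtain ⟨N, hN⟩ : ∃ N : ℕ, C * (M * q ^ N) < ε := by
    have h1 : Tendsto (fun N : ℕ => C * (M * q ^ N)) atTop (𝓝 (C * (M * 0))) :=
      ((tendsto_pow_atTop_nhds_zero_of_lt_one hq0 hq1).const_mul M).const_mul C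
    exact (h1.eventually_lt_const (by simpa using hε)).exists
  let κ : ℂ := ((2 * Real.pi * (b - a))⁻¹ : ℝ)
  let PN : E × ℂ → ℂ := fun p => κ * ∑ k ∈ Finset.range N, cf k p.1 * (p.2 - p0) ^ k
  refine ⟨fun p => PN p - S2 a b c d A p, ?_, ?_⟩
  · intro p hp h1 h2 h3
    refine AnalyticAt.fun_sub (analyticAt_const.fun_mul (Finset.analyticAt_fun_sum _ fun k _ => ?_))
      ((S_analytic hU ha hab hb hA hM).2 p hp h1 h2 h3)
    refine AnalyticAt.fun_mul ?_ (by fun_prop)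
    exact AnalyticAt.fun_comp (g := cf k) (f := fun p : E × ℂ => p.1) (hcf k _ hp) (by fun_prop)
  · intro p hp
    have h1 : A p - (PN p - S2 a b c d A p) = cV a b c d A p - PN p := by
      rw [← S1_sub_S2 a b c d A p, S1, chi_of_le hab (hp.2.1.2.trans hτa).le]
      push_cast; ring
    have h2 : cV a b c d A p - PN p = κ * ∫ w in rect a b c d,
        (fun r : E × ℂ => A r * ((p.2 - p0) / (r.2 - p0)) ^ N) (p.1, w) * (w - p.2)⁻¹ := by
      simp only [cV, PN, cf]
      rw [← mul_sub]
      congr 1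
      simp only [← integral_mul_const]
      rw [← integral_finsetSum _ fun k _ => (hki k p.1 hp.1).mul_const _, ← integral_sub
        (cV_integrable ha hb hA hM hp.1 p.2)
        (integrable_finsetSum _ fun k _ => (hki k p.1 hp.1).mul_const _)]
      refine setIntegral_congr_fun hR fun w hw => ?_
      have hwp : w - p0 ≠ 0 := norm_pos_iff.1 (by linarith [hw1 w hw])
      have hwζ : w - p.2 ≠ 0 := by
        intro h
        have := congrArg Complex.re h
        simp only [Complex.sub_re, Complex.zero_re] at this
        linarith [hw.1.1, hp.2.1.2]
      have hgeom : (∑ k ∈ Finset.range N, ((p.2 - p0) / (w - p0)) ^ k) * ((p.2 - p0) / (w - p0) - 1) =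
          ((p.2 - p0) / (w - p0)) ^ N - 1 := geom_sum_mul _ _
      have hsum : ∑ k ∈ Finset.range N, A (p.1, w) * ((w - p0) ^ (k + 1))⁻¹ * (p.2 - p0) ^ k =
          A (p.1, w) * (w - p0)⁻¹ * ∑ k ∈ Finset.range N, ((p.2 - p0) / (w - p0)) ^ k := by
        rw [Finset.mul_sum]
        refine Finset.sum_congr rfl fun k _ => ?_
        rw [div_pow, pow_succ]
        field_simp
      rw [hsum]
      have h3 : (p.2 - p0) / (w - p0) - 1 = -((w - p.2) * (w - p0)⁻¹) := by
        field_simp; ring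
      rw [h3] at hgeom
      have h4 : (w - p0)⁻¹ * ∑ k ∈ Finset.range N, ((p.2 - p0) / (w - p0)) ^ k =
          (1 - ((p.2 - p0) / (w - p0)) ^ N) * (w - p.2)⁻¹ := by
        rw [eq_mul_inv_iff_mul_eq₀ hwζ]
        linear_combination -hgeom
      rw [mul_assoc (A _), h4]
      ring
    rw [h1, h2]
    refine (hC (fun r : E × ℂ => A r * ((p.2 - p0) / (r.2 - p0)) ^ N) (M * q ^ N) p (by positivity) ?_).trans hN.le
    intro w hw
    rw [norm_mul, norm_pow]
    have := hr w hw p.2 hp.2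
    exact mul_le_mul (hM _ ⟨hp.1, hsub hw⟩) (by gcongr) (by positivity) hM0
end

/-! ### Theorems A and B: formal properties -/

section
variable {E : Type u} [NormedAddCommGroup E] [NormedSpace ℂ E] [FiniteDimensional ℂ E]
variable {F : Type u} [NormedAddCommGroup F] [NormedSpace ℂ F] [FiniteDimensional ℂ F]
variable {ι κ lam mu : Type} [Fintype ι] [Fintype κ] [Fintype lam] [Fintype mu]

/-- The columns of `t` are relations of `s` near each point of `K` and generate there, germ by germ,
all relations of `s`. -/
def Gens (s : E → Matrix ι κ ℂ) (t : E → Matrix κ lam ℂ) (K : Set E) : Prop :=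
  ∀ x ∈ K, AnM t x ∧ (∀ᶠ y in 𝓝 x, s y * t y = 0) ∧ GenAt s t x

/-- Cartan's Theorem A for relation sheaves on `K`: each has a finite system of generators defined
near all of `K`. -/
def ThmA (K : Set E) : Prop :=
  ∀ (ι κ : Type) [Fintype ι] [Fintype κ] (s : E → Matrix ι κ ℂ), (∀ x ∈ K, AnM s x) →
    ∃ (lam : Type) (_ : Fintype lam) (t : E → Matrix κ lam ℂ), Gens s t K

/-- Cartan's Theorem B on `K`, in the form needed here: a linear system `v = t c` which is solvable
locally is solvable globally. -/
def ThmB (K : Set E) : Prop :=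
  ∀ (κ lam : Type) [Fintype κ] [Fintype lam] (t : E → Matrix κ lam ℂ) (v : E → κ → ℂ),
    (∀ x ∈ K, AnM t x) → (∀ x ∈ K, AnalyticAt ℂ v x) →
    (∀ x ∈ K, ∃ c : E → lam → ℂ, AnalyticAt ℂ c x ∧ ∀ᶠ z in 𝓝 x, v z = t z *ᵥ c z) →
    ∃ c : E → lam → ℂ, ∀ x ∈ K, AnalyticAt ℂ c x ∧ ∀ᶠ z in 𝓝 x, v z = t z *ᵥ c z

lemma AnM.col {u : E → Matrix κ mu ℂ} {x : E} (h : AnM u x) (j : mu) :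
    AnalyticAt ℂ (fun z => (u z).col j) x := by
  rw [analyticAt_pi_iff]
  exact fun i => h i j

lemma AnM.of_cols {g : mu → E → lam → ℂ} {x : E} (h : ∀ j, AnalyticAt ℂ (g j) x) :
    AnM (fun z => Matrix.of fun i j => g j z i) x := fun i j => (analyticAt_pi_iff.1 (h j)) i

lemma eq_mul_of_cols {T : Matrix κ lam ℂ} {U : Matrix κ mu ℂ} {g : mu → lam → ℂ}
    (h : ∀ j, U.col j = T *ᵥ g j) : U = T * Matrix.of fun i j => g j i := by
  ext i j
  have := congrFun (h j) i
  simpa [Matrix.mul_apply, Matrix.mulVec, dotProduct] using this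

lemma GenAt.matrix {s : E → Matrix ι κ ℂ} {t : E → Matrix κ lam ℂ} {x : E} (h : GenAt s t x)
    {u : E → Matrix κ mu ℂ} (hu : AnM u x) (hsu : ∀ᶠ z in 𝓝 x, s z * u z = 0) :
    ∃ g : E → Matrix lam mu ℂ, AnM g x ∧ ∀ᶠ z in 𝓝 x, u z = t z * g z := by
  have h1 : ∀ j, ∃ g : E → lam → ℂ, AnalyticAt ℂ g x ∧ ∀ᶠ z in 𝓝 x, (u z).col j = t z *ᵥ g z := by
    intro j
    refine h _ (hu.col j) ?_
    filter_upwards [hsu] with z hz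
    ext i
    simpa [Matrix.mul_apply, Matrix.mulVec, dotProduct] using congrFun (congrFun hz i) j
  choose g hg hgu using h1
  refine ⟨_, AnM.of_cols hg, ?_⟩
  filter_upwards [eventually_all.2 hgu] with z hz using eq_mul_of_cols hz

lemma ThmB.matrix {K : Set E} (h : ThmB K) {t : E → Matrix κ lam ℂ} {u : E → Matrix κ mu ℂ}
    (ht : ∀ x ∈ K, AnM t x) (hu : ∀ x ∈ K, AnM u x)
    (hloc : ∀ x ∈ K, ∃ g : E → Matrix lam mu ℂ, AnM g x ∧ ∀ᶠ z in 𝓝 x, u z = t z * g z) :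
    ∃ g : E → Matrix lam mu ℂ, ∀ x ∈ K, AnM g x ∧ ∀ᶠ z in 𝓝 x, u z = t z * g z := by
  have h1 : ∀ j, ∃ c : E → lam → ℂ, ∀ x ∈ K, AnalyticAt ℂ c x ∧
      ∀ᶠ z in 𝓝 x, (u z).col j = t z *ᵥ c z := by
    intro j
    refine h _ _ t _ ht (fun x hx => (hu x hx).col j) fun x hx => ?_
    obtain ⟨g, hg, hgu⟩ := hloc x hx
    refine ⟨_, hg.col j, ?_⟩
    filter_upwards [hgu] with z hz
    ext i
    simpa [Matrix.mul_apply, Matrix.mulVec, dotProduct] using congrFun (congrFun hz i) j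
  choose g hg using h1
  refine ⟨fun z => Matrix.of fun i j => g j z i, fun x hx =>
    ⟨AnM.of_cols fun j => (hg j x hx).1, ?_⟩⟩
  filter_upwards [eventually_all.2 fun j => (hg j x hx).2] with z hz using eq_mul_of_cols hz

/-- By Oka's theorem, generators at a point are generators at all nearby points. -/
lemma GenAt.eventually {s : E → Matrix ι κ ℂ} {t : E → Matrix κ lam ℂ} {x : E} (hs : AnM s x)
    (h : GenAt s t x) : ∀ᶠ y in 𝓝 x, GenAt s t y := by
  obtain ⟨lam0, _, t0, ht0, h0⟩ := oka _ E rfl ι κ s x hs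
  obtain ⟨g, hg, hgt⟩ := h.matrix ht0 (by
    filter_upwards [h0] with y hy
    ext i j
    classical
    have := congrFun (hy.1 (Pi.single j 1)) i
    rw [mulVec_mulVec] at this
    simpa using this)
  filter_upwards [h0, hgt.eventually_nhds, hg.eventually] with y h1 h2 h3 c hc hsc
  obtain ⟨k, hk, hck⟩ := h1.2 c hc hsc
  refine ⟨fun z => g z *ᵥ k z, h3.mulVec hk, ?_⟩
  filter_upwards [hck, h2] with z h4 h5
  rw [h4, h5, mulVec_mulVec]

lemma Gens.mono {s : E → Matrix ι κ ℂ} {t : E → Matrix κ lam ℂ} {K L : Set E} (h : Gens s t K)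
    (hL : L ⊆ K) : Gens s t L := fun x hx => h x (hL hx)

lemma Gens.eventually {s : E → Matrix ι κ ℂ} {t : E → Matrix κ lam ℂ} {x : E} (hs : AnM s x)
    (h : Gens s t {x}) : ∀ᶠ y in 𝓝 x, Gens s t {y} := by
  obtain ⟨h1, h2, h3⟩ := h x rfl
  filter_upwards [h1.eventually, h2.eventually_nhds, h3.eventually hs] with y h1 h2 h3
  rintro _ rfl
  exact ⟨h1, h2, h3⟩

lemma thmA_empty : ThmA (∅ : Set E) := fun _ _ _ _ _ _ =>
  ⟨Unit, inferInstance, fun _ => 0, fun _ hx => hx.elim⟩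

lemma thmB_empty : ThmB (∅ : Set E) := fun _ _ _ _ _ _ _ _ _ => ⟨fun _ => 0, fun _ hx => hx.elim⟩

lemma thmA_singleton (x : E) : ThmA ({x} : Set E) := by
  intro ι κ _ _ s hs
  obtain ⟨lam0, _, t0, ht0, h0⟩ := oka _ E rfl ι κ s x (hs x rfl)
  refine ⟨lam0, inferInstance, t0, ?_⟩
  rintro _ rfl
  refine ⟨ht0, ?_, h0.self_of_nhds.2⟩
  filter_upwards [h0] with y hy
  ext i j
  classical
  have := congrFun (hy.1 (Pi.single j 1)) i
  rw [mulVec_mulVec] at this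
  simpa using this

lemma thmB_singleton (x : E) : ThmB ({x} : Set E) := by
  intro κ lam _ _ t v _ _ h
  obtain ⟨c, hc⟩ := h x rfl
  refine ⟨c, ?_⟩
  rintro _ rfl
  exact hc

lemma Gens.comp {s : E → Matrix ι κ ℂ} {t : E → Matrix κ lam ℂ} {K : Set E} (h : Gens s t K)
    (φ : F ≃L[ℂ] E) : Gens (fun z => s (φ z)) (fun z => t (φ z)) (φ ⁻¹' K) := by
  intro x hx
  obtain ⟨h1, h2, h3⟩ := h _ hx
  exact ⟨h1.comp (φ.toContinuousLinearMap.analyticAt x),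
    φ.continuous.continuousAt.tendsto.eventually h2,
    h3.comp (φ.toContinuousLinearMap.analyticAt x) (φ.symm.toContinuousLinearMap.analyticAt _)
      φ.apply_symm_apply φ.symm_apply_apply⟩

lemma ThmA.comp {K : Set E} (h : ThmA K) (φ : F ≃L[ℂ] E) : ThmA (φ ⁻¹' K) := by
  intro ι κ _ _ s hs
  obtain ⟨lam, _, t, ht⟩ := h ι κ (fun z => s (φ.symm z)) (fun x hx =>
    AnM.comp (φ := φ.symm) (hs _ (by simpa using hx)) (φ.symm.toContinuousLinearMap.analyticAt x))
  refine ⟨lam, inferInstance, fun z => t (φ z), ?_⟩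
  have := ht.comp φ
  simp only [φ.symm_apply_apply] at this
  exact this

lemma ThmB.comp {K : Set E} (h : ThmB K) (φ : F ≃L[ℂ] E) : ThmB (φ ⁻¹' K) := by
  intro κ lam _ _ t v ht hv hloc
  have ha : ∀ x : E, AnalyticAt ℂ φ.symm x := fun x => φ.symm.toContinuousLinearMap.analyticAt x
  have ha' : ∀ x : F, AnalyticAt ℂ φ x := fun x => φ.toContinuousLinearMap.analyticAt x
  have hK : ∀ x ∈ K, φ.symm x ∈ φ ⁻¹' K := fun x hx => by simpa using hx
  obtain ⟨c, hc⟩ := h κ lam (fun z => t (φ.symm z)) (fun z => v (φ.symm z))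
    (fun x hx => AnM.comp (φ := φ.symm) (ht _ (hK x hx)) (ha x))
    (fun x hx => AnalyticAt.fun_comp (g := v) (hv _ (hK x hx)) (ha x)) (fun x hx => by
      obtain ⟨c, hc, hcv⟩ := hloc _ (hK x hx)
      exact ⟨fun z => c (φ.symm z), AnalyticAt.fun_comp (g := c) hc (ha x),
        φ.symm.continuous.continuousAt.tendsto.eventually hcv⟩)
  refine ⟨fun z => c (φ z), fun x hx => ⟨AnalyticAt.fun_comp (g := c) (hc _ hx).1 (ha' x), ?_⟩⟩
  filter_upwards [φ.continuous.continuousAt.tendsto.eventually (hc _ hx).2] with z hz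
  simpa using hz

lemma GenAt.fromCols_left {s : E → Matrix ι κ ℂ} {t : E → Matrix κ lam ℂ} {t' : E → Matrix κ mu ℂ}
    {x : E} (h : GenAt s t x) : GenAt s (fun z => fromCols (t z) (t' z)) x := by
  intro c hc hsc
  obtain ⟨g, hg, hcg⟩ := h c hc hsc
  refine ⟨fun z => Sum.elim (g z) 0, ?_, ?_⟩
  · rw [analyticAt_pi_iff] at hg ⊢
    rintro (i | i)
    · exact hg i
    · exact analyticAt_const
  · filter_upwards [hcg] with z hz
    simp [fromCols_mulVec, hz]

lemma GenAt.fromCols_right {s : E → Matrix ι κ ℂ} {t : E → Matrix κ lam ℂ} {t' : E → Matrix κ mu ℂ}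
    {x : E} (h : GenAt s t' x) : GenAt s (fun z => fromCols (t z) (t' z)) x := by
  intro c hc hsc
  obtain ⟨g, hg, hcg⟩ := h c hc hsc
  refine ⟨fun z => Sum.elim 0 (g z), ?_, ?_⟩
  · rw [analyticAt_pi_iff] at hg ⊢
    rintro (i | i)
    · exact analyticAt_const
    · exact hg i
  · filter_upwards [hcg] with z hz
    simp [fromCols_mulVec, hz]

lemma AnM.fromCols {t : E → Matrix κ lam ℂ} {t' : E → Matrix κ mu ℂ} {x : E} (h : AnM t x)
    (h' : AnM t' x) : AnM (fun z => fromCols (t z) (t' z)) x := by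
  rintro i (j | j)
  · exact h i j
  · exact h' i j

/-- The closed rectangle `[a, b] + i [c, d]`. -/
def crect (a b c d : ℝ) : Set ℂ := {ζ | (a ≤ ζ.re ∧ ζ.re ≤ b) ∧ c ≤ ζ.im ∧ ζ.im ≤ d}

lemma crect_eq (a b c d : ℝ) : crect a b c d = Icc a b ×ℂ Icc c d := by
  ext ζ; simp [crect, Complex.mem_reProdIm]

lemma isCompact_crect (a b c d : ℝ) : IsCompact (crect a b c d) := by
  rw [crect_eq]; exact isCompact_Icc.reProdIm isCompact_Icc

lemma crect_mono {a b a' b' c d : ℝ} (ha : a' ≤ a) (hb : b ≤ b') : crect a b c d ⊆ crect a' b' c d :=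
  fun _ h => ⟨⟨ha.trans h.1.1, h.1.2.trans hb⟩, h.2⟩

/-- A property holding near a slice holds on a product neighbourhood of it. -/
lemma tube {Q : Set E} (hQ : IsCompact Q) {m c d : ℝ} (hcd : c ≤ d) {P : E × ℂ → Prop}
    (h : ∀ x ∈ Q ×ˢ crect m m c d, ∀ᶠ p in 𝓝 x, P p) :
    ∃ U : Set E, IsOpen U ∧ Q ⊆ U ∧ ∃ ε > 0,
      ∀ p ∈ U ×ˢ rect (m - ε) (m + ε) (c - ε) (d + ε), P p := by
  have h1 : Q ×ˢ crect m m c d ⊆ interior {p | P p} := fun x hx => mem_interior_iff_mem_nhds.2 (h x hx)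
  obtain ⟨U, V, hU, hV, hQU, hcV, hUV⟩ :=
    generalized_tube_lemma hQ (isCompact_crect m m c d) isOpen_interior h1
  obtain ⟨δ, hδ, hδV⟩ := (isCompact_crect m m c d).exists_thickening_subset_open hV hcV
  refine ⟨U, hU, hQU, δ / 2, by positivity, fun p hp => interior_subset (hUV ⟨hp.1, hδV ?_⟩)⟩
  obtain ⟨hpU, ⟨h1, h2⟩, h3, h4⟩ := hp
  rw [mem_thickening_iff]
  refine ⟨⟨m, max c (min p.2.im d)⟩, ⟨⟨le_rfl, le_rfl⟩, le_max_left _ _, max_le hcd (min_le_right _ _)⟩, ?_⟩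
  rw [Complex.dist_eq]
  refine (Complex.norm_le_abs_re_add_abs_im _).trans_lt ?_
  simp only [Complex.sub_re, Complex.sub_im]
  have h5 : |p.2.re - m| < δ / 2 := by rw [abs_lt]; constructor <;> linarith
  have h6 : |p.2.im - max c (min p.2.im d)| < δ / 2 := by
    rw [abs_lt]
    rcases max_cases c (min p.2.im d) with ⟨h, _⟩ | ⟨h, _⟩ <;>
      rcases min_cases p.2.im d with ⟨h', _⟩ | ⟨h', _⟩ <;> constructor <;> linarith
  linarith

/-- A property of intervals which holds for short ones and passes to unions of adjacent intervals
holds for all. -/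
lemma interval_induction {P : ℝ → ℝ → Prop} {α β : ℝ} (hαβ : α ≤ β)
    (hloc : ∀ τ ∈ Icc α β, ∃ ε > 0, ∀ l r, τ - ε < l → l ≤ r → r < τ + ε → P l r)
    (hmerge : ∀ l m r, α ≤ l → l ≤ m → m ≤ r → r ≤ β → P l m → P m r → P l r) : P α β := by
  choose! ε hε hP using hloc
  obtain ⟨t, h0, hmono, ⟨n, hn⟩, hc⟩ := exists_monotone_Icc_subset_open_cover_Icc
    (c := fun τ : Icc α β => (Subtype.val : Icc α β → ℝ) ⁻¹' Ioo (τ - ε τ) (τ + ε τ)) hαβ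
    (fun τ => isOpen_Ioo.preimage continuous_subtype_val) (fun x _ => mem_iUnion.2 ⟨x, by
      have := hε x x.2
      simp only [mem_preimage, mem_Ioo]; constructor <;> linarith⟩)
  have key : ∀ k, P (t k) (t (k + 1)) := by
    intro k
    obtain ⟨τ, hτ⟩ := hc k
    have hle : t k ≤ t (k + 1) := hmono (Nat.le_succ k)
    have h1 := hτ (left_mem_Icc.2 hle)
    have h2 := hτ (right_mem_Icc.2 hle)
    exact hP τ τ.2 _ _ h1.1 hle h2.2
  have key2 : ∀ k, P α (t (k + 1)) := by
    intro k
    induction k with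
    | zero =>
      have := key 0
      rwa [h0] at this
    | succ k ih =>
      exact hmerge _ _ _ le_rfl (t (k + 1)).2.1 (hmono (Nat.le_succ (k + 1))) (t (k + 1 + 1)).2.2 ih (key (k + 1))
  have := key2 n
  rwa [hn (n + 1) (Nat.le_succ n)] at this
end

/-! ### Cartan's factorisation -/

section
variable {E : Type u} [NormedAddCommGroup E] [NormedSpace ℂ E] [FiniteDimensional ℂ E]
variable {ι κ lam mu : Type} [Fintype ι] [Fintype κ] [Fintype lam] [Fintype mu]

/-- Matrices close to `1` are invertible. -/
lemma exists_det_ne_zero (m : Type*) [Fintype m] [DecidableEq m] :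
    ∃ ρ > 0, ∀ X : Matrix m m ℂ, (∀ i j, ‖X i j‖ ≤ ρ) → (1 + X).det ≠ 0 := by
  let D : (m → m → ℂ) → ℂ := fun X => (1 + Matrix.of X).det
  have hD : Continuous D := by
    refine Continuous.matrix_det (continuous_const.add ?_)
    exact continuous_id
  have h0 : D 0 ≠ 0 := by
    have : D 0 = 1 := by
      simp only [D]
      rw [show Matrix.of (0 : m → m → ℂ) = 0 from rfl, add_zero, Matrix.det_one]
    rw [this]; exact one_ne_zero
  obtain ⟨ρ, hρ, h⟩ := Metric.eventually_nhds_iff_ball.1 (hD.continuousAt.eventually_ne h0)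
  refine ⟨ρ / 2, by positivity, fun X hX => h (fun i j => X i j) ?_⟩
  rw [mem_ball_zero_iff]
  refine lt_of_le_of_lt ?_ (half_lt_self hρ)
  exact (pi_norm_le_iff_of_nonneg (by positivity)).2 fun i =>
    (pi_norm_le_iff_of_nonneg (by positivity)).2 fun j => hX i j

lemma AnM.bounded {K : Set E} (hK : IsCompact K) {A : E → Matrix κ lam ℂ} (hA : ∀ x ∈ K, AnM A x) :
    ∃ M : ℝ, 0 ≤ M ∧ ∀ x ∈ K, ∀ᶠ y in 𝓝 x, ∀ i j, ‖A y i j‖ ≤ M := by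
  have h1 : ∀ i j, ∃ C, ∀ x ∈ K, ‖A x i j‖ ≤ C := fun i j =>
    hK.exists_bound_of_continuousOn fun x hx => (hA x hx i j).continuousAt.continuousWithinAt
  choose C hC using h1
  refine ⟨∑ i, ∑ j, (|C i j| + 1), by positivity, fun x hx => ?_⟩
  refine eventually_all.2 fun i => eventually_all.2 fun j => ?_
  have h2 : ‖A x i j‖ < |C i j| + 1 := by
    have := hC i j x hx
    have := le_abs_self (C i j)
    linarith
  have h3 : |C i j| + 1 ≤ ∑ i, ∑ j, (|C i j| + 1) := by
    refine le_trans ?_ (Finset.single_le_sum (f := fun i => ∑ j, (|C i j| + 1))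
      (fun i _ => by positivity) (Finset.mem_univ i))
    exact Finset.single_le_sum (f := fun j => (|C i j| + 1)) (fun i _ => by positivity) (Finset.mem_univ j)
  have h4 : ContinuousAt (fun y => ‖A y i j‖) x := (hA x hx i j).continuousAt.norm
  filter_upwards [h4.eventually (gt_mem_nhds h2)] with y hy
  exact hy.le.trans h3

variable {U : Set E} {a0 a b b0 c d : ℝ}

/-- Entrywise Runge approximation of matrices. -/
lemma runge_matrix (hU : IsOpen U) {A : E × ℂ → Matrix κ lam ℂ} {M : ℝ}
    (hA : ∀ p ∈ U ×ˢ rect a0 b0 c d, AnM A p) (hM0 : 0 ≤ M)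
    (hM : ∀ p ∈ U ×ˢ rect a0 b0 c d, ∀ i j, ‖A p i j‖ ≤ M) {τ : ℝ} (hτ0 : a0 < τ) (hτ : τ < b0) {ε : ℝ}
    (hε : 0 < ε) :
    ∃ B : E × ℂ → Matrix κ lam ℂ,
      (∀ p : E × ℂ, p.1 ∈ U → a0 < p.2.re → c < p.2.im → p.2.im < d → AnM B p) ∧
      ∀ p ∈ U ×ˢ rect a0 τ c d, ∀ i j, ‖A p i j - B p i j‖ ≤ ε := by
  have h := fun i j => runge (A := fun p => A p i j) hU (fun p hp => hA p hp i j) hM0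
    (fun p hp => hM p hp i j) hτ0 hτ hε
  choose B hB hB' using h
  exact ⟨fun p => Matrix.of fun i j => B i j p, fun p h1 h2 h3 h4 i j => hB i j p h1 h2 h3 h4,
    fun p hp i j => hB' i j p hp⟩

/-- Factorisation of holomorphic matrices close to the identity: `(1 - e) (1 + Y₂) = 1 + Y₁` on the
strip, with `Y₁`, `Y₂` small and holomorphic to the left and to the right. -/
lemma cartan_factor [DecidableEq lam] (hU : IsOpen U) (ha : a0 < a) (hab : a < b) (hb : b < b0)
    {ρ : ℝ} (hρ : 0 < ρ) : ∃ η > 0, ∀ e : E × ℂ → Matrix lam lam ℂ,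
      (∀ p ∈ U ×ˢ rect a0 b0 c d, AnM e p) → (∀ p ∈ U ×ˢ rect a0 b0 c d, ∀ i j, ‖e p i j‖ ≤ η) →
      ∃ Y₁ Y₂ : E × ℂ → Matrix lam lam ℂ,
        (∀ p : E × ℂ, p.1 ∈ U → p.2.re < b0 → c < p.2.im → p.2.im < d →
          AnM Y₁ p ∧ ∀ i j, ‖Y₁ p i j‖ ≤ ρ) ∧
        (∀ p : E × ℂ, p.1 ∈ U → a0 < p.2.re → c < p.2.im → p.2.im < d → AnM Y₂ p) ∧
        ∀ p ∈ U ×ˢ rect a0 b0 c d, (1 - e p) * (1 + Y₂ p) = 1 + Y₁ p := by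
  obtain ⟨C, hC0, hC⟩ := S_bound.{u} a b c d
  let N : ℝ := Fintype.card lam
  have hN : 0 ≤ N := Nat.cast_nonneg _
  let δ := ρ / (C + 1)
  have hδ : 0 < δ := by positivity
  have hCδ : C * δ ≤ ρ := by
    have : (C + 1) * δ = ρ := by simp only [δ]; field_simp
    nlinarith
  let η := min (δ / 2) (1 / (2 * (N * C + 1)))
  have hη : 0 < η := lt_min (by positivity) (by positivity)
  have hη1 : η ≤ δ / 2 := min_le_left _ _
  have hη2 : N * (η * C) ≤ 1 / 2 := by
    have h1 : η ≤ 1 / (2 * (N * C + 1)) := min_le_right _ _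
    rw [le_div_iff₀ (by positivity)] at h1
    nlinarith [mul_nonneg hN hC0]
  refine ⟨η, hη, fun e he heη => ?_⟩
  set V := U ×ˢ rect a0 b0 c d with hV
  have hVo : IsOpen V := hU.prod (isOpen_rect a0 b0 c d)
  let Φ : (E × ℂ → lam × lam → ℂ) → (E × ℂ → lam × lam → ℂ) := fun g p ij =>
    - e p ij.1 ij.2 - ∑ k, e p ij.1 k * S2 a b c d (fun q => g q (k, ij.2)) p
  have hent : ∀ (g : E × ℂ → lam × lam → ℂ) (D : ℝ), (∀ p ∈ V, ‖g p‖ ≤ D) → ∀ ij, ∀ p ∈ V, ‖g p ij‖ ≤ D :=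
    fun g D h ij p hp => (norm_le_pi_norm _ _).trans (h p hp)
  have hD0 : ∀ (g : E × ℂ → lam × lam → ℂ) (D : ℝ), (∀ p ∈ V, ‖g p‖ ≤ D) → ∀ p ∈ V, 0 ≤ D :=
    fun g D h p hp => (norm_nonneg _).trans (h p hp)
  have hsum : ∀ p ∈ V, ∀ (i : lam) (T : lam → ℂ) (D : ℝ), 0 ≤ D → (∀ k, ‖T k‖ ≤ C * D) →
      ‖∑ k, e p i k * T k‖ ≤ D / 2 := by
    intro p hp i T D hD hT
    calc ‖∑ k, e p i k * T k‖ ≤ ∑ k : lam, η * (C * D) := by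
          refine norm_sum_le_of_le _ fun k _ => ?_
          rw [norm_mul]
          exact mul_le_mul (heη p hp i k) (hT k) (norm_nonneg _) hη.le
      _ = N * (η * C) * D := by simp [N]; ring
      _ ≤ 1 / 2 * D := by gcongr
      _ = D / 2 := by ring
  obtain ⟨y, hy, hyδ, hyΦ⟩ := analytic_fixedPoint (κ := lam × lam) hVo Φ hδ.le (fun g hg hgδ => by
      have hgc : ∀ ij, AnalyticOnNhd ℂ (fun q => g q ij) V := fun ij p hp =>
        (analyticAt_pi_iff.1 (hg p hp)) ij
      constructor
      · intro p hp
        rw [analyticAt_pi_iff]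
        intro ij
        refine (he p hp _ _).fun_neg.fun_sub (Finset.analyticAt_fun_sum _ fun k _ => (he p hp _ _).fun_mul ?_)
        exact (S_analytic hU ha hab hb (hgc _) (hent g δ hgδ _)).2 p hp.1 hp.2.1.1 hp.2.2.1 hp.2.2.2
      · intro p hp
        rw [pi_norm_le_iff_of_nonneg hδ.le]
        intro ij
        refine (norm_sub_le _ _).trans ?_
        rw [norm_neg]
        have h1 := hsum p hp ij.1 (fun k => S2 a b c d (fun q => g q (k, ij.2)) p) δ hδ.le (fun k =>
          (hC U a0 b0 (fun q => g q (k, ij.2)) δ ha hab hb hδ.le (hent g δ hgδ _)).2 p hp.1 hp.2.1.1 hp.2.2.1 hp.2.2.2)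
        have h2 := heη p hp ij.1 ij.2
        linarith) (fun g h hg hgδ hh hhδ D hD => by
      have hgc : ∀ ij, AnalyticOnNhd ℂ (fun q => g q ij) V := fun ij p hp =>
        (analyticAt_pi_iff.1 (hg p hp)) ij
      have hhc : ∀ ij, AnalyticOnNhd ℂ (fun q => h q ij) V := fun ij p hp =>
        (analyticAt_pi_iff.1 (hh p hp)) ij
      intro p hp
      have hD0 : 0 ≤ D := (norm_nonneg _).trans (hD p hp)
      rw [pi_norm_le_iff_of_nonneg (by positivity)]
      intro ij
      have h1 : (Φ g p - Φ h p) ij = - ∑ k, e p ij.1 k * S2 a b c d (fun q => g q (k, ij.2) - h q (k, ij.2)) p := by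
        simp only [Φ, Pi.sub_apply]
        rw [sub_sub_sub_cancel_left, ← Finset.sum_sub_distrib, ← Finset.sum_neg_distrib]
        refine Finset.sum_congr rfl fun k _ => ?_
        rw [← S2_sub ha hb (hgc _) (hent g δ hgδ _) (hhc _) (hent h δ hhδ _) hp.1]
        ring
      rw [h1, norm_neg]
      refine hsum p hp ij.1 _ D hD0 fun k => ?_
      refine (hC U a0 b0 _ D ha hab hb hD0 ?_).2 p hp.1 hp.2.1.1 hp.2.2.1 hp.2.2.2
      intro q hq
      exact (norm_le_pi_norm (g q - h q) (k, ij.2)).trans (hD q hq))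
  have hyc : ∀ ij, AnalyticOnNhd ℂ (fun q => y q ij) V := fun ij p hp =>
    (analyticAt_pi_iff.1 (hy p hp)) ij
  refine ⟨fun p => Matrix.of fun i j => S1 a b c d (fun q => y q (i, j)) p,
    fun p => Matrix.of fun i j => S2 a b c d (fun q => y q (i, j)) p, ?_, ?_, ?_⟩
  · intro p h1 h2 h3 h4
    refine ⟨fun i j => (S_analytic hU ha hab hb (hyc _) (hent y δ hyδ _)).1 p h1 h2 h3 h4, fun i j => ?_⟩
    exact ((hC U a0 b0 _ δ ha hab hb hδ.le (hent y δ hyδ _)).1 p h1 h2 h3 h4).trans hCδ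
  · intro p h1 h2 h3 h4 i j
    exact (S_analytic hU ha hab hb (hyc _) (hent y δ hyδ _)).2 p h1 h2 h3 h4
  · intro p hp
    ext i j
    have h1 := congrFun (hyΦ p hp) (i, j)
    simp only [Φ] at h1
    have h2 := S1_sub_S2 a b c d (fun q => y q (i, j)) p
    simp only [Matrix.sub_mul, Matrix.mul_add, Matrix.mul_one, Matrix.one_mul, Matrix.sub_apply, Matrix.add_apply,
      Matrix.of_apply, Matrix.mul_apply (M := e p)]
    linear_combination -h1 - h2
end

/-! ### Gluing along a face -/

section
variable {E : Type u} [NormedAddCommGroup E] [NormedSpace ℂ E] [FiniteDimensional ℂ E]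
variable {ι κ lam mu : Type} [Fintype ι] [Fintype κ] [Fintype lam] [Fintype mu]

open Classical in
/-- The function which is `f` to the left of the line `re = m` and `g` to the right. -/
noncomputable def glue {X : Type*} (m : ℝ) (f g : E × ℂ → X) (p : E × ℂ) : X :=
  if p.2.re < m then f p else g p

lemma glue_left {X : Type*} {m : ℝ} {f g : E × ℂ → X} {p : E × ℂ} (hp : p.2.re ≤ m)
    (h : p.2.re = m → ∀ᶠ q in 𝓝 p, f q = g q) : ∀ᶠ q in 𝓝 p, f q = glue m f g q := by
  rcases hp.lt_or_eq with hp | hp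
  · have : ContinuousAt (fun q : E × ℂ => q.2.re) p := by fun_prop
    filter_upwards [this.eventually (gt_mem_nhds hp)] with q hq
    rw [glue, if_pos hq]
  · filter_upwards [h hp] with q hq
    rw [glue]; split_ifs <;> simp [hq]

lemma glue_right {X : Type*} {m : ℝ} {f g : E × ℂ → X} {p : E × ℂ} (hp : m < p.2.re) :
    ∀ᶠ q in 𝓝 p, g q = glue m f g q := by
  have : ContinuousAt (fun q : E × ℂ => q.2.re) p := by fun_prop
  filter_upwards [this.eventually (lt_mem_nhds hp)] with q hq
  rw [glue, if_neg (not_lt.2 hq.le)]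

lemma AnM.add {s t : E → Matrix ι κ ℂ} {x : E} (hs : AnM s x) (ht : AnM t x) :
    AnM (fun z => s z + t z) x := fun i j => (hs i j).fun_add (ht i j)

lemma AnM.sub {s t : E → Matrix ι κ ℂ} {x : E} (hs : AnM s x) (ht : AnM t x) :
    AnM (fun z => s z - t z) x := fun i j => (hs i j).fun_sub (ht i j)

/-- Multiplying generators by an invertible holomorphic matrix gives generators. -/
lemma GenAt.mul_unit [DecidableEq lam] {s : E → Matrix ι κ ℂ} {t : E → Matrix κ lam ℂ}
    {X : E → Matrix lam lam ℂ} {T : E → Matrix κ lam ℂ} {x : E} (h : GenAt s t x) (hX : AnM X x)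
    (hdet : (X x).det ≠ 0) (hT : ∀ᶠ z in 𝓝 x, t z * X z = T z) : GenAt s T x := by
  intro c hc hsc
  obtain ⟨g, hg, hcg⟩ := h c hc hsc
  have hd := analyticAt_det hX
  have hadj : AnM (fun z => (X z).adjugate) x := fun i j => analyticAt_adjugate hX i j
  refine ⟨fun z => ((X z).det)⁻¹ • ((X z).adjugate *ᵥ g z), (hd.fun_inv hdet).smul (hadj.mulVec hg), ?_⟩
  filter_upwards [hcg, hT, hd.continuousAt.eventually_ne hdet] with z h1 h2 h3
  rw [h1, ← h2, mulVec_smul, mulVec_mulVec, Matrix.mul_assoc, mul_adjugate, Matrix.mul_smul, Matrix.mul_one,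
    smul_mulVec, smul_smul, inv_mul_cancel₀ h3, one_smul]

variable {Q : Set E} {l m r c d : ℝ}

/-- Generators on the left half extend to relations on the whole box that still generate on the
left half. -/
lemma gens_half (hQ : IsCompact Q) (hcd : c ≤ d) (hlm : l ≤ m) (hmr : m ≤ r)
    {s : E × ℂ → Matrix ι κ ℂ} {t₁ : E × ℂ → Matrix κ lam ℂ} {t₂ : E × ℂ → Matrix κ mu ℂ}
    (h₁ : Gens s t₁ (Q ×ˢ crect l m c d)) (h₂ : Gens s t₂ (Q ×ˢ crect m r c d))
    (hB : ThmB (Q ×ˢ crect m m c d)) :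
    ∃ T : E × ℂ → Matrix κ lam ℂ,
      (∀ x ∈ Q ×ˢ crect l r c d, AnM T x ∧ ∀ᶠ y in 𝓝 x, s y * T y = 0) ∧
      ∀ x ∈ Q ×ˢ crect l m c d, GenAt s T x := by
  classical
  have hS₁ : Q ×ˢ crect m m c d ⊆ Q ×ˢ crect l m c d := prod_mono_right (crect_mono hlm le_rfl)
  have hS₂ : Q ×ˢ crect m m c d ⊆ Q ×ˢ crect m r c d := prod_mono_right (crect_mono le_rfl hmr)
  have hSc : IsCompact (Q ×ˢ crect m m c d) := hQ.prod (isCompact_crect _ _ _ _)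
  obtain ⟨A, hA⟩ := hB.matrix (fun x hx => (h₂ x (hS₂ hx)).1) (fun x hx => (h₁ x (hS₁ hx)).1)
    (fun x hx => (h₂ x (hS₂ hx)).2.2.matrix (h₁ x (hS₁ hx)).1 (h₁ x (hS₁ hx)).2.1)
  obtain ⟨B, hB⟩ := hB.matrix (fun x hx => (h₁ x (hS₁ hx)).1) (fun x hx => (h₂ x (hS₂ hx)).1)
    (fun x hx => (h₁ x (hS₁ hx)).2.2.matrix (h₂ x (hS₂ hx)).1 (h₂ x (hS₂ hx)).2.1)
  obtain ⟨MA, hMA0, hMA⟩ := AnM.bounded hSc fun x hx => (hA x hx).1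
  obtain ⟨MB, hMB0, hMB⟩ := AnM.bounded hSc fun x hx => (hB x hx).1
  obtain ⟨U, hU, hQU, ε, hε, hP⟩ := tube hQ hcd (P := fun p => (AnM A p ∧ AnM B p) ∧
      (t₁ p = t₂ p * A p ∧ t₂ p = t₁ p * B p) ∧ (∀ i j, ‖A p i j‖ ≤ MA) ∧ ∀ i j, ‖B p i j‖ ≤ MB)
    fun x hx => ((hA x hx).1.eventually.and (hB x hx).1.eventually).and
      (((hA x hx).2.and (hB x hx).2).and ((hMA x hx).and (hMB x hx)))
  set c' := c - ε with hc'
  set d' := d + ε with hd'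
  obtain ⟨ρ, hρ, hdet⟩ := exists_det_ne_zero lam
  obtain ⟨η, hη, hfac⟩ := cartan_factor (lam := lam) (c := c') (d := d') hU
    (a0 := m - ε) (a := m - ε / 4) (b := m + ε / 4) (b0 := m + ε / 2)
    (by linarith) (by linarith) (by linarith) hρ
  let N : ℝ := Fintype.card mu
  have hN : 0 ≤ N := Nat.cast_nonneg _
  obtain ⟨P₀, hP₀, hP₀A⟩ := runge_matrix (τ := m + ε / 2) hU (fun p hp => (hP p hp).1.1) hMA0
    (fun p hp => (hP p hp).2.2.1) (by linarith) (by linarith) (ε := η / (N * MB + 1)) (by positivity)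
  have hsub : U ×ˢ rect (m - ε) (m + ε / 2) c' d' ⊆ U ×ˢ rect (m - ε) (m + ε) c' d' :=
    prod_mono_right (rect_mono le_rfl (by linarith))
  obtain ⟨Y₁, Y₂, hY₁, hY₂, hY⟩ := hfac (fun p => B p * (A p - P₀ p))
    (fun p hp => (hP p (hsub hp)).1.2.mul ((hP p (hsub hp)).1.1.sub
      (hP₀ p hp.1 hp.2.1.1 hp.2.2.1 hp.2.2.2))) (fun p hp i j => by
      rw [Matrix.mul_apply]
      calc _ ≤ ∑ k : mu, MB * (η / (N * MB + 1)) := by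
            refine norm_sum_le_of_le _ fun k _ => ?_
            rw [norm_mul]
            exact mul_le_mul ((hP p (hsub hp)).2.2.2 i k) (hP₀A p hp k j) (norm_nonneg _) hMB0
        _ = N * MB / (N * MB + 1) * η := by simp [N]; ring
        _ ≤ 1 * η := by
            gcongr
            rw [div_le_one (by positivity)]; linarith
        _ = η := one_mul η)
  let f : E × ℂ → Matrix κ lam ℂ := fun p => t₁ p * (1 + Y₁ p)
  let g : E × ℂ → Matrix κ lam ℂ := fun p => t₂ p * (P₀ p * (1 + Y₂ p))
  have hone : ∀ p : E × ℂ, AnM (fun _ => (1 : Matrix lam lam ℂ)) p := fun p => AnM.const _ _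
  have hleft : ∀ p ∈ Q ×ˢ crect l m c d, ∀ᶠ q in 𝓝 p, f q = glue m f g q := by
    rintro p ⟨hp1, hp2⟩
    refine glue_left hp2.1.2 fun hpm => ?_
    have hV : IsOpen (U ×ˢ rect (m - ε) (m + ε / 2) c' d') := hU.prod (isOpen_rect _ _ _ _)
    have hpV : p ∈ U ×ˢ rect (m - ε) (m + ε / 2) c' d' :=
      ⟨hQU hp1, ⟨by linarith, by linarith⟩, by linarith [hp2.2.1], by linarith [hp2.2.2]⟩
    filter_upwards [hV.mem_nhds hpV] with q hq
    obtain ⟨-, ⟨h3, h4⟩, -⟩ := hP q (hsub hq)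
    simp only [f, g]
    rw [← hY q hq, ← Matrix.mul_assoc, ← Matrix.mul_assoc]
    congr 1
    rw [Matrix.mul_sub, Matrix.mul_sub, Matrix.mul_sub, Matrix.mul_one, ← Matrix.mul_assoc, ← Matrix.mul_assoc, ← h4, ← h3]
    abel
  have hfan : ∀ p ∈ Q ×ˢ crect l m c d, AnM (fun q => 1 + Y₁ q) p := fun p hp =>
    (hone p).add (hY₁ p (hQU hp.1) (by linarith [hp.2.1.2]) (by linarith [hp.2.2.1]) (by linarith [hp.2.2.2])).1
  refine ⟨glue m f g, fun p hp => ?_, fun p hp => ?_⟩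
  · rcases le_or_gt p.2.re m with h | h
    · have hpl : p ∈ Q ×ˢ crect l m c d := ⟨hp.1, ⟨hp.2.1.1, h⟩, hp.2.2⟩
      refine ⟨AnM.congr ((h₁ p hpl).1.mul (hfan p hpl)) (hleft p hpl), ?_⟩
      filter_upwards [hleft p hpl, (h₁ p hpl).2.1] with q h1 h2
      rw [← h1, ← Matrix.mul_assoc, h2, Matrix.zero_mul]
    · have hpr : p ∈ Q ×ˢ crect m r c d := ⟨hp.1, ⟨h.le, hp.2.1.2⟩, hp.2.2⟩
      have h1 : m - ε < p.2.re := by linarith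
      have h2 : c' < p.2.im := by linarith [hp.2.2.1]
      have h3 : p.2.im < d' := by linarith [hp.2.2.2]
      refine ⟨AnM.congr ((h₂ p hpr).1.mul ((hP₀ p (hQU hp.1) h1 h2 h3).mul
        ((hone p).add (hY₂ p (hQU hp.1) h1 h2 h3)))) (glue_right h), ?_⟩
      filter_upwards [glue_right (f := f) (g := g) h, (h₂ p hpr).2.1] with q h1 h2
      rw [← h1, ← Matrix.mul_assoc, h2, Matrix.zero_mul]
  · refine (h₁ p hp).2.2.mul_unit (hfan p hp) (hdet _ ?_) (hleft p hp)
    exact (hY₁ p (hQU hp.1) (by linarith [hp.2.1.2]) (by linarith [hp.2.2.1]) (by linarith [hp.2.2.2])).2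

/-- The reflection `(z, ζ) ↦ (z, -ζ)`. -/
noncomputable def mirror (E : Type u) [NormedAddCommGroup E] [NormedSpace ℂ E] : (E × ℂ) ≃L[ℂ] (E × ℂ) :=
  (ContinuousLinearEquiv.refl ℂ E).prodCongr (ContinuousLinearEquiv.neg ℂ)

lemma mirror_apply (p : E × ℂ) : mirror E p = (p.1, -p.2) := rfl

lemma mirror_preimage (Q : Set E) (a b c d : ℝ) :
    mirror E ⁻¹' (Q ×ˢ crect a b c d) = Q ×ˢ crect (-b) (-a) (-d) (-c) := by
  ext p
  simp only [mem_preimage, mirror_apply, mem_prod, crect, mem_ofPred_eq, Complex.neg_re, Complex.neg_im]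
  constructor <;> rintro ⟨h1, ⟨h2, h3⟩, h4, h5⟩ <;>
    exact ⟨h1, ⟨by linarith, by linarith⟩, by linarith, by linarith⟩

/-- Generators on two adjacent boxes give generators on their union, by `gens_half` and its mirror
image. -/
lemma gens_merge (hQ : IsCompact Q) (hcd : c ≤ d) (hlm : l ≤ m) (hmr : m ≤ r)
    {s : E × ℂ → Matrix ι κ ℂ} {t₁ : E × ℂ → Matrix κ lam ℂ} {t₂ : E × ℂ → Matrix κ mu ℂ}
    (h₁ : Gens s t₁ (Q ×ˢ crect l m c d)) (h₂ : Gens s t₂ (Q ×ˢ crect m r c d))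
    (hB : ThmB (Q ×ˢ crect m m c d)) :
    ∃ T : E × ℂ → Matrix κ (lam ⊕ mu) ℂ, Gens s T (Q ×ˢ crect l r c d) := by
  obtain ⟨T₁, hT₁, hG₁⟩ := gens_half hQ hcd hlm hmr h₁ h₂ hB
  have h₁' := h₁.comp (mirror E)
  have h₂' := h₂.comp (mirror E)
  have hB' := hB.comp (mirror E)
  rw [mirror_preimage] at h₁' h₂' hB'
  obtain ⟨T₂, hT₂, hG₂⟩ := gens_half hQ (neg_le_neg hcd) (neg_le_neg hmr) (neg_le_neg hlm) h₂' h₁' hB'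
  have hmm : ∀ p : E × ℂ, mirror E (mirror E p) = p := fun p => by simp [mirror_apply]
  have han : ∀ p, AnalyticAt ℂ (mirror E) p := fun p => (mirror E).toContinuousLinearMap.analyticAt p
  have hpre : ∀ {a b : ℝ} {p : E × ℂ}, p ∈ Q ×ˢ crect a b c d →
      mirror E p ∈ Q ×ˢ crect (-b) (-a) (-d) (-c) := by
    intro a b p hp
    rw [← mirror_preimage, mem_preimage, hmm]; exact hp
  refine ⟨fun p => fromCols (T₁ p) (T₂ (mirror E p)), fun p hp => ⟨?_, ?_, ?_⟩⟩
  · exact (hT₁ p hp).1.fromCols ((hT₂ _ (hpre hp)).1.comp (han p))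
  · filter_upwards [(hT₁ p hp).2, (han p).continuousAt.tendsto.eventually (hT₂ _ (hpre hp)).2] with q h1 h2
    rw [hmm] at h2
    rw [mul_fromCols, h1, h2, fromCols_zero]
  · rcases le_total p.2.re m with h | h
    · exact (hG₁ p ⟨hp.1, ⟨hp.2.1.1, h⟩, hp.2.2⟩).fromCols_left
    · refine GenAt.fromCols_right ?_
      have := (hG₂ _ (hpre (a := m) (b := r) ⟨hp.1, ⟨h, hp.2.1.2⟩, hp.2.2⟩)).comp (han p) (han _) hmm hmm
      simp only [hmm] at this
      exact this

/-- Solutions of `v = t c` on two adjacent boxes give a solution on the union: the difference of the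
two is a relation of `t` on the common face, hence a combination of the generators `u`, whose
coefficients are split additively. -/
lemma solve_merge (hQ : IsCompact Q) (hcd : c ≤ d) (hlm : l ≤ m) (hmr : m ≤ r)
    {t : E × ℂ → Matrix κ lam ℂ} {v : E × ℂ → κ → ℂ} {u : E × ℂ → Matrix lam mu ℂ}
    (hu : Gens t u (Q ×ˢ crect l r c d))
    {c₁ c₂ : E × ℂ → lam → ℂ}
    (h₁ : ∀ x ∈ Q ×ˢ crect l m c d, AnalyticAt ℂ c₁ x ∧ ∀ᶠ z in 𝓝 x, v z = t z *ᵥ c₁ z)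
    (h₂ : ∀ x ∈ Q ×ˢ crect m r c d, AnalyticAt ℂ c₂ x ∧ ∀ᶠ z in 𝓝 x, v z = t z *ᵥ c₂ z)
    (hB : ThmB (Q ×ˢ crect m m c d)) :
    ∃ c' : E × ℂ → lam → ℂ, ∀ x ∈ Q ×ˢ crect l r c d, AnalyticAt ℂ c' x ∧
      ∀ᶠ z in 𝓝 x, v z = t z *ᵥ c' z := by
  have hS₁ : Q ×ˢ crect m m c d ⊆ Q ×ˢ crect l m c d := prod_mono_right (crect_mono hlm le_rfl)
  have hS₂ : Q ×ˢ crect m m c d ⊆ Q ×ˢ crect m r c d := prod_mono_right (crect_mono le_rfl hmr)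
  have hS : Q ×ˢ crect m m c d ⊆ Q ×ˢ crect l r c d := prod_mono_right (crect_mono hlm hmr)
  have hSc : IsCompact (Q ×ˢ crect m m c d) := hQ.prod (isCompact_crect _ _ _ _)
  have hdiff : ∀ x ∈ Q ×ˢ crect m m c d, AnalyticAt ℂ (fun z => c₁ z - c₂ z) x := fun x hx =>
    (h₁ x (hS₁ hx)).1.fun_sub (h₂ x (hS₂ hx)).1
  obtain ⟨e, he⟩ := hB _ _ u (fun z => c₁ z - c₂ z) (fun x hx => (hu x (hS hx)).1) hdiff fun x hx => by
    refine (hu x (hS hx)).2.2 _ (hdiff x hx) ?_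
    filter_upwards [(h₁ x (hS₁ hx)).2, (h₂ x (hS₂ hx)).2] with z h3 h4
    rw [mulVec_sub, ← h3, ← h4, sub_self]
  have hem : ∀ x ∈ Q ×ˢ crect m m c d, AnM (fun z => Matrix.of fun i (_ : Unit) => e z i) x :=
    fun x hx i _ => analyticAt_pi_iff.1 (he x hx).1 i
  obtain ⟨M, hM0, hM⟩ := AnM.bounded hSc hem
  obtain ⟨U, hU, hQU, ε, hε, hP⟩ := tube hQ hcd (P := fun p =>
      AnM (fun z => Matrix.of fun i (_ : Unit) => e z i) p ∧ c₁ p - c₂ p = u p *ᵥ e p ∧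
      ∀ i (j : Unit), ‖(Matrix.of fun i (_ : Unit) => e p i) i j‖ ≤ M)
    fun x hx => (hem x hx).eventually.and ((he x hx).2.and (hM x hx))
  set cc := c - ε with hc'
  set dd := d + ε with hd'
  let S₁ : E × ℂ → mu → ℂ := fun p i => S1 (m - ε / 2) (m + ε / 2) cc dd (fun q => e q i) p
  let S₂ : E × ℂ → mu → ℂ := fun p i => S2 (m - ε / 2) (m + ε / 2) cc dd (fun q => e q i) p
  have hSan := fun i => S_analytic (a0 := m - ε) (a := m - ε / 2) (b := m + ε / 2) (b0 := m + ε) (c := cc) (d := dd) hU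
    (by linarith) (by linarith) (by linarith)
    (g := fun q => e q i) (fun p hp => (hP p hp).1 i ()) (fun p hp => (hP p hp).2.2 i ())
  let f : E × ℂ → lam → ℂ := fun p => c₁ p - u p *ᵥ S₁ p
  let g : E × ℂ → lam → ℂ := fun p => c₂ p - u p *ᵥ S₂ p
  have hleft : ∀ p ∈ Q ×ˢ crect l m c d, ∀ᶠ q in 𝓝 p, f q = glue m f g q := by
    rintro p ⟨hp1, hp2⟩
    refine glue_left hp2.1.2 fun hpm => ?_
    have hV : IsOpen (U ×ˢ rect (m - ε) (m + ε) cc dd) := hU.prod (isOpen_rect _ _ _ _)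
    have hpV : p ∈ U ×ˢ rect (m - ε) (m + ε) cc dd :=
      ⟨hQU hp1, ⟨by linarith, by linarith⟩, by linarith [hp2.2.1], by linarith [hp2.2.2]⟩
    filter_upwards [hV.mem_nhds hpV] with q hq
    have h3 := (hP q hq).2.1
    have h4 : e q = S₁ q - S₂ q := by
      ext i
      exact (S1_sub_S2 (m - ε / 2) (m + ε / 2) cc dd (fun q => e q i) q).symm
    rw [h4, mulVec_sub] at h3
    simp only [f, g]
    rw [sub_eq_sub_iff_sub_eq_sub, h3]
  refine ⟨glue m f g, fun p hp => ?_⟩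
  obtain ⟨hu1, hu2, -⟩ := hu p hp
  rcases le_or_gt p.2.re m with h | h
  · have hpl : p ∈ Q ×ˢ crect l m c d := ⟨hp.1, ⟨hp.2.1.1, h⟩, hp.2.2⟩
    refine ⟨AnalyticAt.congr ((h₁ p hpl).1.fun_sub (hu1.mulVec (analyticAt_pi_iff.2 fun i =>
      (hSan i).1 p (hQU hp.1) (by linarith) (by linarith [hp.2.2.1]) (by linarith [hp.2.2.2]))))
      (hleft p hpl), ?_⟩
    filter_upwards [hleft p hpl, hu2, (h₁ p hpl).2] with q h1 h2 h3
    rw [← h1, mulVec_sub, ← h3, mulVec_mulVec, h2, zero_mulVec, sub_zero]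
  · have hpr : p ∈ Q ×ˢ crect m r c d := ⟨hp.1, ⟨h.le, hp.2.1.2⟩, hp.2.2⟩
    refine ⟨AnalyticAt.congr ((h₂ p hpr).1.fun_sub (hu1.mulVec (analyticAt_pi_iff.2 fun i =>
      (hSan i).2 p (hQU hp.1) (by linarith) (by linarith [hp.2.2.1]) (by linarith [hp.2.2.2]))))
      (glue_right h), ?_⟩
    filter_upwards [glue_right (f := f) (g := g) h, hu2, (h₂ p hpr).2] with q h1 h2 h3
    rw [← h1, mulVec_sub, ← h3, mulVec_mulVec, h2, zero_mulVec, sub_zero]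

/-- Theorems A and B pass from all slices of a box to the box. -/
lemma step (hQ : IsCompact Q) {α β : ℝ} (c d : ℝ)
    (h : ∀ τ ∈ Icc α β, ThmA (Q ×ˢ crect τ τ c d) ∧ ThmB (Q ×ˢ crect τ τ c d)) :
    ThmA (Q ×ˢ crect α β c d) ∧ ThmB (Q ×ˢ crect α β c d) := by
  by_cases hne : α ≤ β ∧ c ≤ d
  swap
  · have : crect α β c d = ∅ := by
      refine eq_empty_of_forall_notMem fun ζ hζ => hne ⟨hζ.1.1.trans hζ.1.2, hζ.2.1.trans hζ.2.2⟩
    rw [this, prod_empty]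
    exact ⟨thmA_empty, thmB_empty⟩
  obtain ⟨hαβ, hcd⟩ := hne
  have hsl : ∀ τ ∈ Icc α β, Q ×ˢ crect τ τ c d ⊆ Q ×ˢ crect α β c d := fun τ hτ =>
    prod_mono_right (crect_mono hτ.1 hτ.2)
  have hA : ThmA (Q ×ˢ crect α β c d) := by
    intro ι κ _ _ s hs
    refine interval_induction (P := fun l r => ∃ (lam : Type) (_ : Fintype lam) (t : E × ℂ → Matrix κ lam ℂ),
      Gens s t (Q ×ˢ crect l r c d)) hαβ ?_ ?_
    · intro τ hτ
      obtain ⟨lam, _, t, ht⟩ := (h τ hτ).1 ι κ s (fun x hx => hs x (hsl τ hτ hx))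
      obtain ⟨U, hU, hQU, ε, hε, h2⟩ := tube hQ hcd (P := fun p => Gens s t {p}) fun x hx =>
        Gens.eventually (hs x (hsl τ hτ hx)) (ht.mono (singleton_subset_iff.2 hx))
      refine ⟨ε, hε, fun l r h3 h4 h5 => ⟨lam, inferInstance, t, fun p hp => h2 p ⟨hQU hp.1,
        ⟨h3.trans_le hp.2.1.1, hp.2.1.2.trans_lt h5⟩, ?_, ?_⟩ p rfl⟩⟩
      · linarith [hp.2.2.1]
      · linarith [hp.2.2.2]
    · rintro l m r h1 h2 h3 h4 ⟨lam, _, t₁, ht₁⟩ ⟨mu, _, t₂, ht₂⟩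
      obtain ⟨T, hT⟩ := gens_merge hQ hcd h2 h3 ht₁ ht₂ (h m ⟨h1.trans h2, h3.trans h4⟩).2
      exact ⟨_, inferInstance, T, hT⟩
  refine ⟨hA, ?_⟩
  intro κ lam _ _ t v ht hv hl
  obtain ⟨mu, _, u, hu⟩ := hA κ lam t ht
  refine interval_induction (P := fun l r => ∃ c' : E × ℂ → lam → ℂ, ∀ x ∈ Q ×ˢ crect l r c d,
    AnalyticAt ℂ c' x ∧ ∀ᶠ z in 𝓝 x, v z = t z *ᵥ c' z) hαβ ?_ ?_
  · intro τ hτ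
    obtain ⟨c', hc'⟩ := (h τ hτ).2 κ lam t v (fun x hx => ht x (hsl τ hτ hx)) (fun x hx => hv x (hsl τ hτ hx))
      (fun x hx => hl x (hsl τ hτ hx))
    obtain ⟨U, hU, hQU, ε, hε, h2⟩ := tube hQ hcd (P := fun x => AnalyticAt ℂ c' x ∧
      ∀ᶠ z in 𝓝 x, v z = t z *ᵥ c' z) fun x hx =>
        (hc' x hx).1.eventually_analyticAt.and (hc' x hx).2.eventually_nhds
    refine ⟨ε, hε, fun l r h3 h4 h5 => ⟨c', fun p hp => h2 p ⟨hQU hp.1,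
      ⟨h3.trans_le hp.2.1.1, hp.2.1.2.trans_lt h5⟩, ?_, ?_⟩⟩⟩
    · linarith [hp.2.2.1]
    · linarith [hp.2.2.2]
  · rintro l m r h1 h2 h3 h4 ⟨c₁, hc₁⟩ ⟨c₂, hc₂⟩
    exact solve_merge hQ hcd h2 h3 (hu.mono (prod_mono_right (crect_mono h1 h4))) hc₁ hc₂
      (h m ⟨h1.trans h2, h3.trans h4⟩).2
end

/-! ### Theorems A and B on boxes -/

section
variable {n : ℕ}

/-- The coordinates `(zᵢ)_{i ≠ j}` and `θ zⱼ`. -/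
noncomputable def split (j : Fin n) (θ : ℂ) (hθ : θ ≠ 0) : (Fin n → ℂ) ≃L[ℂ] ({i // i ≠ j} → ℂ) × ℂ :=
  LinearEquiv.toContinuousLinearEquiv
  { toFun := fun z => (fun i => z i, θ * z j)
    map_add' := fun z w => by ext <;> simp [mul_add]
    map_smul' := fun r z => by ext <;> simp; ring
    invFun := fun p i => if h : i = j then θ⁻¹ * p.2 else p.1 ⟨i, h⟩
    left_inv := fun z => by
      ext i
      by_cases h : i = j
      · subst h; simp [hθ]
      · simp [h]
    right_inv := fun p => by
      refine Prod.ext ?_ ?_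
      · funext i
        simp [i.2]
      · simp [hθ] }

lemma split_apply (j : Fin n) (θ : ℂ) (hθ : θ ≠ 0) (z : Fin n → ℂ) :
    split j θ hθ z = ((fun i : {i // i ≠ j} => z i), θ * z j) := rfl

/-- The closed box of all `z` with `aᵢ ≤ re zᵢ ≤ bᵢ` and `cᵢ ≤ im zᵢ ≤ dᵢ`. -/
def box (a b c d : Fin n → ℝ) : Set (Fin n → ℂ) := {z | ∀ i, z i ∈ crect (a i) (b i) (c i) (d i)}

/-- The box in the coordinates other than the `j`-th. -/
def boxAt (j : Fin n) (a b c d : Fin n → ℝ) : Set ({i // i ≠ j} → ℂ) :=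
  {z | ∀ i : {i // i ≠ j}, z i ∈ crect (a i) (b i) (c i) (d i)}

lemma isCompact_boxAt (j : Fin n) (a b c d : Fin n → ℝ) : IsCompact (boxAt j a b c d) := by
  have := isCompact_univ_pi fun i : {i // i ≠ j} => isCompact_crect (a i) (b i) (c i) (d i)
  convert this using 1
  ext z; simp [boxAt]

lemma isCompact_box (a b c d : Fin n → ℝ) : IsCompact (box a b c d) := by
  have := isCompact_univ_pi fun i : Fin n => isCompact_crect (a i) (b i) (c i) (d i)
  convert this using 1
  ext z; simp [box]

lemma mem_box_iff (j : Fin n) (a b c d : Fin n → ℝ) (z : Fin n → ℂ) :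
    z ∈ box a b c d ↔ (fun i : {i // i ≠ j} => z i) ∈ boxAt j a b c d ∧ z j ∈ crect (a j) (b j) (c j) (d j) := by
  constructor
  · exact fun h => ⟨fun i => h i, h j⟩
  · rintro ⟨h1, h2⟩ i
    by_cases h : i = j
    · rw [h]; exact h2
    · exact h1 ⟨i, h⟩

lemma box_eq_re (j : Fin n) (a b c d : Fin n → ℝ) :
    box a b c d = split j 1 one_ne_zero ⁻¹' (boxAt j a b c d ×ˢ crect (a j) (b j) (c j) (d j)) := by
  ext z
  rw [mem_box_iff j]
  simp [split_apply]

lemma box_eq_im (j : Fin n) (a b c d : Fin n → ℝ) :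
    box a b c d = split j (-Complex.I) (neg_ne_zero.2 Complex.I_ne_zero) ⁻¹'
      (boxAt j a b c d ×ˢ crect (c j) (d j) (-b j) (-a j)) := by
  ext z
  rw [mem_box_iff j]
  simp only [split_apply, mem_preimage, mem_prod, crect, mem_ofPred_eq]
  refine and_congr_right fun _ => ?_
  simp
  tauto

lemma boxAt_update (j : Fin n) (a b c d : Fin n → ℝ) (x y z w : ℝ) :
    boxAt j (Function.update a j x) (Function.update b j y) (Function.update c j z) (Function.update d j w) =
      boxAt j a b c d := by
  ext v
  refine forall_congr' fun i => ?_
  simp [Function.update_of_ne i.2]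

lemma thmAB_comp_iff {E F : Type} [NormedAddCommGroup E] [NormedSpace ℂ E] [FiniteDimensional ℂ E]
    [NormedAddCommGroup F] [NormedSpace ℂ F] [FiniteDimensional ℂ F] (φ : F ≃L[ℂ] E) (K : Set E) :
    (ThmA (φ ⁻¹' K) ∧ ThmB (φ ⁻¹' K)) ↔ ThmA K ∧ ThmB K := by
  refine ⟨fun h => ?_, fun h => ⟨h.1.comp φ, h.2.comp φ⟩⟩
  have hpre : φ.symm ⁻¹' (φ ⁻¹' K) = K := by ext; simp
  rw [← hpre]
  exact ⟨h.1.comp φ.symm, h.2.comp φ.symm⟩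

/-- Theorems A and B hold on closed boxes. -/
theorem cartan_box (a b c d : Fin n → ℝ) : ThmA (box a b c d) ∧ ThmB (box a b c d) := by
  have key : ∀ S : Finset (Fin n), ∀ a b c d : Fin n → ℝ, (∀ i ∉ S, a i = b i ∧ c i = d i) →
      ThmA (box a b c d) ∧ ThmB (box a b c d) := by
    intro S
    induction S using Finset.induction_on with
    | empty =>
      intro a b c d h
      have : box a b c d = {fun i => ⟨a i, c i⟩} := by
        ext z
        simp only [box, mem_ofPred_eq, mem_singleton_iff]
        constructor
        · intro hz
          ext i
          obtain ⟨h1, h2⟩ := h i (Finset.notMem_empty i)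
          have := hz i
          simp only [crect, mem_ofPred_eq, ← h1, ← h2] at this
          exact Complex.ext (le_antisymm this.1.2 this.1.1) (le_antisymm this.2.2 this.2.1)
        · rintro rfl i
          obtain ⟨h1, h2⟩ := h i (Finset.notMem_empty i)
          simp [crect, h1, h2]
      rw [this]
      exact ⟨thmA_singleton _, thmB_singleton _⟩
    | insert j S hj ih =>
      -- first the boxes which are degenerate in the direction of `re zⱼ`
      have step1 : ∀ a b c d : Fin n → ℝ, (∀ i ∉ insert j S, a i = b i ∧ c i = d i) → a j = b j →
          ThmA (box a b c d) ∧ ThmB (box a b c d) := by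
        intro a b c d h hab
        rw [box_eq_im j]
        rw [thmAB_comp_iff]
        refine step (isCompact_boxAt j a b c d) _ _ fun τ _ => ?_
        have h1 := ih a b (Function.update c j τ) (Function.update d j τ) (fun i hi => by
          by_cases hij : i = j
          · subst hij; simp [hab]
          · simpa [hij] using h i (by simp [hij, hi]))
        rw [box_eq_im j] at h1
        have h2 := boxAt_update j a b c d (a j) (b j) τ τ
        rw [Function.update_eq_self, Function.update_eq_self] at h2
        rw [h2, Function.update_self, Function.update_self] at h1
        exact (thmAB_comp_iff _ _).1 h1
      intro a b c d h
      rw [box_eq_re j]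
      rw [thmAB_comp_iff]
      refine step (isCompact_boxAt j a b c d) _ _ fun τ _ => ?_
      have h1 := step1 (Function.update a j τ) (Function.update b j τ) c d (fun i hi => by
        have hij : i ≠ j := fun h => hi (by simp [h])
        simpa [hij] using h i hi) (by simp)
      rw [box_eq_re j] at h1
      have h2 := boxAt_update j a b c d τ τ (c j) (d j)
      rw [Function.update_eq_self, Function.update_eq_self] at h2
      rw [h2, Function.update_self, Function.update_self] at h1
      exact (thmAB_comp_iff _ _).1 h1
  exact key Finset.univ a b c d fun i hi => absurd (Finset.mem_univ i) hi
end

/-! ### Approximation by entire relations -/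

section
variable {E : Type*} [NormedAddCommGroup E] [NormedSpace ℂ E] [FiniteDimensional ℂ E]
variable {G : Type*} [NormedAddCommGroup G] [NormedSpace ℂ G] [CompleteSpace G]

/-- Taylor approximation: the homogeneous Taylor polynomials at the centre of a ball converge
uniformly on the ball of half the radius, by the Cauchy estimates along complex lines. -/
lemma taylor_approx {R : ℝ} (hR : 0 < R) {f : E → G} (hf : ∀ z ∈ closedBall (0 : E) R, AnalyticAt ℂ f z)
    {ε : ℝ} (hε : 0 < ε) : ∃ g : E → G, (∀ z, AnalyticAt ℂ g z) ∧
      ∀ z ∈ closedBall (0 : E) (R / 2), ‖f z - g z‖ ≤ ε := by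
  have hc : ProperSpace E := FiniteDimensional.proper ℂ E
  obtain ⟨M, hM⟩ := (isCompact_closedBall (0 : E) R).exists_bound_of_continuousOn
    (fun z hz => (hf z hz).continuousAt.continuousWithinAt)
  have hM0 : 0 ≤ M := (norm_nonneg _).trans (hM 0 (by simp [hR.le]))
  obtain ⟨p, hp⟩ := hf 0 (by simp [hR.le])
  obtain ⟨N, hN⟩ : ∃ N : ℕ, M * (1 / 2) ^ N / (1 - 1 / 2) < ε := by
    have h1 : Tendsto (fun N : ℕ => M * (1 / 2 : ℝ) ^ N / (1 - 1 / 2)) atTop (𝓝 (M * 0 / (1 - 1 / 2))) :=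
      ((tendsto_pow_atTop_nhds_zero_of_lt_one (by norm_num) (by norm_num)).const_mul M).div_const _
    exact (h1.eventually_lt_const (by simpa using hε)).exists
  refine ⟨fun z => ∑ k ∈ Finset.range N, p k (fun _ => z), fun z => ?_, fun z hz => ?_⟩
  · refine Finset.analyticAt_fun_sum _ fun k _ => ?_
    exact AnalyticAt.fun_comp (g := fun m : Fin k → E => p k m) (f := fun z => fun _ => z)
      (p k).analyticAt (analyticAt_pi_iff.2 fun _ => analyticAt_id)
  · let u : ℂ →L[ℂ] E := ContinuousLinearMap.toSpanSingleton ℂ z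
    have hz' : ‖z‖ ≤ R / 2 := by simpa using hz
    have hu : ∀ t ∈ closedBall (0 : ℂ) 2, u t ∈ closedBall (0 : E) R := by
      intro t ht
      simp only [mem_closedBall, dist_zero_right, u, ContinuousLinearMap.toSpanSingleton_apply] at ht ⊢
      rw [norm_smul]
      nlinarith [norm_nonneg z, norm_nonneg t]
    have hd : DifferentiableOn ℂ (f ∘ u) (closedBall (0 : ℂ) ((2 : NNReal) : ℝ)) := by
      intro t ht
      exact ((hf _ (hu t ht)).comp (u.analyticAt t)).differentiableAt.differentiableWithinAt
    have h1 := hd.hasFPowerSeriesOnBall (by norm_num)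
    have h2 : HasFPowerSeriesAt (f ∘ u) (p.compContinuousLinearMap u) 0 :=
      HasFPowerSeriesAt.compContinuousLinearMap (by simpa using hp)
    have h3 := h1.hasFPowerSeriesAt.eq_formalMultilinearSeries h2
    have hterm : ∀ k, cauchyPowerSeries (f ∘ u) 0 ((2 : NNReal) : ℝ) k (fun _ => 1) = p k (fun _ => z) := by
      intro k
      rw [h3, FormalMultilinearSeries.compContinuousLinearMap_apply]
      congr 1; funext _; simp [u]
    have h4 : HasSum (fun k => p k (fun _ => z)) (f z) := by
      have := h1.hasSum (y := 1) (by simp)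
      simp only [hterm] at this
      simpa [u] using this
    have hbd : ∀ k, ‖p k (fun _ => z)‖ ≤ M * (1 / 2) ^ k := by
      intro k
      rw [← hterm]
      refine (ContinuousMultilinearMap.le_opNorm _ _).trans ?_
      simp only [norm_one, Finset.prod_const_one, mul_one]
      refine (norm_cauchyPowerSeries_le _ _ _ _).trans ?_
      have h5 : ∫ θ in 0..2 * Real.pi, ‖(f ∘ u) (circleMap 0 ((2 : NNReal) : ℝ) θ)‖ ≤ 2 * Real.pi * M := by
        have := intervalIntegral.norm_integral_le_of_norm_le_const (a := 0) (b := 2 * Real.pi) (C := M)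
          (f := fun θ => ‖(f ∘ u) (circleMap 0 ((2 : NNReal) : ℝ) θ)‖) (fun θ _ => by
            rw [norm_norm]
            exact hM _ (hu _ (by simp)))
        rw [sub_zero, abs_of_pos Real.two_pi_pos] at this
        linarith [le_abs_self (∫ θ in 0..2 * Real.pi, ‖(f ∘ u) (circleMap 0 ((2 : NNReal) : ℝ) θ)‖), Real.norm_eq_abs (∫ θ in 0..2 * Real.pi, ‖(f ∘ u) (circleMap 0 ((2 : NNReal) : ℝ) θ)‖)]
      have h6 : (2 * Real.pi)⁻¹ * ∫ θ in 0..2 * Real.pi, ‖(f ∘ u) (circleMap 0 ((2 : NNReal) : ℝ) θ)‖ ≤ M := by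
        rw [inv_mul_le_iff₀ Real.two_pi_pos]; exact h5
      refine mul_le_mul h6 ?_ (by positivity) hM0
      norm_num
    have := dist_le_of_le_geometric_of_tendsto (1 / 2 : ℝ) M (by norm_num)
      (f := fun N => ∑ k ∈ Finset.range N, p k (fun _ => z)) (fun k => by
        rw [dist_eq_norm, Finset.sum_range_succ, sub_add_cancel_left, norm_neg]; exact hbd k)
      h4.tendsto_sum_nat N
    rw [dist_comm, dist_eq_norm] at this
    exact this.trans hN.le
end

section
variable {n : ℕ}

/-- The cube of all `z` whose coordinates have real and imaginary parts in `[-R, R]`. -/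
def cube (n : ℕ) (R : ℝ) : Set (Fin n → ℂ) := box (fun _ => -R) (fun _ => R) (fun _ => -R) (fun _ => R)

lemma ball_subset_cube (R : ℝ) : closedBall (0 : Fin n → ℂ) R ⊆ cube n R := by
  intro z hz i
  have h1 : ‖z i‖ ≤ R := (norm_le_pi_norm z i).trans (by simpa using hz)
  have h2 := abs_le.1 ((Complex.abs_re_le_norm (z i)).trans h1)
  have h3 := abs_le.1 ((Complex.abs_im_le_norm (z i)).trans h1)
  exact ⟨h2, h3⟩

lemma cube_mono {R R' : ℝ} (h : R ≤ R') : cube n R ⊆ cube n R' := fun _ hz i =>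
  ⟨⟨(neg_le_neg h).trans (hz i).1.1, (hz i).1.2.trans h⟩, (neg_le_neg h).trans (hz i).2.1, (hz i).2.2.trans h⟩

variable {ι κ : Type} [Fintype ι] [Fintype κ]

/-- `v` is a holomorphic relation of `s` near every point of the cube. -/
def RelOn (s : (Fin n → ℂ) → Matrix ι κ ℂ) (R : ℝ) (v : (Fin n → ℂ) → κ → ℂ) : Prop :=
  ∀ x ∈ cube n R, AnalyticAt ℂ v x ∧ ∀ᶠ z in 𝓝 x, s z *ᵥ v z = 0

/-- A relation on a cube is approximated on a smaller ball by relations on a larger cube: its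
coefficients with respect to generators on the larger cube are replaced by Taylor polynomials. -/
lemma RelOn.approx {s : (Fin n → ℂ) → Matrix ι κ ℂ} (hs : ∀ z, AnM s z) {R R' : ℝ} (hR : 0 < R)
    (hRR' : R ≤ R') {v : (Fin n → ℂ) → κ → ℂ} (hv : RelOn s R v) {ε : ℝ} (hε : 0 < ε) :
    ∃ w, RelOn s R' w ∧ ∀ z ∈ closedBall (0 : Fin n → ℂ) (R / 2), ‖v z - w z‖ ≤ ε := by
  obtain ⟨lam, _, t, ht⟩ := (cartan_box (n := n) _ _ _ _).1 ι κ s (fun x (_ : x ∈ cube n R') => hs x)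
  obtain ⟨c, hc⟩ := (cartan_box (n := n) _ _ _ _).2 κ lam t v
    (fun x (hx : x ∈ cube n R) => (ht x (cube_mono hRR' hx)).1) (fun x hx => (hv x hx).1)
    (fun x hx => (ht x (cube_mono hRR' hx)).2.2 v (hv x hx).1 (hv x hx).2)
  have hsub : closedBall (0 : Fin n → ℂ) (R / 2) ⊆ cube n R :=
    (closedBall_subset_closedBall (by linarith)).trans (ball_subset_cube R)
  obtain ⟨M, hM0, hM⟩ := AnM.bounded (isCompact_closedBall (0 : Fin n → ℂ) (R / 2))
    (fun x hx => (ht x (cube_mono hRR' (hsub hx))).1)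
  let N : ℝ := Fintype.card lam
  have hN : 0 ≤ N := Nat.cast_nonneg _
  obtain ⟨g, hg, hcg⟩ := taylor_approx hR (fun z hz => (hc z (ball_subset_cube R hz)).1)
    (ε := ε / (N * M + 1)) (by positivity)
  refine ⟨fun z => t z *ᵥ g z, fun x hx => ⟨(ht x hx).1.mulVec (hg x), ?_⟩, fun z hz => ?_⟩
  · filter_upwards [(ht x hx).2.1] with z h1
    rw [mulVec_mulVec, h1, zero_mulVec]
  · rw [(hc z (hsub hz)).2.self_of_nhds, ← mulVec_sub, pi_norm_le_iff_of_nonneg hε.le]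
    intro i
    simp only [Matrix.mulVec, dotProduct]
    calc _ ≤ ∑ k : lam, M * (ε / (N * M + 1)) := by
          refine norm_sum_le_of_le _ fun k _ => ?_
          rw [norm_mul]
          exact mul_le_mul ((hM z hz).self_of_nhds i k) ((norm_le_pi_norm _ k).trans (hcg z hz))
            (norm_nonneg _) hM0
      _ = N * M / (N * M + 1) * ε := by simp [N]; ring
      _ ≤ 1 * ε := by
          gcongr
          rw [div_le_one (by positivity)]; linarith
      _ = ε := one_mul ε

/-- Relations on a cube are approximated by entire relations. -/
lemma RelOn.entire {s : (Fin n → ℂ) → Matrix ι κ ℂ} (hs : ∀ z, AnM s z) {R : ℝ} (hR : 0 < R)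
    {v : (Fin n → ℂ) → κ → ℂ} (hv : RelOn s R v) {ε : ℝ} (hε : 0 < ε) :
    ∃ w, (∀ z, AnalyticAt ℂ w z) ∧ (∀ z, s z *ᵥ w z = 0) ∧
      ∀ z ∈ closedBall (0 : Fin n → ℂ) (R / 2), ‖v z - w z‖ ≤ ε := by
  let r : ℕ → ℝ := fun k => R * 2 ^ k
  have hr0 : ∀ k, 0 < r k := fun k => by positivity
  have hrm : Monotone r := fun i j hij => by
    simp only [r]; gcongr; norm_num
  have hstep : ∀ k (w : {w // RelOn s (r k) w}), ∃ w' : {w // RelOn s (r (k + 1)) w},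
      ∀ z ∈ closedBall (0 : Fin n → ℂ) (r k / 2), ‖w.1 z - w'.1 z‖ ≤ ε / 2 / 2 ^ k := by
    intro k w
    obtain ⟨w', h1, h2⟩ := w.2.approx hs (hr0 k) (hrm (Nat.le_succ k)) (ε := ε / 2 / 2 ^ k) (by positivity)
    exact ⟨⟨w', h1⟩, h2⟩
  choose next hnext using hstep
  let W : ∀ k, {w // RelOn s (r k) w} := fun k =>
    Nat.rec (motive := fun k => {w // RelOn s (r k) w}) ⟨v, by simpa [r] using hv⟩ next k
  have hW : ∀ k, ∀ z ∈ closedBall (0 : Fin n → ℂ) (r k / 2), ‖(W k).1 z - (W (k + 1)).1 z‖ ≤ ε / 2 / 2 ^ k :=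
    fun k => hnext k (W k)
  have hWm : ∀ m k, ∀ z ∈ closedBall (0 : Fin n → ℂ) (r m / 2),
      dist ((W (m + k)).1 z) ((W (m + (k + 1))).1 z) ≤ ε / 2 ^ m / 2 / 2 ^ k := by
    intro m k z hz
    rw [dist_eq_norm]
    refine (hW (m + k) z (closedBall_subset_closedBall ?_ hz)).trans (le_of_eq ?_)
    · have := hrm (Nat.le_add_right m k)
      linarith
    · rw [pow_add]; field_simp
  have hex : ∀ z : Fin n → ℂ, ∃ m, z ∈ ball (0 : Fin n → ℂ) (r m / 2) := by
    intro z
    have h1 : Tendsto r atTop atTop :=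
      (tendsto_pow_atTop_atTop_of_one_lt (by norm_num : (1 : ℝ) < 2)).const_mul_atTop hR
    obtain ⟨m, hm⟩ := (h1.eventually_gt_atTop (2 * ‖z‖)).exists
    refine ⟨m, ?_⟩
    rw [mem_ball_zero_iff]; linarith
  have hlim : ∀ z, ∃ y, Tendsto (fun k => (W k).1 z) atTop (𝓝 y) := by
    intro z
    obtain ⟨m, hm⟩ := hex z
    obtain ⟨y, hy⟩ := cauchySeq_tendsto_of_complete
      (cauchySeq_of_le_geometric_two fun k => hWm m k z (ball_subset_closedBall hm))
    refine ⟨y, ?_⟩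
    rw [← tendsto_add_atTop_iff_nat m]
    exact hy.congr fun k => by rw [Nat.add_comm m k]
  choose w hw using hlim
  have hdist : ∀ m k, ∀ z ∈ closedBall (0 : Fin n → ℂ) (r m / 2),
      dist ((W (m + k)).1 z) (w z) ≤ ε / 2 ^ m / 2 ^ k := fun m k z hz =>
    dist_le_of_le_geometric_two_of_tendsto (fun k => hWm m k z hz) 
      ((hw z).comp (tendsto_atTop_mono (fun k => Nat.le_add_left k m) tendsto_id)) k
  refine ⟨w, fun z => ?_, fun z => ?_, fun z hz => ?_⟩
  · obtain ⟨m, hm⟩ := hex z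
    rw [analyticAt_pi_iff]
    intro i
    refine analytic_of_tendstoLocallyUniformlyOn (U := ball 0 (r m / 2)) isOpen_ball
      (F := fun k z => (W (m + k)).1 z i) (fun k x hx => ?_) (TendstoUniformlyOn.tendstoLocallyUniformlyOn ?_) z hm
    · refine analyticAt_pi_iff.1 ((W (m + k)).2 x ?_).1 i
      refine ball_subset_cube _ (closedBall_subset_closedBall ?_ (ball_subset_closedBall hx))
      have := hrm (Nat.le_add_right m k)
      linarith [hr0 m]
    · rw [Metric.tendstoUniformlyOn_iff]
      intro δ hδ
      have h1 : Tendsto (fun k : ℕ => ε / 2 ^ m / 2 ^ k) atTop (𝓝 0) := by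
        have h2 : Tendsto (fun k : ℕ => ε / 2 ^ m * (1 / 2 : ℝ) ^ k) atTop (𝓝 (ε / 2 ^ m * 0)) :=
          (tendsto_pow_atTop_nhds_zero_of_lt_one (by norm_num) (by norm_num)).const_mul _
        rw [mul_zero] at h2
        refine h2.congr fun k => ?_
        rw [one_div, inv_pow, ← div_eq_mul_inv]
      filter_upwards [h1.eventually_lt_const hδ] with k hk x hx
      rw [dist_comm]
      exact ((dist_le_pi_dist _ _ i).trans (hdist m k x (ball_subset_closedBall hx))).trans_lt hk
  · obtain ⟨m, hm⟩ := hex z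
    have hcont : Continuous fun y : κ → ℂ => s z *ᵥ y := by fun_prop
    refine tendsto_nhds_unique_of_eventuallyEq ((hcont.tendsto _).comp (hw z)) (tendsto_const_nhds (x := 0)) ?_
    filter_upwards [eventually_ge_atTop m] with k hk
    refine ((W k).2 z ?_).2.self_of_nhds
    refine ball_subset_cube _ (closedBall_subset_closedBall ?_ (ball_subset_closedBall hm))
    have := hrm hk
    linarith [hr0 m]
  · have := hdist 0 0 z (by simpa [r] using hz)
    rw [dist_eq_norm] at this
    simpa [W] using this
end

/-! ### Closures of ideals -/

section
variable {n : ℕ}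

/-- By compactness, one exponent `k` and one finite subfamily `t ⊆ 𝓕` serve in the local
Nullstellensatz at all points of `K`. -/
lemma ruckert_compact {K : Set (Fin n → ℂ)} (hK : IsCompact K) {𝓕 : Set ((Fin n → ℂ) → ℂ)}
    (han : ∀ F ∈ 𝓕, ∀ z, AnalyticAt ℂ F z) {f : (Fin n → ℂ) → ℂ} (hf : ∀ z, AnalyticAt ℂ f z)
    (hz : ∀ z, (∀ F ∈ 𝓕, F z = 0) → f z = 0) :
    ∃ (t : Finset ((Fin n → ℂ) → ℂ)) (k : ℕ), (∀ F ∈ t, F ∈ 𝓕) ∧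
      ∀ x ∈ K, ∃ g : ((Fin n → ℂ) → ℂ) → (Fin n → ℂ) → ℂ, (∀ F ∈ t, AnalyticAt ℂ (g F) x) ∧
        ∀ᶠ z in 𝓝 x, f z ^ k = ∑ F ∈ t, g F z * F z := by
  classical
  -- the statement passes to larger exponents and larger families
  have mono : ∀ {x : Fin n → ℂ} {t t' : Finset ((Fin n → ℂ) → ℂ)} {k : ℕ} (l : ℕ), t ⊆ t' →
      (∃ g : ((Fin n → ℂ) → ℂ) → (Fin n → ℂ) → ℂ, (∀ F ∈ t, AnalyticAt ℂ (g F) x) ∧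
        ∀ᶠ z in 𝓝 x, f z ^ k = ∑ F ∈ t, g F z * F z) →
      ∃ g : ((Fin n → ℂ) → ℂ) → (Fin n → ℂ) → ℂ, (∀ F ∈ t', AnalyticAt ℂ (g F) x) ∧
        ∀ᶠ z in 𝓝 x, f z ^ (k + l) = ∑ F ∈ t', g F z * F z := by
    rintro x t t' k l htt ⟨g, hg, h⟩
    refine ⟨fun F z => if F ∈ t then g F z * f z ^ l else 0, fun F _ => ?_, ?_⟩
    · by_cases hF : F ∈ t
      · simpa only [hF, if_true] using (hg F hF).fun_mul ((hf x).fun_pow l)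
      · simpa only [hF, if_false] using analyticAt_const
    · filter_upwards [h] with z hz
      rw [pow_add, hz, Finset.sum_mul, ← Finset.sum_subset htt]
      · refine Finset.sum_congr rfl fun F hF => ?_
        simp only [hF, if_true]; ring
      · intro F _ hF
        simp [hF]
  refine hK.induction_on (p := fun K => ∃ (t : Finset ((Fin n → ℂ) → ℂ)) (k : ℕ), (∀ F ∈ t, F ∈ 𝓕) ∧
      ∀ x ∈ K, ∃ g : ((Fin n → ℂ) → ℂ) → (Fin n → ℂ) → ℂ, (∀ F ∈ t, AnalyticAt ℂ (g F) x) ∧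
        ∀ᶠ z in 𝓝 x, f z ^ k = ∑ F ∈ t, g F z * F z) ?_ ?_ ?_ ?_
  · exact ⟨∅, 0, by simp, by simp⟩
  · rintro s s' hs ⟨t, k, h1, h2⟩
    exact ⟨t, k, h1, fun x hx => h2 x (hs hx)⟩
  · rintro s s' ⟨t, k, h1, h2⟩ ⟨t', k', h1', h2'⟩
    refine ⟨t ∪ t', k + k', fun F hF => (Finset.mem_union.1 hF).elim (h1 F) (h1' F), ?_⟩
    rintro x (hx | hx)
    · exact mono k' Finset.subset_union_left (h2 x hx)
    · rw [add_comm k k']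
      exact mono k Finset.subset_union_right (h2' x hx)
  · intro x _
    obtain ⟨k, hk⟩ := ruckert isOpen_univ (mem_univ x) (fun F hF z _ => han F hF z)
      (fun z _ => hf z) (fun z _ => hz z)
    obtain ⟨t, g, ht, hg, h⟩ := hk.exists_sum
    refine ⟨{y | (∀ F ∈ t, AnalyticAt ℂ (g F) y) ∧ ∀ᶠ z in 𝓝 y, f z ^ k = ∑ F ∈ t, g F z * F z},
      mem_nhdsWithin_of_mem_nhds ?_, t, k, ht, fun y hy => ⟨g, hy.1, hy.2⟩⟩
    exact Filter.Eventually.and ((Finset.eventually_all t).2 fun F _ => (hg F).eventually_analyticAt)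
      h.eventually_nhds

/-- Multiplying `f` by a suitable entire function `h` close to `1` on a given ball carries a power
of `f` into the ideal generated by `𝓕`. -/
lemma exists_multiplier {𝓕 : Set ((Fin n → ℂ) → ℂ)}
    (han : ∀ F ∈ 𝓕, ∀ z, AnalyticAt ℂ F z) {f : (Fin n → ℂ) → ℂ} (hf : ∀ z, AnalyticAt ℂ f z)
    (hz : ∀ z, (∀ F ∈ 𝓕, F z = 0) → f z = 0) {R : ℝ} (hR : 0 < R) {ε : ℝ} (hε : 0 < ε) :
    ∃ (h : (Fin n → ℂ) → ℂ) (k : ℕ) (t : Finset ((Fin n → ℂ) → ℂ)) (w : t → (Fin n → ℂ) → ℂ),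
      (∀ z, AnalyticAt ℂ h z) ∧ (∀ F ∈ t, F ∈ 𝓕) ∧ (∀ F z, AnalyticAt ℂ (w F) z) ∧
      (∀ z, h z * f z ^ k = ∑ F : t, w F z * F.1 z) ∧
      ∀ z ∈ closedBall (0 : Fin n → ℂ) (R / 2), ‖1 - h z‖ ≤ ε := by
  obtain ⟨t, k, ht, hloc⟩ := ruckert_compact (isCompact_box (n := n) (fun _ => -R) (fun _ => R)
    (fun _ => -R) (fun _ => R)) han hf hz
  -- relations `c` of `s` are the identities `c none * f ^ k = ∑ F, c F * F`
  let s : (Fin n → ℂ) → Matrix Unit (Option (Fin t.card)) ℂ := fun z _ o =>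
    o.elim (f z ^ k) fun i => - (t.equivFin.symm i).1 z
  have hs : ∀ z, AnM s z := by
    rintro z _ (_ | i)
    · exact (hf z).fun_pow k
    · exact (han _ (ht _ (t.equivFin.symm i).2) z).fun_neg
  have hsv : ∀ z (c : Option (Fin t.card) → ℂ), s z *ᵥ c = 0 ↔
      c none * f z ^ k = ∑ F : t, c (some (t.equivFin F)) * F.1 z := by
    intro z c
    have h1 : ∑ F : t, c (some (t.equivFin F)) * F.1 z =
        ∑ i, c (some i) * (t.equivFin.symm i).1 z :=
      Fintype.sum_equiv t.equivFin _ _ fun F => by simp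
    rw [h1, funext_iff]
    simp only [Matrix.mulVec, dotProduct, Fintype.sum_option, s, Option.elim, Pi.zero_apply,
      forall_const, neg_mul, Finset.sum_neg_distrib, ← sub_eq_add_neg, sub_eq_zero]
    simp only [mul_comm]
  obtain ⟨lam, _, G, hG⟩ := (cartan_box (n := n) _ _ _ _).1 Unit _ s
    (fun x (_ : x ∈ cube n R) => hs x)
  obtain ⟨c, hc⟩ := (cartan_box (n := n) _ _ _ _).2 Unit lam (fun z => Matrix.of fun _ j => G z none j)
    (fun _ _ => 1) (fun x (hx : x ∈ cube n R) => fun _ j => (hG x hx).1 none j)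
    (fun x _ => analyticAt_const) (fun x hx => by
      obtain ⟨g, hg, hfg⟩ := hloc x hx
      obtain ⟨b, hb, hb'⟩ := (hG x hx).2.2
        (fun z o => o.elim 1 fun i => g (t.equivFin.symm i).1 z) (by
          rw [analyticAt_pi_iff]
          rintro (_ | i)
          · exact analyticAt_const
          · exact hg _ (t.equivFin.symm i).2) (by
          filter_upwards [hfg] with z hz
          refine (hsv z _).2 ?_
          simp only [Option.elim, one_mul, Equiv.symm_apply_apply]
          rw [hz, ← Finset.sum_coe_sort t (fun F => g F z * F z)])
      refine ⟨b, hb, ?_⟩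
      filter_upwards [hb'] with z hz
      funext i
      exact congrFun hz none)
  have hv : RelOn s R (fun z => G z *ᵥ c z) := by
    intro x hx
    refine ⟨(hG x hx).1.mulVec (hc x hx).1, ?_⟩
    filter_upwards [(hG x hx).2.1] with z h1
    rw [mulVec_mulVec, h1, zero_mulVec]
  obtain ⟨w, hw, hsw, happ⟩ := hv.entire hs hR hε
  refine ⟨fun z => w z none, k, t, fun F z => w z (some (t.equivFin F)),
    fun z => analyticAt_pi_iff.1 (hw z) none, ht, fun F z => analyticAt_pi_iff.1 (hw z) _,
    fun z => (hsv z _).1 (hsw z), fun z hz => ?_⟩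
  have hzc : z ∈ cube n R := ball_subset_cube R (closedBall_subset_closedBall (by linarith) hz)
  have h1 : (1 : ℂ) = (G z *ᵥ c z) none := congrFun (hc z hzc).2.self_of_nhds ()
  rw [h1]
  exact (norm_le_pi_norm (G z *ᵥ c z - w z) none).trans (happ z hz)

lemma OCn.mem_closure_of {S : Set (OCn n)} {f : OCn n}
    (h : ∀ K : Set (Fin n → ℂ), IsCompact K → ∀ ε > 0, ∃ g ∈ S,
      ∀ z ∈ K, ‖(f : (Fin n → ℂ) → ℂ) z - (g : (Fin n → ℂ) → ℂ) z‖ < ε) : f ∈ closure S := by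
  rw [closure_induced, mem_closure_iff_nhds_basis (UniformOnFun.hasBasis_nhds_of_basis _ _ _ _ ⟨∅, isCompact_empty⟩
    (fun K hK K' hK' => ⟨K ∪ K', hK.union hK', subset_union_left, subset_union_right⟩)
    Metric.uniformity_basis_dist)]
  rintro ⟨K, ε⟩ ⟨hK, hε⟩
  obtain ⟨g, hg, hgf⟩ := h K hK ε hε
  refine ⟨_, mem_image_of_mem _ hg, ?_⟩
  intro z hz
  have := hgf z hz
  rw [← dist_eq_norm, dist_comm] at this
  exact this

lemma OCn.continuous_eval (z : Fin n → ℂ) :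
    Continuous fun f : OCn n => (f : (Fin n → ℂ) → ℂ) z := by
  have h1 : Continuous fun f : OCn n =>
      UniformOnFun.ofFun {K : Set (Fin n → ℂ) | IsCompact K} (f : (Fin n → ℂ) → ℂ) :=
    continuous_induced_dom
  exact (UniformOnFun.uniformContinuous_eval_of_mem (β := ℂ) {K : Set (Fin n → ℂ) | IsCompact K}
    (mem_singleton z) isCompact_singleton).continuous.comp h1

lemma IC_isClosed (S : Set (Fin n → ℂ)) : IsClosed (IC n S) := by
  have : IC n S = ⋂ z ∈ S, {F : OCn n | (F : (Fin n → ℂ) → ℂ) z = 0} := by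
    ext F; simp [IC]
  rw [this]
  exact isClosed_biInter fun z _ => isClosed_eq (OCn.continuous_eval z) continuous_const

/-- Every entire function vanishing on the zero set of `a` is a limit of elements of the radical. -/
lemma IC_subset_closure (a : Ideal (OCn n)) : IC n (ZC n a) ⊆ closure (a.radical : Set (OCn n)) := by
  intro f hf
  refine OCn.mem_closure_of fun K hK ε hε => ?_
  obtain ⟨R, hR, hKR⟩ : ∃ R : ℝ, 0 < R ∧ K ⊆ closedBall 0 (R / 2) := by
    obtain ⟨r, hr⟩ := hK.isBounded.subset_closedBall 0
    refine ⟨2 * max r 1, by positivity, hr.trans (closedBall_subset_closedBall ?_)⟩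
    linarith [le_max_left r 1]
  obtain ⟨M, hM⟩ := hK.exists_bound_of_continuousOn (f := (f : (Fin n → ℂ) → ℂ))
    (fun z _ => (f.2 z).continuousAt.continuousWithinAt)
  obtain ⟨h, k, t, w, hh, ht, hw, heq, hh1⟩ := exists_multiplier
    (𝓕 := (fun F : OCn n => (F : (Fin n → ℂ) → ℂ)) '' a) (f := f)
    (by rintro _ ⟨F, _, rfl⟩; exact F.2) f.2
    (fun z hz => hf z fun F hF => hz _ ⟨F, hF, rfl⟩) hR (ε := ε / (|M| + 1)) (by positivity)
  let H : OCn n := ⟨h, hh⟩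
  choose! Ft hFa hFt using ht
  have hmem : H * f ^ k ∈ a := by
    have h1 : H * f ^ k = ∑ F : t, (⟨w F, hw F⟩ : OCn n) * Ft F := by
      apply Subtype.ext
      funext z
      have h2 : ((∑ F : t, (⟨w F, hw F⟩ : OCn n) * Ft F : OCn n) : (Fin n → ℂ) → ℂ) z =
          ∑ F : t, w F z * F.1 z := by
        rw [AddSubmonoidClass.coe_finsetSum, Finset.sum_apply]
        refine Finset.sum_congr rfl fun F _ => ?_
        exact congrArg (w F z * ·) (congrFun (hFt F.1 F.2) z)
      rw [h2, ← heq z]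
      rfl
    rw [h1]
    exact a.sum_mem fun F _ => a.mul_mem_left _ (hFa F.1 F.2)
  refine ⟨H * f, ⟨k + 1, ?_⟩, fun z hz => ?_⟩
  · have : (H * f) ^ (k + 1) = (H ^ k * f) * (H * f ^ k) := by ring
    rw [this]
    exact a.mul_mem_left _ hmem
  · have h1 : (f : (Fin n → ℂ) → ℂ) z - ((H * f : OCn n) : (Fin n → ℂ) → ℂ) z =
        (1 - h z) * (f : (Fin n → ℂ) → ℂ) z := by
      change _ - h z * _ = _
      ring
    rw [h1, norm_mul]
    calc _ ≤ ε / (|M| + 1) * |M| :=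
          mul_le_mul (hh1 z (hKR hz)) ((hM z hz).trans (le_abs_self M)) (norm_nonneg _) (by positivity)
      _ < ε := by
          rw [div_mul_eq_mul_div, div_lt_iff₀ (by positivity)]
          nlinarith [abs_nonneg M]
end

theorem stmt_5 (n : ℕ) (a : Ideal (OCn n)) :
    IC n (ZC n a) = closure (a.radical : Set (OCn n)) ∧
    (IC n (ZC n a) = (a : Set (OCn n)) ↔
      (a.radical = a ∧ IsClosed (a : Set (OCn n)))) := by
  have h1 : IC n (ZC n a) = closure (a.radical : Set (OCn n)) := by
    refine (IC_subset_closure a).antisymm (closure_minimal ?_ (IC_isClosed _))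
    rintro F ⟨k, hk⟩ z hz
    have h2 : (F : (Fin n → ℂ) → ℂ) z ^ k = 0 := hz _ hk
    exact eq_zero_of_pow_eq_zero h2
  refine ⟨h1, fun h => ?_, fun h => ?_⟩
  · refine ⟨le_antisymm (fun F hF => ?_) a.le_radical, h ▸ IC_isClosed _⟩
    rw [← SetLike.mem_coe, ← h, h1]
    exact subset_closure hF
  · rw [h1, h.1, h.2.closure_eq]
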